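/- arXiv:1706.00234 — 2 statements merged into one kernel-verified Lean document; each statement's English description precedes it below -/
import Mathlib

section
/- Let f₀, f₁, …, f_p : ℝⁿ → ℝ be nonconstant polynomial functions, let S := {x ∈ ℝⁿ : f₁(x) ≤ 0, …, f_p(x) ≤ 0} be nonempty, assume f₀ is bounded from below on S, set f* := inf_{x ∈ S} f₀(x), and assume f₀ does not attain f* on S. Then there exist a nonempty set J ⊆ {1, …, n}, a real ε > 0, and smooth semialgebraic curves φ : (0, ε) → ℝⁿ, λ_i : (0, ε) → ℝ for i ∈ I₁ ∪ {0} where I₁ := {i ∈ {1, …, p} : f_i restricted to ℝ^J is not constant}, ν_k : (0, ε) → ℝ for k ∉ J, and μ : (0, ε) → ℝ, such that: (c1) ‖φ(t)‖ → +∞ as t → 0⁺; (c2) f₀(φ(t)) → f* as t → 0⁺; (c3) f_i(φ(t)) ≤ 0 for all t and all i ∈ I₁; (c4) J = {j ∈ {1, …, n} : φ_j is not identically zero}; (c5) φ_k(t) = 0 for all t and all k ∉ J; (c6) Σ_{i ∈ I₁ ∪ {0}} λ_i(t) ∇f_i(φ(t)) + Σ_{k ∉ J} ν_k(t) e^k +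 μ(t) φ(t) = 0 for all t; (c7) λ_i(t) f_i(φ(t)) = 0 for all t and all i ∈ I₁; (c8) λ_i(t) ≥ 0 for all t and all i ∈ I₁ ∪ {0}; (c9) ‖(λ(t), ν(t), μ(t))‖ = 1 for all t, where e^k denotes the k-th standard basis vector. -/
open MvPolynomial Set Filter
open scoped Classical

noncomputable section

/-- The exponent vector of a monomial, viewed as a point of `ℝⁿ`. -/
def expVec {n : ℕ} (κ : Fin n →₀ ℕ) : Fin n → ℝ := fun j => (κ j : ℝ)

/-- The Newton polyhedron at infinity `Γ(f)`: the convex hull of the support of `f`. -/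
def NewtonPolyhedron {n : ℕ} (f : MvPolynomial (Fin n) ℝ) : Set (Fin n → ℝ) :=
  convexHull ℝ (expVec '' (f.support : Set (Fin n →₀ ℕ)))

/-- `d(q, Γ(f)) := min {⟨q, κ⟩ : κ ∈ Γ(f)}`. -/
def NewtonD {n : ℕ} (f : MvPolynomial (Fin n) ℝ) (q : Fin n → ℝ) : ℝ :=
  sInf ((fun κ : Fin n → ℝ => ∑ j, q j * κ j) '' NewtonPolyhedron f)

/-- `Δ(q, Γ(f)) := {κ ∈ Γ(f) : ⟨q, κ⟩ = d(q, Γ(f))}`. -/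
def NewtonFace {n : ℕ} (f : MvPolynomial (Fin n) ℝ) (q : Fin n → ℝ) : Set (Fin n → ℝ) :=
  {κ ∈ NewtonPolyhedron f | ∑ j, q j * κ j = NewtonD f q}

/-- For a set `Δ ⊆ ℝⁿ`, the polynomial `f_Δ := ∑_{κ ∈ Δ} a_κ x^κ`. -/
def facePoly {n : ℕ} (f : MvPolynomial (Fin n) ℝ) (Δ : Set (Fin n → ℝ)) :
    MvPolynomial (Fin n) ℝ :=
  ∑ κ ∈ f.support.filter (fun κ => expVec κ ∈ Δ), monomial κ (f.coeff κ)

/-- `ℝ^J := {x ∈ ℝⁿ : x_j = 0 for all j ∉ J}`. -/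
def RJ {n : ℕ} (J : Set (Fin n)) : Set (Fin n → ℝ) := {x | ∀ j ∉ J, x j = 0}

/-- The restriction of `f` to `ℝ^J` is not constant. -/
def NotConstOn {n : ℕ} (f : MvPolynomial (Fin n) ℝ) (J : Set (Fin n)) : Prop :=
  ∃ x ∈ RJ J, ∃ y ∈ RJ J, eval x f ≠ eval y f

/-- The Mangasarian–Fromovitz property at infinity for `inf {f 0 x : f i x ≤ 0, i = 1,…,p}`. -/
def MFinfty {n p : ℕ} (f : Fin (p + 1) → MvPolynomial (Fin n) ℝ) : Prop :=
  ∀ J : Set (Fin n), J.Nonempty → ∀ q x : Fin n → ℝ,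
    NewtonD (f 0) q < 0 →
    (∀ i, NotConstOn (f i) J → NewtonFace (f i) q ⊆ RJ J) →
    (∀ j, x j = 0 ↔ j ∉ J) →
    (∀ i, i ≠ 0 → eval x (facePoly (f i) (NewtonFace (f i) q)) ≤ 0) →
    ∃ v : Fin n → ℝ, v ≠ 0 ∧ ∀ i, NotConstOn (f i) J →
      eval x (facePoly (f i) (NewtonFace (f i) q)) = 0 →
      ∑ j, eval x (pderiv j (facePoly (f i) (NewtonFace (f i) q))) * v j < 0

/-- Kouchnirenko non-degeneracy at infinity. -/
def NondegenerateAtInfinity {n : ℕ} (f : MvPolynomial (Fin n) ℝ) : Prop :=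
  ∀ q : Fin n → ℝ, NewtonD f q < 0 →
    ∀ x : Fin n → ℝ, (∀ j, x j ≠ 0) →
      ¬ ∀ j, eval x (pderiv j (facePoly f (NewtonFace f q))) = 0

/-- A convenient polynomial. -/
def Convenient {n : ℕ} (f : MvPolynomial (Fin n) ℝ) : Prop :=
  ∀ j : Fin n, ∃ c : ℝ, 0 < c ∧ c • (Pi.single j 1 : Fin n → ℝ) ∈ NewtonPolyhedron f

/-- A bad face of `Γ(f)`. -/
def BadFace {n : ℕ} (f : MvPolynomial (Fin n) ℝ) (Δ : Set (Fin n → ℝ)) : Prop :=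
  (∃ q : Fin n → ℝ, Δ = NewtonFace f q) ∧
  (0 : Fin n → ℝ) ∈ affineSpan ℝ Δ ∧
  ∃ q : Fin n → ℝ, (∃ i j, q i * q j < 0) ∧
    {κ : Fin n → ℝ | ∑ j, q j * κ j = 0} ∩ NewtonPolyhedron f = Δ

/-- The set of critical values of `f`. -/
def K0 {n : ℕ} (f : MvPolynomial (Fin n) ℝ) : Set ℝ :=
  {c | ∃ x : Fin n → ℝ, (∀ j, eval x (pderiv j f) = 0) ∧ eval x f = c}

/-- `Σ∞(f)`: critical values of `f_Δ` over all bad faces `Δ`. -/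
def SigmaInfty {n : ℕ} (f : MvPolynomial (Fin n) ℝ) : Set ℝ :=
  {c | ∃ Δ : Set (Fin n → ℝ), BadFace f Δ ∧ ∃ x : Fin n → ℝ,
    (∀ j, eval x (pderiv j (facePoly f Δ)) = 0) ∧ eval x (facePoly f Δ) = c}

/-- `Σ∞'(f)`: critical values of `f_Δ` on `(ℝ ∖ {0})ⁿ` over all bad faces `Δ`. -/
def SigmaInfty' {n : ℕ} (f : MvPolynomial (Fin n) ℝ) : Set ℝ :=
  {c | ∃ Δ : Set (Fin n → ℝ), BadFace f Δ ∧ ∃ x : Fin n → ℝ, (∀ j, x j ≠ 0) ∧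
    (∀ j, eval x (pderiv j (facePoly f Δ)) = 0) ∧ eval x (facePoly f Δ) = c}

/-- The Euclidean norm on `Fin k → ℝ`. -/
def euclNorm {k : ℕ} (x : Fin k → ℝ) : ℝ := Real.sqrt (∑ j, (x j) ^ 2)

/-- Basic semialgebraic subsets of `ℝ^m`. -/
def BasicSA {m : ℕ} (A : Set (Fin m → ℝ)) : Prop :=
  ∃ (k l : ℕ) (g : Fin k → MvPolynomial (Fin m) ℝ) (h : Fin l → MvPolynomial (Fin m) ℝ),
    A = {x | (∀ i, eval x (g i) = 0) ∧ ∀ i, 0 < eval x (h i)}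

/-- Semialgebraic subsets of `ℝ^m`: finite unions of basic semialgebraic sets. -/
def IsSA {m : ℕ} (A : Set (Fin m → ℝ)) : Prop :=
  ∃ (N : ℕ) (B : Fin N → Set (Fin m → ℝ)), (∀ i, BasicSA (B i)) ∧ A = ⋃ i, B i

/-- A semialgebraic scalar function on a domain `D ⊆ ℝ` (graph is semialgebraic). -/
def IsSAFunOn (D : Set ℝ) (f : ℝ → ℝ) : Prop :=
  IsSA {z : Fin 2 → ℝ | z 0 ∈ D ∧ z 1 = f (z 0)}

/-- A semialgebraic curve `D → ℝⁿ` (graph is semialgebraic). -/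
def IsSACurve {n : ℕ} (D : Set ℝ) (φ : ℝ → Fin n → ℝ) : Prop :=
  IsSA {z : Fin (n + 1) → ℝ | z 0 ∈ D ∧ ∀ j : Fin n, z j.succ = φ (z 0) j}

/-- A semialgebraic map `ℝⁿ → ℝ^p` (graph is semialgebraic). -/
def IsSAMap {n p : ℕ} (F : (Fin n → ℝ) → (Fin p → ℝ)) : Prop :=
  IsSA {z : Fin (n + p) → ℝ |
    (fun i : Fin p => z (Fin.natAdd n i)) = F (fun j : Fin n => z (Fin.castAdd p j))}

/-!
Let `c` be the infimum of `f₀` on `S`. On each sphere meeting `S` the objective `f₀` attains its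
minimum over `S`, and since `c` is not attained, values of these minima exceeding `c` accumulate
at `c`. Every minimiser satisfies the Fritz John conditions on `ℝ^J`, where `J` is its support. As
there are finitely many `J`, one of them occurs for `t = f₀ - c` arbitrarily close to `0`. The
system consisting of `f₀(x) = c + t` and the Fritz John conditions for this `J` is semialgebraic in
`t`, the point and the multipliers; its solvability for arbitrarily small `t > 0` gives a
semialgebraic solution near `0⁺`, which is smooth there because a one-variable semialgebraic
function is near `0⁺` a simple root of a polynomial with polynomial coefficients. The solution
leaves every compact set, since a limit point would be a point of `S` where `f₀ = c`.
-/

section PolynomialMaps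

variable {E F G H : Type*} [AddCommGroup E] [Module ℝ E] [AddCommGroup F] [Module ℝ F]
  [AddCommGroup G] [Module ℝ G] [AddCommGroup H] [Module ℝ H]

/-- The algebra of real polynomial functions on a real vector space, generated by the linear
forms; this makes sense without a choice of coordinates. -/
def polyFun (E : Type*) [AddCommGroup E] [Module ℝ E] : Subalgebra ℝ (E → ℝ) :=
  Algebra.adjoin ℝ (range fun ℓ : Module.Dual ℝ E => (ℓ : E → ℝ))

/-- Polynomial maps between real vector spaces: finite sums of maps `x ↦ a x • v` with `a` a
polynomial function and `v` a vector. For `F = ℝ[X]` these are the families of univariate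
polynomials with polynomial coefficients and bounded degree. -/
@[fun_prop]
def IsPolynomialMap (φ : E → F) : Prop :=
  φ ∈ Submodule.span ℝ {ψ : E → F | ∃ a ∈ polyFun E, ∃ v : F, ψ = fun x => a x • v}

namespace IsPolynomialMap

theorem smul_const {a : E → ℝ} (ha : a ∈ polyFun E) (v : F) :
    IsPolynomialMap fun x => a x • v :=
  Submodule.subset_span ⟨a, ha, v, rfl⟩

@[elab_as_elim]
theorem induction {motive : (φ : E → F) → IsPolynomialMap φ → Prop}
    (smul : ∀ a (ha : a ∈ polyFun E) (v : F), motive (fun x => a x • v) (smul_const ha v))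
    (zero : motive (fun _ => 0) (Submodule.zero_mem _))
    (add : ∀ φ ψ hφ hψ, motive φ hφ → motive ψ hψ →
      motive (fun x => φ x + ψ x) (Submodule.add_mem _ hφ hψ))
    {φ : E → F} (hφ : IsPolynomialMap φ) : motive φ hφ := by
  suffices ∀ r : ℝ, motive (r • φ) (Submodule.smul_mem _ r hφ) by simpa using this 1
  induction hφ using Submodule.span_induction with
  | mem φ h =>
    obtain ⟨a, ha, v, rfl⟩ := h
    intro r
    have hra : (fun x => a x • r • v) = r • fun x => a x • v := by
      funext x
      exact smul_comm _ _ _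
    simpa only [hra] using smul a ha (r • v)
  | zero => exact fun r => by simp only [smul_zero]; exact zero
  | add φ ψ _ _ hφ hψ => exact fun r => by simp only [smul_add]; exact add _ _ _ _ (hφ r) (hψ r)
  | smul s φ _ h => exact fun r => by simpa only [smul_smul] using h (r * s)

@[fun_prop]
theorem const (v : F) : IsPolynomialMap fun _ : E => v := by
  simpa using smul_const (one_mem (polyFun E)) v

@[fun_prop]
theorem add {φ ψ : E → F} (hφ : IsPolynomialMap φ) (hψ : IsPolynomialMap ψ) :
    IsPolynomialMap fun x => φ x + ψ x :=
  Submodule.add_mem _ hφ hψ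

theorem linearMap_comp (L : F →ₗ[ℝ] G) {φ : E → F} (hφ : IsPolynomialMap φ) :
    IsPolynomialMap fun x => L (φ x) := by
  induction hφ using IsPolynomialMap.induction with
  | smul a ha v => simpa using smul_const ha (L v)
  | zero => simpa using const (0 : G)
  | add φ ψ _ _ hφ hψ => simpa using hφ.add hψ

theorem bilinear (B : F →ₗ[ℝ] G →ₗ[ℝ] H) {φ : E → F} {ψ : E → G} (hφ : IsPolynomialMap φ)
    (hψ : IsPolynomialMap ψ) : IsPolynomialMap fun x => B (φ x) (ψ x) := by
  induction hφ using IsPolynomialMap.induction with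
  | smul a ha v =>
    induction hψ using IsPolynomialMap.induction with
    | smul b hb w => simpa [smul_smul] using smul_const (mul_mem hb ha) (B v w)
    | zero => simpa using const (0 : H)
    | add ψ χ _ _ hψ hχ => simpa using hψ.add hχ
  | zero => simpa using const (0 : H)
  | add φ χ _ _ hφ hχ => simpa using hφ.add hχ

theorem real_iff {a : E → ℝ} : IsPolynomialMap a ↔ a ∈ polyFun E := by
  refine ⟨fun h => ?_, fun h => by simpa using smul_const h (1 : ℝ)⟩
  induction h using IsPolynomialMap.induction with
  | smul a ha v => exact mul_mem ha ((polyFun E).algebraMap_mem v)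
  | zero => exact zero_mem _
  | add a b _ _ ha hb => exact add_mem ha hb

theorem dual (ℓ : Module.Dual ℝ E) : IsPolynomialMap fun x => ℓ x :=
  real_iff.2 (Algebra.subset_adjoin ⟨ℓ, rfl⟩)

@[fun_prop]
theorem neg {φ : E → F} (hφ : IsPolynomialMap φ) : IsPolynomialMap fun x => -φ x :=
  Submodule.neg_mem _ hφ

@[fun_prop]
theorem sub {φ ψ : E → F} (hφ : IsPolynomialMap φ) (hψ : IsPolynomialMap ψ) :
    IsPolynomialMap fun x => φ x - ψ x :=
  Submodule.sub_mem _ hφ hψ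

@[fun_prop]
theorem finset_sum {ι : Type*} (s : Finset ι) {φ : ι → E → F} (hφ : ∀ i, IsPolynomialMap (φ i)) :
    IsPolynomialMap fun x => ∑ i ∈ s, φ i x := by
  simp only [← Finset.sum_apply]
  exact Submodule.sum_mem _ fun i _ => hφ i

@[fun_prop]
theorem smul {a : E → ℝ} {φ : E → F} (ha : IsPolynomialMap a) (hφ : IsPolynomialMap φ) :
    IsPolynomialMap fun x => a x • φ x :=
  bilinear (LinearMap.lsmul ℝ F) ha hφ

@[fun_prop]
theorem mul {R : Type*} [Ring R] [Algebra ℝ R] {φ ψ : E → R} (hφ : IsPolynomialMap φ)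
    (hψ : IsPolynomialMap ψ) : IsPolynomialMap fun x => φ x * ψ x :=
  bilinear (LinearMap.mul ℝ R) hφ hψ

@[fun_prop]
theorem div_const {a : E → ℝ} (ha : IsPolynomialMap a) (c : ℝ) :
    IsPolynomialMap fun x => a x / c := by
  simpa only [div_eq_mul_inv] using ha.mul (const c⁻¹)

@[fun_prop]
theorem pow {R : Type*} [Ring R] [Algebra ℝ R] {φ : E → R} (hφ : IsPolynomialMap φ) (k : ℕ) :
    IsPolynomialMap fun x => φ x ^ k := by
  induction k with
  | zero => simpa using const (1 : R)
  | succ k ih => simpa only [pow_succ] using ih.mul hφ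

@[fun_prop]
theorem prodMk {φ : E → F} {ψ : E → G} (hφ : IsPolynomialMap φ) (hψ : IsPolynomialMap ψ) :
    IsPolynomialMap fun x => (φ x, ψ x) := by
  simpa using (linearMap_comp (LinearMap.inl ℝ F G) hφ).add
    (linearMap_comp (LinearMap.inr ℝ F G) hψ)

@[fun_prop]
theorem pi {ι : Type*} [Finite ι] {φ : E → ι → F} (hφ : ∀ i, IsPolynomialMap fun x => φ x i) :
    IsPolynomialMap φ := by
  cases nonempty_fintype ι
  have hsum : φ = fun x => ∑ i, LinearMap.single ℝ (fun _ => F) i (φ x i) := by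
    funext x
    exact (Finset.univ_sum_single (φ x)).symm
  rw [hsum]
  exact finset_sum _ fun i => linearMap_comp _ (hφ i)

@[fun_prop]
theorem comp {ψ : F → G} {φ : E → F} (hψ : IsPolynomialMap ψ) (hφ : IsPolynomialMap φ) :
    IsPolynomialMap fun x => ψ (φ x) := by
  induction hψ using IsPolynomialMap.induction with
  | smul a ha v =>
    refine IsPolynomialMap.smul ?_ (const v)
    induction ha using Algebra.adjoin_induction with
    | mem a h =>
      obtain ⟨ℓ, rfl⟩ := h
      exact linearMap_comp ℓ hφ
    | algebraMap r => exact const r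
    | add a b _ _ ha hb => exact ha.add hb
    | mul a b _ _ ha hb => exact ha.mul hb
  | zero => exact const 0
  | add ψ χ _ _ hψ hχ => exact hψ.add hχ

@[fun_prop]
protected theorem id [FiniteDimensional ℝ E] : IsPolynomialMap fun x : E => x := by
  have hsum : (fun x : E => x) =
      fun x => ∑ i, (Module.finBasis ℝ E).coord i x • Module.finBasis ℝ E i :=
    funext fun x => ((Module.finBasis ℝ E).sum_repr x).symm
  rw [hsum]
  exact finset_sum _ fun i => (dual _).smul (const _)

@[fun_prop]
theorem fst [FiniteDimensional ℝ E] [FiniteDimensional ℝ F] :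
    IsPolynomialMap (Prod.fst : E × F → E) :=
  linearMap_comp (LinearMap.fst ℝ E F) .id

@[fun_prop]
theorem snd [FiniteDimensional ℝ E] [FiniteDimensional ℝ F] :
    IsPolynomialMap (Prod.snd : E × F → F) :=
  linearMap_comp (LinearMap.snd ℝ E F) .id

@[fun_prop]
theorem apply {ι : Type*} [Finite ι] (i : ι) : IsPolynomialMap fun x : ι → ℝ => x i :=
  linearMap_comp (LinearMap.proj i : (ι → ℝ) →ₗ[ℝ] ℝ) .id

@[fun_prop]
theorem finCons {n : ℕ} {a : E → ℝ} {φ : E → Fin n → ℝ} (ha : IsPolynomialMap a)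
    (hφ : IsPolynomialMap φ) :
    IsPolynomialMap fun x => (Fin.cons (a x) (φ x) : Fin (n + 1) → ℝ) :=
  .pi <| Fin.cases (by simpa only [Fin.cons_zero] using ha)
    fun i => by simpa only [Fin.cons_succ] using (apply i).comp hφ

@[fun_prop]
theorem polynomial_coeff {q : E → Polynomial ℝ} (hq : IsPolynomialMap q) (i : ℕ) :
    IsPolynomialMap fun x => (q x).coeff i :=
  linearMap_comp (Polynomial.lcoeff ℝ i) hq

@[fun_prop]
theorem polynomial_derivative {q : E → Polynomial ℝ} (hq : IsPolynomialMap q) :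
    IsPolynomialMap fun x => Polynomial.derivative (q x) :=
  linearMap_comp Polynomial.derivative hq

@[fun_prop]
theorem polynomial_C {a : E → ℝ} (ha : IsPolynomialMap a) :
    IsPolynomialMap fun x => Polynomial.C (a x) :=
  linearMap_comp (Polynomial.monomial 0) ha

@[fun_prop]
theorem polynomial_eval {q : E → Polynomial ℝ} {a : E → ℝ} (hq : IsPolynomialMap q)
    (ha : IsPolynomialMap a) : IsPolynomialMap fun x => (q x).eval (a x) := by
  induction hq using IsPolynomialMap.induction with
  | smul b hb v =>
    simp only [Polynomial.eval_smul, Polynomial.eval_eq_sum_range (p := v)]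
    exact smul (real_iff.2 hb) (by fun_prop)
  | zero => simpa using const (0 : ℝ)
  | add q r _ _ hq hr => simpa only [Polynomial.eval_add] using hq.add hr

@[fun_prop]
theorem mvPolynomial_eval {σ : Type*} [Finite σ] {φ : E → σ → ℝ} (hφ : IsPolynomialMap φ)
    (f : MvPolynomial σ ℝ) : IsPolynomialMap fun x => eval (φ x) f := by
  induction f using MvPolynomial.induction_on with
  | C r => simpa using const r
  | add f g hf hg => simpa using hf.add hg
  | mul_X f i hf => simpa using hf.mul ((apply i).comp hφ)

theorem exists_natDegree_le {q : E → Polynomial ℝ} (hq : IsPolynomialMap q) :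
    ∃ d, ∀ x, (q x).natDegree ≤ d := by
  induction hq using IsPolynomialMap.induction with
  | smul a _ v => exact ⟨v.natDegree, fun x => Polynomial.natDegree_smul_le _ _⟩
  | zero => exact ⟨0, by simp⟩
  | add q r _ _ hq hr =>
    obtain ⟨d, hd⟩ := hq
    obtain ⟨e, he⟩ := hr
    exact ⟨max d e, fun x => Polynomial.natDegree_add_le_of_degree_le
      ((hd x).trans (le_max_left d e)) ((he x).trans (le_max_right d e))⟩

theorem exists_eq_eval {a : E × ℝ → ℝ} (ha : IsPolynomialMap a) :
    ∃ q : E → Polynomial ℝ, IsPolynomialMap q ∧ ∀ z, a z = (q z.1).eval z.2 := by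
  rw [real_iff] at ha
  induction ha using Algebra.adjoin_induction with
  | mem a h =>
    obtain ⟨ℓ, rfl⟩ := h
    refine ⟨fun x => Polynomial.C (ℓ (x, 0)) + ℓ (0, 1) • Polynomial.X, ?_, fun z => ?_⟩
    · exact (polynomial_C (dual (ℓ ∘ₗ LinearMap.inl ℝ E ℝ))).add (const _)
    · calc ℓ z = ℓ ((z.1, 0) + z.2 • (0, 1)) := by simp
        _ = ℓ (z.1, 0) + z.2 * ℓ (0, 1) := by rw [map_add, map_smul, smul_eq_mul]
        _ = _ := by simp [mul_comm]
  | algebraMap r => exact ⟨fun _ => Polynomial.C r, const _, by simp⟩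
  | add a b _ _ ha hb =>
    obtain ⟨q, hq, hqa⟩ := ha
    obtain ⟨r, hr, hrb⟩ := hb
    exact ⟨fun x => q x + r x, hq.add hr, fun z => by simp [hqa, hrb]⟩
  | mul a b _ _ ha hb =>
    obtain ⟨q, hq, hqa⟩ := ha
    obtain ⟨r, hr, hrb⟩ := hb
    exact ⟨fun x => q x * r x, hq.mul hr, fun z => by simp [hqa, hrb]⟩

theorem exists_eq_mvPolynomial_eval {σ : Type*} [Finite σ] {a : (σ → ℝ) → ℝ}
    (ha : IsPolynomialMap a) : ∃ f : MvPolynomial σ ℝ, ∀ x, a x = eval x f := by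
  cases nonempty_fintype σ
  rw [real_iff] at ha
  induction ha using Algebra.adjoin_induction with
  | mem a h =>
    obtain ⟨ℓ, rfl⟩ := h
    exact ⟨∑ i, C (ℓ fun j => if i = j then 1 else 0) * X i, fun x => by
      simp [ℓ.pi_apply_eq_sum_univ x, mul_comm]⟩
  | algebraMap r => exact ⟨C r, by simp⟩
  | add a b _ _ ha hb =>
    obtain ⟨f, hf⟩ := ha
    obtain ⟨g, hg⟩ := hb
    exact ⟨f + g, fun x => by simp [hf, hg]⟩
  | mul a b _ _ ha hb =>
    obtain ⟨f, hf⟩ := ha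
    obtain ⟨g, hg⟩ := hb
    exact ⟨f * g, fun x => by simp [hf, hg]⟩

end IsPolynomialMap

end PolynomialMaps

section Semialgebraic

variable {E F : Type*} [AddCommGroup E] [Module ℝ E] [AddCommGroup F] [Module ℝ F]

/-- Semialgebraic conditions on a real vector space: those determined by the signs of finitely
many polynomial functions. Such a condition is a finite union of sign conditions, so this is the
usual notion, in a form in which Boolean combinations are immediate. -/
def SemialgebraicPred (P : E → Prop) : Prop :=
  ∃ M : Finset (E → ℝ), (∀ a ∈ M, IsPolynomialMap a) ∧
    ∀ x x', (∀ a ∈ M, SignType.sign (a x) = SignType.sign (a x')) → P x → P x'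

namespace SemialgebraicPred

theorem exists_sign_normal_form {P : E → Prop} (hP : SemialgebraicPred P) :
    ∃ M : Finset (E → ℝ), (∀ a ∈ M, IsPolynomialMap a) ∧
      ∃ T : Set (M → SignType), ∀ x, P x ↔ (fun a : M => SignType.sign (a.1 x)) ∈ T := by
  obtain ⟨M, hM, h⟩ := hP
  refine ⟨M, hM, {s | ∃ x, P x ∧ (fun a : M => SignType.sign (a.1 x)) = s},
    fun x => ⟨fun hx => ⟨x, hx, rfl⟩, ?_⟩⟩
  rintro ⟨x', hx', heq⟩
  exact h x' x (fun a ha => congrFun heq ⟨a, ha⟩) hx'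

theorem const (p : Prop) : SemialgebraicPred fun _ : E => p :=
  ⟨∅, by simp, fun _ _ _ h => h⟩

theorem not {P : E → Prop} (hP : SemialgebraicPred P) : SemialgebraicPred fun x => ¬P x := by
  obtain ⟨M, hM, h⟩ := hP
  exact ⟨M, hM, fun x x' hxx' hx hx' => hx (h x' x (fun a ha => (hxx' a ha).symm) hx')⟩

theorem and {P Q : E → Prop} (hP : SemialgebraicPred P) (hQ : SemialgebraicPred Q) :
    SemialgebraicPred fun x => P x ∧ Q x := by
  obtain ⟨M, hM, hMP⟩ := hP
  obtain ⟨N, hN, hNQ⟩ := hQ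
  refine ⟨M ∪ N, fun a ha => (Finset.mem_union.1 ha).elim (hM a) (hN a),
    fun x x' h => And.imp (hMP x x' fun a ha => h a ?_) (hNQ x x' fun a ha => h a ?_)⟩
  exacts [Finset.mem_union_left N ha, Finset.mem_union_right M ha]

theorem or {P Q : E → Prop} (hP : SemialgebraicPred P) (hQ : SemialgebraicPred Q) :
    SemialgebraicPred fun x => P x ∨ Q x := by
  simpa only [not_and_or, not_not] using (hP.not.and hQ.not).not

theorem imp {P Q : E → Prop} (hP : SemialgebraicPred P) (hQ : SemialgebraicPred Q) :
    SemialgebraicPred fun x => P x → Q x := by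
  simpa only [imp_iff_not_or] using hP.not.or hQ

theorem forall_finite {ι : Type*} [Finite ι] {P : ι → E → Prop}
    (hP : ∀ i, SemialgebraicPred (P i)) : SemialgebraicPred fun x => ∀ i, P i x := by
  cases nonempty_fintype ι
  choose M hM h using hP
  refine ⟨Finset.univ.biUnion M, fun a ha => ?_, fun x x' hxx' hx i => ?_⟩
  · obtain ⟨i, -, hi⟩ := Finset.mem_biUnion.1 ha
    exact hM i a hi
  · exact h i x x' (fun a ha => hxx' a (Finset.mem_biUnion.2 ⟨i, Finset.mem_univ i, ha⟩)) (hx i)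

theorem exists_finite {ι : Type*} [Finite ι] {P : ι → E → Prop}
    (hP : ∀ i, SemialgebraicPred (P i)) : SemialgebraicPred fun x => ∃ i, P i x := by
  simpa only [not_forall, not_not] using (forall_finite fun i => (hP i).not).not

theorem comp {P : F → Prop} (hP : SemialgebraicPred P) {φ : E → F} (hφ : IsPolynomialMap φ) :
    SemialgebraicPred fun x => P (φ x) := by
  obtain ⟨M, hM, h⟩ := hP
  refine ⟨M.image fun a x => a (φ x), fun b hb => ?_, fun x x' hxx' => h _ _ fun a ha =>
    hxx' _ (Finset.mem_image_of_mem _ ha)⟩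
  obtain ⟨a, ha, rfl⟩ := Finset.mem_image.1 hb
  exact (hM a ha).comp hφ

theorem sign_eq {a : E → ℝ} (ha : IsPolynomialMap a) (s : SignType) :
    SemialgebraicPred fun x => SignType.sign (a x) = s :=
  ⟨{a}, by simpa using ha, fun x x' h hx => (h a (Finset.mem_singleton_self a)).symm.trans hx⟩

theorem sign_mem {ι : Type*} [Finite ι] {a : ι → E → ℝ} (ha : ∀ i, IsPolynomialMap (a i))
    (T : Set (ι → SignType)) : SemialgebraicPred fun x => (fun i => SignType.sign (a i x)) ∈ T := by
  have h : SemialgebraicPred fun x => ∃ s : ι → SignType,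
      s ∈ T ∧ ∀ i, SignType.sign (a i x) = s i :=
    exists_finite fun s => (const _).and (forall_finite fun i => sign_eq (ha i) (s i))
  simpa only [← funext_iff, exists_eq_right'] using h

theorem lt {a b : E → ℝ} (ha : IsPolynomialMap a) (hb : IsPolynomialMap b) :
    SemialgebraicPred fun x => a x < b x := by
  simpa only [sign_eq_one_iff, sub_pos] using sign_eq (hb.sub ha) 1

theorem le {a b : E → ℝ} (ha : IsPolynomialMap a) (hb : IsPolynomialMap b) :
    SemialgebraicPred fun x => a x ≤ b x := by
  simpa only [not_lt] using (lt hb ha).not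

theorem eq [FiniteDimensional ℝ F] {φ ψ : E → F} (hφ : IsPolynomialMap φ)
    (hψ : IsPolynomialMap ψ) : SemialgebraicPred fun x => φ x = ψ x := by
  let b := Module.finBasis ℝ F
  have hiff (x) : φ x = ψ x ↔ ∀ i, SignType.sign (b.coord i (φ x - ψ x)) = 0 := by
    simp only [sign_eq_zero_iff, b.forall_coord_eq_zero_iff, sub_eq_zero]
  simp only [hiff]
  exact forall_finite fun i => sign_eq (.linearMap_comp _ (hφ.sub hψ)) 0

theorem exists_polynomial_family {P : E → ℝ → Prop}
    (hP : SemialgebraicPred fun z : E × ℝ => P z.1 z.2) :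
    ∃ (M : Finset (E × ℝ → ℝ)) (q : M → E → Polynomial ℝ) (T : Set (M → SignType)),
      (∀ k, IsPolynomialMap (q k)) ∧
        ∀ x y, P x y ↔ (fun k => SignType.sign ((q k x).eval y)) ∈ T := by
  obtain ⟨M, hM, T, hT⟩ := hP.exists_sign_normal_form
  choose q hq hqM using fun k : M => (hM k k.2).exists_eq_eval
  exact ⟨M, q, T, hq, fun x y => by simp only [hT (x, y), hqM]⟩

end SemialgebraicPred

end Semialgebraic

section RootsAndSigns

/-- The zeros of the nonzero members of a family of univariate polynomials. -/
def familyRoots {κ : Type*} (q : κ → Polynomial ℝ) : Set ℝ := {y | ∃ k, y ∈ (q k).roots}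

theorem exists_mem_familyRoots {κ : Type*} {q : κ → Polynomial ℝ} {P : ℝ → Prop} :
    (∃ y ∈ familyRoots q, P y) ↔ ∃ k, ∃ y ∈ (q k).roots, P y := by
  simp only [familyRoots, mem_ofPred_eq]
  tauto

theorem finite_familyRoots {κ : Type*} [Finite κ] (q : κ → Polynomial ℝ) :
    (familyRoots q).Finite := by
  have : familyRoots q = ⋃ k, ((q k).roots.toFinset : Set ℝ) := by
    ext y
    simp only [familyRoots, mem_ofPred_eq, mem_iUnion, Finset.mem_coe, Multiset.mem_toFinset]
  exact this ▸ finite_iUnion fun k => Finset.finite_toSet _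

theorem sign_eval_eq_of_disjoint_familyRoots {κ : Type*} {q : κ → Polynomial ℝ} {a b : ℝ}
    (h : Disjoint (familyRoots q) (uIcc a b)) (k : κ) :
    SignType.sign ((q k).eval a) = SignType.sign ((q k).eval b) := by
  by_cases hk : q k = 0
  · simp [hk]
  have hne : ∀ y ∈ uIcc a b, (q k).eval y ≠ 0 := fun y hy h0 =>
    disjoint_left.1 h ⟨k, Polynomial.mem_roots'.2 ⟨hk, h0⟩⟩ hy
  by_contra hsign
  have hmul : (q k).eval a * (q k).eval b < 0 := by
    have ha := hne a left_mem_uIcc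
    have hb := hne b right_mem_uIcc
    rcases ha.lt_or_gt with ha | ha <;> rcases hb.lt_or_gt with hb | hb
    · exact absurd (by rw [sign_neg ha, sign_neg hb]) hsign
    · exact mul_neg_of_neg_of_pos ha hb
    · exact mul_neg_of_pos_of_neg ha hb
    · exact absurd (by rw [sign_pos ha, sign_pos hb]) hsign
  have hzero : (0 : ℝ) ∈ uIcc ((q k).eval a) ((q k).eval b) := by
    rcases mul_neg_iff.1 hmul with ⟨ha, hb⟩ | ⟨ha, hb⟩
    exacts [mem_uIcc_of_ge hb.le ha.le, mem_uIcc_of_le ha.le hb.le]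
  obtain ⟨y, hy, hy0⟩ := intermediate_value_uIcc (q k).continuousOn hzero
  exact hne y hy hy0

theorem eval_mul_eval_neg_of_isRoot {g : Polynomial ℝ} {a b y : ℝ} (hy : y ∈ Ioo a b)
    (hgy : g.eval y = 0) (hg' : ∀ z ∈ Ioo a b, g.derivative.eval z ≠ 0) :
    g.eval a * g.eval b < 0 := by
  have hya : y ∈ Icc a b := Ioo_subset_Icc_self hy
  have ha : a ∈ Icc a b := left_mem_Icc.2 (hy.1.trans hy.2).le
  have hb : b ∈ Icc a b := right_mem_Icc.2 (hy.1.trans hy.2).le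
  rcases hasDerivWithinAt_forall_lt_or_forall_gt_of_forall_ne (convex_Ioo a b)
    (fun z _ => (g.hasDerivAt z).hasDerivWithinAt) hg' with hneg | hpos
  · have hanti : StrictAntiOn (fun z => g.eval z) (Icc a b) :=
      strictAntiOn_of_deriv_neg (convex_Icc a b) g.continuousOn (by simpa using hneg)
    exact mul_neg_of_pos_of_neg (hgy ▸ hanti ha hya hy.1) (hgy ▸ hanti hya hb hy.2)
  · have hmono : StrictMonoOn (fun z => g.eval z) (Icc a b) :=
      strictMonoOn_of_deriv_pos (convex_Icc a b) g.continuousOn (by simpa using hpos)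
    exact mul_neg_of_neg_of_pos (hgy ▸ hmono ha hya hy.1) (hgy ▸ hmono hya hb hy.2)

theorem exists_root_mem_Ioo_of_eval_mul_eval_neg {g : Polynomial ℝ} {a b : ℝ} (hab : a < b)
    (h : g.eval a * g.eval b < 0) : ∃ y ∈ Ioo a b, g.eval y = 0 := by
  rcases mul_neg_iff.1 h with ⟨ha, hb⟩ | ⟨ha, hb⟩
  · exact intermediate_value_Ioo' hab.le g.continuousOn ⟨hb, ha⟩
  · exact intermediate_value_Ioo hab.le g.continuousOn ⟨ha, hb⟩

theorem exists_disjoint_Ioo_of_finite {R : Set ℝ} (hR : R.Finite) {y : ℝ} (hy : y ∉ R)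
    (hlt : ∃ a ∈ R, a < y) (hgt : ∃ b ∈ R, y < b) :
    ∃ a ∈ R, ∃ b ∈ R, y ∈ Ioo a b ∧ Disjoint R (Ioo a b) := by
  obtain ⟨a, ⟨haR, hay⟩, hmax⟩ := exists_max_image (R ∩ Iio y) id (hR.inter_of_left _) hlt
  obtain ⟨b, ⟨hbR, hyb⟩, hmin⟩ := exists_min_image (R ∩ Ioi y) id (hR.inter_of_left _) hgt
  refine ⟨a, haR, b, hbR, ⟨hay, hyb⟩, disjoint_left.2 fun r hr hrab => ?_⟩
  rcases lt_trichotomy r y with h | rfl | h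
  · exact (hmax r ⟨hr, h⟩).not_gt hrab.1
  · exact hy hr
  · exact (hmin r ⟨hr, h⟩).not_gt hrab.2

theorem eventually_nhds_of_notMem {P : ℝ → Prop} {R : Set ℝ} (hR : R.Finite)
    (hP : ∀ y y', Disjoint R (uIcc y y') → P y → P y') {y : ℝ} (hy : y ∉ R) (h : P y) :
    ∀ᶠ y' in nhds y, P y' := by
  obtain ⟨ε, hε, hball⟩ := Metric.isOpen_iff.1 hR.isClosed.isOpen_compl y hy
  filter_upwards [Metric.ball_mem_nhds y hε] with y' hy'
  refine hP y y' (disjoint_right.2 fun r hr => hball ?_) h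
  rw [Real.ball_eq_Ioo] at hy' ⊢
  exact ordConnected_Ioo.uIcc_subset ⟨sub_lt_self y hε, lt_add_of_pos_right y hε⟩ hy' hr

/-- Finitely many points meeting every interval of the complement of the finite set `R`: the
points of `R`, the midpoints of pairs, and all of these shifted by `±1`. -/
def testPoints (R : Set ℝ) : Set ℝ := {y | ∃ a ∈ R, ∃ b ∈ R, ∃ s : SignType, y = (a + b) / 2 + s}

theorem finite_testPoints {R : Set ℝ} (hR : R.Finite) : (testPoints R).Finite := by
  refine ((hR.prod (hR.prod (finite_univ (α := SignType)))).image
    fun z => (z.1 + z.2.1) / 2 + (z.2.2 : ℝ)).subset ?_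
  rintro y ⟨a, ha, b, hb, s, rfl⟩
  exact ⟨(a, b, s), ⟨ha, hb, mem_univ s⟩, rfl⟩

theorem exists_mem_testPoints {R : Set ℝ} (hR : R.Finite) (hne : R.Nonempty) (y : ℝ) :
    ∃ y' ∈ testPoints R, y = y' ∨ Disjoint R (uIcc y y') := by
  by_cases hy : y ∈ R
  · exact ⟨y, ⟨y, hy, y, hy, 0, by simp⟩, Or.inl rfl⟩
  by_cases hlt : ∃ a ∈ R, a < y
  · by_cases hgt : ∃ b ∈ R, y < b
    · obtain ⟨a, ha, b, hb, hyab, hdisj⟩ := exists_disjoint_Ioo_of_finite hR hy hlt hgt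
      refine ⟨(a + b) / 2, ⟨a, ha, b, hb, 0, by simp⟩, Or.inr (hdisj.mono_right ?_)⟩
      have hab := hyab.1.trans hyab.2
      exact ordConnected_Ioo.uIcc_subset hyab ⟨by linarith, by linarith⟩
    · obtain ⟨a, ha, hmax⟩ := exists_max_image R id hR hne
      push Not at hgt
      refine ⟨a + 1, ⟨a, ha, a, ha, 1, by simp⟩, Or.inr (disjoint_left.2 fun r hr hmem => ?_)⟩
      have hya : a < y := (hgt a ha).lt_of_ne fun h => hy (h ▸ ha)
      exact (hmax r hr).not_gt ((lt_min hya (lt_add_one a)).trans_le hmem.1)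
  · obtain ⟨a, ha, hmin⟩ := exists_min_image R id hR hne
    push Not at hlt
    refine ⟨a - 1, ⟨a, ha, a, ha, -1, by simp [sub_eq_add_neg]⟩,
      Or.inr (disjoint_left.2 fun r hr hmem => ?_)⟩
    have hya : y < a := (hlt a ha).lt_of_ne fun h => hy (h ▸ ha)
    exact (hmin r hr).not_gt (hmem.2.trans_lt (max_lt hya (sub_one_lt a)))

theorem exists_mem_testPoints_and_iff {R : Set ℝ} (hR : R.Finite) (hne : R.Nonempty)
    {P : ℝ → Prop} (hP : ∀ y y', Disjoint R (uIcc y y') → P y → P y') :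
    (∃ y ∈ testPoints R, P y) ↔ ∃ y, P y := by
  refine ⟨fun ⟨y, _, hy⟩ => ⟨y, hy⟩, fun ⟨y, hy⟩ => ?_⟩
  obtain ⟨y', hy', rfl | hdisj⟩ := exists_mem_testPoints hR hne y
  exacts [⟨y, hy', hy⟩, ⟨y', hy', hP y y' hdisj hy⟩]

theorem leadingCoeff_sq_mul_abs_lt_of_isRoot {g : Polynomial ℝ} (hg : g ≠ 0) {y : ℝ}
    (hy : g.IsRoot y) :
    g.leadingCoeff ^ 2 * |y| <
      2 * g.leadingCoeff ^ 2 + ∑ i ∈ Finset.range g.natDegree, g.coeff i ^ 2 := by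
  have hlc : 0 < |g.leadingCoeff| := abs_pos.2 (Polynomial.leadingCoeff_ne_zero.2 hg)
  have hsum : 0 ≤ ∑ i ∈ Finset.range g.natDegree, g.coeff i ^ 2 :=
    Finset.sum_nonneg fun i _ => sq_nonneg _
  have hsup : |g.leadingCoeff| * ((Finset.range g.natDegree).sup (‖g.coeff ·‖₊) : NNReal) ≤
      g.leadingCoeff ^ 2 + ∑ i ∈ Finset.range g.natDegree, g.coeff i ^ 2 := by
    rcases (Finset.range g.natDegree).eq_empty_or_nonempty with h | h
    · simp only [h, Finset.sup_empty, bot_eq_zero, NNReal.coe_zero, mul_zero]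
      positivity
    obtain ⟨i, hi, hsup⟩ := Finset.exists_mem_eq_sup _ h (‖g.coeff ·‖₊)
    have hcoeff : g.coeff i ^ 2 ≤ _ :=
      Finset.single_le_sum (f := fun i => g.coeff i ^ 2) (fun i _ => sq_nonneg _) hi
    rw [hsup, coe_nnnorm, Real.norm_eq_abs, ← sq_abs g.leadingCoeff]
    nlinarith [sq_nonneg (|g.leadingCoeff| - |g.coeff i|), sq_abs (g.coeff i)]
  have hbound := NNReal.coe_lt_coe.2 (hy.norm_lt_cauchyBound hg)
  rw [Polynomial.cauchyBound] at hbound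
  push_cast [coe_nnnorm] at hbound
  rw [Real.norm_eq_abs, Real.norm_eq_abs, ← sub_lt_iff_lt_add, lt_div_iff₀ hlc] at hbound
  rw [← sq_abs g.leadingCoeff] at hsup ⊢
  nlinarith [mul_lt_mul_of_pos_right hbound hlc]

end RootsAndSigns

section RootElimination

universe u

variable {E : Type u} [AddCommGroup E] [Module ℝ E]

theorem natDegree_pseudoRemainder_le {g h : Polynomial ℝ} {d k : ℕ} (hg : g.natDegree ≤ d + 1)
    (hh : h.natDegree ≤ d + k + 1) :
    (Polynomial.C (g.coeff (d + 1) ^ 2) * h -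
      Polynomial.C (g.coeff (d + 1) * h.coeff (d + k + 1)) * (Polynomial.X ^ k * g)).natDegree ≤
      d + k := by
  rw [Polynomial.natDegree_le_iff_coeff_eq_zero]
  intro N hN
  obtain ⟨m, rfl⟩ := Nat.exists_eq_add_of_lt hN
  have hshift : d + k + m + 1 = d + m + 1 + k := by ring
  rw [Polynomial.coeff_sub, Polynomial.coeff_C_mul, Polynomial.coeff_C_mul, hshift,
    Polynomial.coeff_X_pow_mul, ← hshift]
  rcases Nat.eq_zero_or_pos m with rfl | hm
  · simp only [add_zero]
    ring
  · rw [Polynomial.coeff_eq_zero_of_natDegree_lt (p := h) (n := d + k + m + 1) (by omega),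
      Polynomial.coeff_eq_zero_of_natDegree_lt (p := g) (n := d + m + 1) (by omega),
      mul_zero, mul_zero, sub_zero]

-- Repeated pseudo-division by `g`; multiplying by the square of the leading coefficient of `g`
-- preserves signs.
theorem IsPolynomialMap.exists_sign_eval_eq_on_roots {g h : E → Polynomial ℝ} {d : ℕ}
    (hg : IsPolynomialMap g) (hgd : ∀ x, (g x).natDegree ≤ d + 1) (hh : IsPolynomialMap h) :
    ∃ r : E → Polynomial ℝ, IsPolynomialMap r ∧ (∀ x, (r x).natDegree ≤ d) ∧
      ∀ x y, (g x).coeff (d + 1) ≠ 0 → (g x).eval y = 0 →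
        SignType.sign ((h x).eval y) = SignType.sign ((r x).eval y) := by
  obtain ⟨e, he⟩ := hh.exists_natDegree_le
  obtain ⟨k, hk⟩ : ∃ k, ∀ x, (h x).natDegree ≤ d + k :=
    ⟨e, fun x => (he x).trans (Nat.le_add_left e d)⟩
  clear he
  induction k generalizing h with
  | zero => exact ⟨h, hh, hk, fun _ _ _ _ => rfl⟩
  | succ k ih =>
    obtain ⟨r, hr, hrd, hrsign⟩ :=
      ih (h := fun x => Polynomial.C ((g x).coeff (d + 1) ^ 2) * h x -
        Polynomial.C ((g x).coeff (d + 1) * (h x).coeff (d + k + 1)) * (Polynomial.X ^ k * g x))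
        (by fun_prop) fun x => natDegree_pseudoRemainder_le (hgd x) (hk x)
    refine ⟨r, hr, hrd, fun x y hc hy => ?_⟩
    rw [← hrsign x y hc hy]
    simp [hy, sign_mul, sign_pos (sq_pos_of_ne_zero hc)]

theorem exists_isRoot_and_iff {κ : Type*} [Finite κ] {g : Polynomial ℝ}
    {q : κ → Polynomial ℝ} {A : ℝ → Prop}
    (hA : ∀ y y', Disjoint (familyRoots q) (uIcc y y') → A y → A y')
    (hderiv : ∀ z, g.derivative.eval z = 0 → z ∈ familyRoots q)
    (hlt : ∀ y, g.eval y = 0 → ∃ a ∈ familyRoots q, a < y)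
    (hgt : ∀ y, g.eval y = 0 → ∃ b ∈ familyRoots q, y < b) :
    (∃ y, g.eval y = 0 ∧ A y) ↔ (∃ y ∈ familyRoots q, g.eval y = 0 ∧ A y) ∨
      ∃ a ∈ familyRoots q, ∃ b ∈ familyRoots q, a < b ∧ g.eval a * g.eval b < 0 ∧
        A ((a + b) / 2) ∧ ∀ r ∈ familyRoots q, ¬(a < r ∧ r < b) := by
  have hmid {a b : ℝ} (hab : a < b) : (a + b) / 2 ∈ Ioo a b := ⟨by linarith, by linarith⟩
  constructor
  · rintro ⟨y, hy, hAy⟩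
    by_cases hyq : y ∈ familyRoots q
    · exact Or.inl ⟨y, hyq, hy, hAy⟩
    obtain ⟨a, ha, b, hb, hyab, hdisj⟩ :=
      exists_disjoint_Ioo_of_finite (finite_familyRoots q) hyq (hlt y hy) (hgt y hy)
    have hab := hyab.1.trans hyab.2
    refine Or.inr ⟨a, ha, b, hb, hab, ?_, ?_, fun r hr hrab => disjoint_left.1 hdisj hr hrab⟩
    · exact eval_mul_eval_neg_of_isRoot hyab hy fun z hz hz0 =>
        disjoint_left.1 hdisj (hderiv z hz0) hz
    · exact hA y _ (hdisj.mono_right (ordConnected_Ioo.uIcc_subset hyab (hmid hab))) hAy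
  · rintro (⟨y, -, hy⟩ | ⟨a, -, b, -, hab, hmul, hAab, hgap⟩)
    · exact ⟨y, hy⟩
    obtain ⟨y, hyab, hy⟩ := exists_root_mem_Ioo_of_eval_mul_eval_neg hab hmul
    have hdisj : Disjoint (familyRoots q) (Ioo a b) := disjoint_left.2 hgap
    exact ⟨y, hy,
      hA _ y (hdisj.mono_right (ordConnected_Ioo.uIcc_subset (hmid hab) hyab)) hAab⟩

/-- Elimination of a quantifier ranging over the roots of a polynomial of degree at most `d` whose
coefficients are polynomial functions; established by induction on `d`. -/
def RootElimination (d : ℕ) : Prop :=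
  ∀ (E : Type u) [AddCommGroup E] [Module ℝ E] [FiniteDimensional ℝ E] (g : E → Polynomial ℝ)
    (P : E → ℝ → Prop), IsPolynomialMap g → (∀ x, (g x).natDegree ≤ d) →
    (SemialgebraicPred fun z : E × ℝ => P z.1 z.2) →
    SemialgebraicPred fun x => ∃ y ∈ (g x).roots, P x y

/-- For `g` of degree `d + 1`: its derivative and two linear polynomials whose roots bound those
of `g` from above and below. Adding them to a family forces every root of `g` off the roots of the
family to lie in a gap between two of these, across which `g` changes sign. -/
def separatingFamily (g : Polynomial ℝ) (d : ℕ) : Fin 3 → Polynomial ℝ :=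
  let c := g.coeff (d + 1)
  let β := 2 * c ^ 2 + ∑ i ∈ Finset.range (d + 1), g.coeff i ^ 2
  ![g.derivative, Polynomial.C (c ^ 2) * Polynomial.X - Polynomial.C β,
    Polynomial.C (c ^ 2) * Polynomial.X + Polynomial.C β]

theorem IsPolynomialMap.separatingFamily {g : E → Polynomial ℝ} (hg : IsPolynomialMap g) (d : ℕ)
    (i : Fin 3) : IsPolynomialMap fun x => separatingFamily (g x) d i := by
  fin_cases i
  · exact hg.polynomial_derivative
  · change IsPolynomialMap fun x => Polynomial.C _ * _ - Polynomial.C _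
    fun_prop
  · change IsPolynomialMap fun x => Polynomial.C _ * _ + Polynomial.C _
    fun_prop

theorem natDegree_separatingFamily_le {g : Polynomial ℝ} {d : ℕ} (hd : 1 ≤ d)
    (hg : g.natDegree ≤ d + 1) (i : Fin 3) : (separatingFamily g d i).natDegree ≤ d := by
  fin_cases i
  · exact (Polynomial.natDegree_derivative_le g).trans (Nat.sub_le_of_le_add hg)
  · change (Polynomial.C _ * Polynomial.X - Polynomial.C _ : Polynomial ℝ).natDegree ≤ d
    rw [sub_eq_add_neg, ← Polynomial.C_neg]
    exact Polynomial.natDegree_linear_le.trans hd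
  · exact Polynomial.natDegree_linear_le.trans hd

theorem mem_familyRoots_separatingFamily_of_derivative {g : Polynomial ℝ} {d : ℕ}
    (hc : g.coeff (d + 1) ≠ 0) {z : ℝ} (hz : g.derivative.eval z = 0) :
    z ∈ familyRoots (separatingFamily g d) := by
  refine ⟨0, Polynomial.mem_roots'.2 ⟨fun h0 => hc ?_, hz⟩⟩
  have hcoeff := congrArg (Polynomial.coeff · d) h0
  simpa [separatingFamily, Polynomial.coeff_derivative, (Nat.cast_add_one_pos d).ne'] using hcoeff

theorem exists_familyRoots_separatingFamily_lt_lt {g : Polynomial ℝ} {d : ℕ}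
    (hg : g.natDegree ≤ d + 1) (hc : g.coeff (d + 1) ≠ 0) {y : ℝ} (hy : g.eval y = 0) :
    (∃ a ∈ familyRoots (separatingFamily g d), a < y) ∧
      ∃ b ∈ familyRoots (separatingFamily g d), y < b := by
  have hdeg : g.natDegree = d + 1 := hg.antisymm (Polynomial.le_natDegree_of_ne_zero hc)
  have hg0 : g ≠ 0 := fun h => hc (by rw [h, Polynomial.coeff_zero])
  have hbound := leadingCoeff_sq_mul_abs_lt_of_isRoot hg0 hy
  rw [Polynomial.leadingCoeff, hdeg] at hbound
  have hc2 : 0 < g.coeff (d + 1) ^ 2 := sq_pos_of_ne_zero hc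
  set c := g.coeff (d + 1)
  set β := 2 * c ^ 2 + ∑ i ∈ Finset.range (d + 1), g.coeff i ^ 2
  rw [← lt_div_iff₀' hc2] at hbound
  refine ⟨⟨-((c ^ 2)⁻¹ * β), ⟨2, ?_⟩, ?_⟩, ⟨(c ^ 2)⁻¹ * β, ⟨1, ?_⟩, ?_⟩⟩
  · exact Polynomial.roots_C_mul_X_add_C β hc2.ne' ▸ Multiset.mem_singleton_self _
  · exact (inv_mul_eq_div (c ^ 2) β).symm ▸ (abs_lt.1 hbound).1
  · exact Polynomial.roots_C_mul_X_sub_C β hc2.ne' ▸ Multiset.mem_singleton_self _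
  · exact (inv_mul_eq_div (c ^ 2) β).symm ▸ (abs_lt.1 hbound).2

namespace RootElimination

variable [FiniteDimensional ℝ E] {d : ℕ}

theorem exists_mem_familyRoots (hd : RootElimination.{u} d) {κ : Type*} [Finite κ]
    {q : κ → E → Polynomial ℝ} (hq : ∀ k, IsPolynomialMap (q k))
    (hqd : ∀ k x, (q k x).natDegree ≤ d) {P : E → ℝ → Prop}
    (hP : SemialgebraicPred fun z : E × ℝ => P z.1 z.2) :
    SemialgebraicPred fun x => ∃ y ∈ familyRoots fun k => q k x, P x y := by
  simp only [_root_.exists_mem_familyRoots]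
  exact SemialgebraicPred.exists_finite fun k => hd E (q k) P (hq k) (hqd k) hP

theorem exists_gap (hd : RootElimination.{u} d) {κ : Type*} [Finite κ]
    {q : κ → E → Polynomial ℝ} (hq : ∀ k, IsPolynomialMap (q k))
    (hqd : ∀ k x, (q k x).natDegree ≤ d) {P : E → ℝ → ℝ → Prop}
    (hP : SemialgebraicPred fun z : (E × ℝ) × ℝ => P z.1.1 z.1.2 z.2) :
    SemialgebraicPred fun x => ∃ a ∈ familyRoots fun k => q k x, ∃ b ∈ familyRoots fun k => q k x,
      P x a b ∧ ∀ r ∈ familyRoots fun k => q k x, ¬(a < r ∧ r < b) := by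
  have hbetween : SemialgebraicPred fun z : (E × ℝ) × ℝ =>
      ∃ r ∈ familyRoots fun k => q k z.1.1, z.1.2 < r ∧ r < z.2 :=
    hd.exists_mem_familyRoots (q := fun k (z : (E × ℝ) × ℝ) => q k z.1.1) (by fun_prop)
      (fun k z => hqd k z.1.1) ((SemialgebraicPred.lt (by fun_prop) (by fun_prop)).and
        (SemialgebraicPred.lt (by fun_prop) (by fun_prop)))
  refine hd.exists_mem_familyRoots hq hqd (hd.exists_mem_familyRoots
    (q := fun k (z : E × ℝ) => q k z.1) (by fun_prop) (fun k z => hqd k z.1)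
    (hP.and ?_))
  simpa only [not_exists, not_and] using hbetween.not

theorem exists_root_of_one_le (hd : RootElimination.{u} d) (hd1 : 1 ≤ d) {g : E → Polynomial ℝ}
    (hg : IsPolynomialMap g) (hgd : ∀ x, (g x).natDegree ≤ d + 1) {κ : Type*} [Finite κ]
    {q : κ → E → Polynomial ℝ} (hq : ∀ k, IsPolynomialMap (q k))
    (hqd : ∀ k x, (q k x).natDegree ≤ d) (T : Set (κ → SignType)) :
    SemialgebraicPred fun x => (g x).coeff (d + 1) ≠ 0 ∧
      ∃ y, (g x).eval y = 0 ∧ (fun k => SignType.sign ((q k x).eval y)) ∈ T := by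
  let w : κ ⊕ Fin 3 → E → Polynomial ℝ := Sum.elim q fun i x => separatingFamily (g x) d i
  have hw (i) : IsPolynomialMap (w i) :=
    Sum.rec (motive := fun i => IsPolynomialMap (w i)) hq (hg.separatingFamily d) i
  have hwd (i) (x) : (w i x).natDegree ≤ d :=
    Sum.rec (motive := fun i => (w i x).natDegree ≤ d) (fun k => hqd k x)
      (natDegree_separatingFamily_le hd1 (hgd x)) i
  have hsub (x) : familyRoots (separatingFamily (g x) d) ⊆ familyRoots fun i => w i x :=
    fun y ⟨i, hi⟩ => ⟨Sum.inr i, hi⟩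
  let A (x : E) (y : ℝ) : Prop := (fun k => SignType.sign ((q k x).eval y)) ∈ T
  have hA (x y y') (h : Disjoint (familyRoots fun i => w i x) (uIcc y y')) : A x y → A x y' := by
    have hsign : (fun k => SignType.sign ((q k x).eval y)) =
        fun k => SignType.sign ((q k x).eval y') :=
      funext fun k => sign_eval_eq_of_disjoint_familyRoots h (Sum.inl k)
    simp only [A, hsign, imp_self]
  have hiff (x) (hc : (g x).coeff (d + 1) ≠ 0) := exists_isRoot_and_iff (g := g x) (hA x)
    (fun z hz => hsub x (mem_familyRoots_separatingFamily_of_derivative hc hz))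
    (fun y hy => (exists_familyRoots_separatingFamily_lt_lt (hgd x) hc hy).1.imp
      fun _ ha => ⟨hsub x ha.1, ha.2⟩)
    (fun y hy => (exists_familyRoots_separatingFamily_lt_lt (hgd x) hc hy).2.imp
      fun _ hb => ⟨hsub x hb.1, hb.2⟩)
  rw [show (fun x => (g x).coeff (d + 1) ≠ 0 ∧ ∃ y, (g x).eval y = 0 ∧ A x y) = _ from
    funext fun x => propext (and_congr_right (hiff x))]
  refine (SemialgebraicPred.eq (by fun_prop) (by fun_prop)).not.and (.or ?_ ?_)
  · exact hd.exists_mem_familyRoots hw hwd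
      ((SemialgebraicPred.eq (by fun_prop) (by fun_prop)).and
        (SemialgebraicPred.sign_mem (by fun_prop) T))
  · have hgap := hd.exists_gap hw hwd (P := fun x a b => (a < b ∧
      (g x).eval a * (g x).eval b < 0) ∧ A x ((a + b) / 2)) ?_
    · simpa only [and_assoc] using hgap
    exact ((SemialgebraicPred.lt (by fun_prop) (by fun_prop)).and
      (SemialgebraicPred.lt (by fun_prop) (by fun_prop))).and
        (SemialgebraicPred.sign_mem (by fun_prop) T)

end RootElimination

theorem exists_root_of_natDegree_le_one [FiniteDimensional ℝ E] {g : E → Polynomial ℝ}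
    (hg : IsPolynomialMap g) (hgd : ∀ x, (g x).natDegree ≤ 1) {κ : Type*} [Finite κ]
    {q : κ → E → Polynomial ℝ} (hq : ∀ k, IsPolynomialMap (q k))
    (hqd : ∀ k x, (q k x).natDegree ≤ 0) (T : Set (κ → SignType)) :
    SemialgebraicPred fun x => (g x).coeff 1 ≠ 0 ∧
      ∃ y, (g x).eval y = 0 ∧ (fun k => SignType.sign ((q k x).eval y)) ∈ T := by
  have heval (k x y) : (q k x).eval y = (q k x).coeff 0 := by
    rw [Polynomial.eq_C_of_natDegree_le_zero (hqd k x), Polynomial.eval_C, Polynomial.coeff_C_zero]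
  have hroot (x) (hc : (g x).coeff 1 ≠ 0) : ∃ y, (g x).eval y = 0 := by
    refine ⟨-(g x).coeff 0 / (g x).coeff 1, ?_⟩
    rw [Polynomial.eval_eq_sum_range' (Nat.lt_succ_of_le (hgd x)), Finset.sum_range_succ,
      Finset.sum_range_one]
    field_simp
    ring
  have hiff (x) : ((g x).coeff 1 ≠ 0 ∧
      ∃ y, (g x).eval y = 0 ∧ (fun k => SignType.sign ((q k x).eval y)) ∈ T) ↔
      (g x).coeff 1 ≠ 0 ∧ (fun k => SignType.sign ((q k x).coeff 0)) ∈ T := by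
    simp only [heval, exists_and_right]
    exact and_congr_right fun hc => and_iff_right (hroot x hc)
  simp only [hiff]
  exact (SemialgebraicPred.eq (by fun_prop) (by fun_prop)).not.and
    (SemialgebraicPred.sign_mem (by fun_prop) T)

theorem RootElimination.exists_root [FiniteDimensional ℝ E] {d : ℕ}
    (hd : RootElimination.{u} d) {g : E → Polynomial ℝ} (hg : IsPolynomialMap g)
    (hgd : ∀ x, (g x).natDegree ≤ d + 1) {P : E → ℝ → Prop}
    (hP : SemialgebraicPred fun z : E × ℝ => P z.1 z.2) :
    SemialgebraicPred fun x => (g x).coeff (d + 1) ≠ 0 ∧ ∃ y, (g x).eval y = 0 ∧ P x y := by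
  obtain ⟨M, h, T, hh, hT⟩ := hP.exists_polynomial_family
  choose r hr hrd hrsign using fun k => hg.exists_sign_eval_eq_on_roots hgd (hh k)
  have hiff (x) : ((g x).coeff (d + 1) ≠ 0 ∧ ∃ y, (g x).eval y = 0 ∧ P x y) ↔
      (g x).coeff (d + 1) ≠ 0 ∧
        ∃ y, (g x).eval y = 0 ∧ (fun k => SignType.sign ((r k x).eval y)) ∈ T :=
    and_congr_right fun hc => exists_congr fun y => and_congr_right fun hy => by
      rw [hT, funext fun k => hrsign k x y hc hy]
  simp only [hiff]
  rcases Nat.eq_zero_or_pos d with rfl | hpos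
  · exact exists_root_of_natDegree_le_one hg hgd hr hrd T
  · exact hd.exists_root_of_one_le hpos hg hgd hr hrd T

theorem rootElimination (d : ℕ) : RootElimination.{u} d := by
  induction d with
  | zero =>
    intro E _ _ _ g P _ hgd _
    have hroots (x) : (g x).roots = 0 := by
      rw [Polynomial.eq_C_of_natDegree_le_zero (hgd x), Polynomial.roots_C]
    simpa [hroots] using SemialgebraicPred.const False
  | succ d ih =>
    intro E _ _ _ g P hg hgd hP
    let r (x : E) : Polynomial ℝ :=
      g x - Polynomial.C ((g x).coeff (d + 1)) * Polynomial.X ^ (d + 1)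
    have hrd (x) : (r x).natDegree ≤ d := by
      rw [Polynomial.natDegree_le_iff_coeff_eq_zero]
      intro N hN
      rcases (Nat.succ_le_of_lt hN).eq_or_lt with rfl | hlt
      · simp [r]
      · simp [r, Polynomial.coeff_X_pow, hlt.ne',
          Polynomial.coeff_eq_zero_of_natDegree_lt ((hgd x).trans_lt hlt)]
    have hiff (x) : (∃ y ∈ (g x).roots, P x y) ↔
        ((g x).coeff (d + 1) = 0 ∧ ∃ y ∈ (r x).roots, P x y) ∨
          ((g x).coeff (d + 1) ≠ 0 ∧ ∃ y, (g x).eval y = 0 ∧ P x y) := by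
      by_cases hc : (g x).coeff (d + 1) = 0
      · simp [r, hc]
      · have hg0 : g x ≠ 0 := fun h => hc (by rw [h, Polynomial.coeff_zero])
        simp [hc, hg0]
    simp only [hiff]
    exact ((SemialgebraicPred.eq (by fun_prop) (by fun_prop)).and
      (ih E r P (by fun_prop) hrd hP)).or (ih.exists_root hg hgd hP)

end RootElimination

section QuantifierElimination

universe u

variable {E : Type u} [AddCommGroup E] [Module ℝ E]

namespace SemialgebraicPred

theorem exists_separating_family {P : E → ℝ → Prop}
    (hP : SemialgebraicPred fun z : E × ℝ => P z.1 z.2) :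
    ∃ (κ : Type u) (_ : Finite κ) (q : κ → E → Polynomial ℝ), (∀ k, IsPolynomialMap (q k)) ∧
      ∀ x, (familyRoots fun k => q k x).Nonempty ∧
        ∀ y y', Disjoint (familyRoots fun k => q k x) (uIcc y y') → P x y → P x y' := by
  obtain ⟨M, q, T, hq, hT⟩ := hP.exists_polynomial_family
  refine ⟨Option M, inferInstance, fun k => k.elim (fun _ => Polynomial.X) q,
    Option.rec (.const _) hq, fun x => ⟨⟨0, none, by simp⟩, fun y y' hdisj => ?_⟩⟩
  rw [hT, hT, show (fun k => SignType.sign ((q k x).eval y)) =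
    fun k => SignType.sign ((q k x).eval y') from
    funext fun k => sign_eval_eq_of_disjoint_familyRoots hdisj (some k)]
  exact id

variable [FiniteDimensional ℝ E]

theorem exists_mem_familyRoots {κ : Type*} [Finite κ] {q : κ → E → Polynomial ℝ}
    (hq : ∀ k, IsPolynomialMap (q k)) {P : E → ℝ → Prop}
    (hP : SemialgebraicPred fun z : E × ℝ => P z.1 z.2) :
    SemialgebraicPred fun x => ∃ y ∈ familyRoots fun k => q k x, P x y := by
  choose d hd using fun k => (hq k).exists_natDegree_le
  simp only [_root_.exists_mem_familyRoots]
  exact exists_finite fun k => rootElimination (d k) E (q k) P (hq k) (hd k) hP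

theorem exists_mem_testPoints {κ : Type*} [Finite κ] {q : κ → E → Polynomial ℝ}
    (hq : ∀ k, IsPolynomialMap (q k)) {P : E → ℝ → Prop}
    (hP : SemialgebraicPred fun z : E × ℝ => P z.1 z.2) :
    SemialgebraicPred fun x => ∃ y ∈ testPoints (familyRoots fun k => q k x), P x y := by
  have h : SemialgebraicPred fun x => ∃ s : SignType, ∃ a ∈ familyRoots fun k => q k x,
      ∃ b ∈ familyRoots fun k => q k x, P x ((a + b) / 2 + s) :=
    exists_finite fun s => exists_mem_familyRoots hq <|
      exists_mem_familyRoots (q := fun k (z : E × ℝ) => q k z.1) (by fun_prop) <|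
        hP.comp (φ := fun z : (E × ℝ) × ℝ => (z.1.1, (z.1.2 + z.2) / 2 + s)) (by fun_prop)
  refine (congrArg SemialgebraicPred (funext fun x => propext ⟨?_, ?_⟩)).mp h
  · rintro ⟨s, a, ha, b, hb, hP⟩
    exact ⟨_, ⟨a, ha, b, hb, s, rfl⟩, hP⟩
  · rintro ⟨_, ⟨a, ha, b, hb, s, rfl⟩, hP⟩
    exact ⟨s, a, ha, b, hb, hP⟩

theorem exists_real {P : E → ℝ → Prop} (hP : SemialgebraicPred fun z : E × ℝ => P z.1 z.2) :
    SemialgebraicPred fun x => ∃ y, P x y := by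
  obtain ⟨κ, _, q, hq, hsep⟩ := hP.exists_separating_family
  have hiff (x) := exists_mem_testPoints_and_iff (finite_familyRoots fun k => q k x)
    (hsep x).1 (hsep x).2
  simpa only [hiff] using exists_mem_testPoints hq hP

theorem exists_pi {n : ℕ} {P : E → (Fin n → ℝ) → Prop}
    (hP : SemialgebraicPred fun z : E × (Fin n → ℝ) => P z.1 z.2) :
    SemialgebraicPred fun x => ∃ y, P x y := by
  induction n generalizing E with
  | zero =>
    simp only [Fin.exists_fin_zero_pi]
    exact hP.comp (φ := fun x => (x, finZeroElim)) (by fun_prop)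
  | succ n ih =>
    simp only [Fin.exists_fin_succ_pi]
    refine exists_real (ih (P := fun (z : E × ℝ) v => P z.1 (Fin.cons z.2 v)) ?_)
    exact hP.comp (φ := fun z : (E × ℝ) × (Fin n → ℝ) => (z.1.1, Fin.cons z.1.2 z.2))
      (by fun_prop)

variable {F : Type*} [AddCommGroup F] [Module ℝ F] [FiniteDimensional ℝ F]

/-- The Tarski–Seidenberg theorem. -/
protected theorem ex {P : E → F → Prop}
    (hP : SemialgebraicPred fun z : E × F => P z.1 z.2) :
    SemialgebraicPred fun x => ∃ y, P x y := by
  let e := (Module.finBasis ℝ F).equivFun.symm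
  have hiff (x) := e.surjective.exists (p := P x)
  simp only [hiff]
  have he : IsPolynomialMap fun v => e v := .linearMap_comp e.toLinearMap .id
  exact exists_pi (hP.comp (φ := fun z : E × _ => (z.1, e z.2)) (by fun_prop))

theorem all {P : E → F → Prop} (hP : SemialgebraicPred fun z : E × F => P z.1 z.2) :
    SemialgebraicPred fun x => ∀ y, P x y := by
  simpa only [not_exists, not_not] using (SemialgebraicPred.ex (P := fun x y => ¬P x y) hP.not).not

theorem exists_finite_separating {P : ℝ → Prop} (hP : SemialgebraicPred P) :
    ∃ R : Set ℝ, R.Finite ∧ ∀ y y', Disjoint R (uIcc y y') → P y → P y' := by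
  obtain ⟨κ, _, q, -, hsep⟩ := exists_separating_family (P := fun _ : ℝ => P) (hP.comp .snd)
  exact ⟨_, finite_familyRoots _, (hsep 0).2⟩

end SemialgebraicPred

end QuantifierElimination

section SemialgebraicMaps

variable {E F G : Type*} [AddCommGroup E] [Module ℝ E] [FiniteDimensional ℝ E]
  [AddCommGroup F] [Module ℝ F] [FiniteDimensional ℝ F]
  [AddCommGroup G] [Module ℝ G] [FiniteDimensional ℝ G]

/-- Maps between real vector spaces whose graph is semialgebraic. -/
@[fun_prop]
def SemialgebraicMap {E F : Type*} [AddCommGroup E] [Module ℝ E] [AddCommGroup F] [Module ℝ F]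
    (f : E → F) : Prop :=
  SemialgebraicPred fun z : E × F => z.2 = f z.1

theorem SemialgebraicPred.comp_map {P : F → Prop} (hP : SemialgebraicPred P) {f : E → F}
    (hf : SemialgebraicMap f) : SemialgebraicPred fun x => P (f x) := by
  simpa only [exists_eq_left] using
    SemialgebraicPred.ex (P := fun x y => y = f x ∧ P y) (hf.and (hP.comp .snd))

@[fun_prop]
theorem IsPolynomialMap.semialgebraicMap {f : E → F} (hf : IsPolynomialMap f) :
    SemialgebraicMap f :=
  SemialgebraicPred.eq .snd (hf.comp .fst)

namespace SemialgebraicMap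

@[fun_prop]
theorem comp {f : F → G} {g : E → F} (hf : SemialgebraicMap f) (hg : SemialgebraicMap g) :
    SemialgebraicMap fun x => f (g x) := by
  have h := SemialgebraicPred.ex (P := fun (z : E × G) y => y = g z.1 ∧ z.2 = f y)
    ((SemialgebraicPred.comp hg (φ := fun z : (E × G) × F => (z.1.1, z.2)) (by fun_prop)).and
      (SemialgebraicPred.comp hf (φ := fun z : (E × G) × F => (z.2, z.1.2)) (by fun_prop)))
  simp only [exists_eq_left] at h
  exact h

@[fun_prop]
theorem prodMk {f : E → F} {g : E → G} (hf : SemialgebraicMap f) (hg : SemialgebraicMap g) :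
    SemialgebraicMap fun x => (f x, g x) := by
  simpa only [SemialgebraicMap, Prod.ext_iff] using
    (SemialgebraicPred.comp hf (φ := fun z : E × F × G => (z.1, z.2.1)) (by fun_prop)).and
      (SemialgebraicPred.comp hg (φ := fun z : E × F × G => (z.1, z.2.2)) (by fun_prop))

end SemialgebraicMap

namespace SemialgebraicPred

theorem exists_map_real {P : E → ℝ → Prop} (hP : SemialgebraicPred fun z : E × ℝ => P z.1 z.2) :
    ∃ f : E → ℝ, SemialgebraicMap f ∧ ∀ x, (∃ y, P x y) → P x (f x) := by
  obtain ⟨κ, _, q, hq, hsep⟩ := hP.exists_separating_family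
  have hfin (x) := finite_familyRoots fun k => q k x
  let A (x : E) : Set ℝ := {y | ∃ y' ∈ testPoints (familyRoots fun k => q k x), y' = y ∧ P x y'}
  have hA : SemialgebraicPred fun z : E × ℝ => z.2 ∈ A z.1 :=
    exists_mem_testPoints (q := fun k (z : E × ℝ) => q k z.1) (by fun_prop) <|
      (SemialgebraicPred.eq .snd (by fun_prop)).and
        (hP.comp (φ := fun z : (E × ℝ) × ℝ => (z.1.1, z.2)) (by fun_prop))
  have hAfin (x) : (A x).Finite :=
    (finite_testPoints (hfin x)).subset fun y ⟨_, hz, heq, _⟩ => heq ▸ hz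
  have hmem (x) (h : (A x).Nonempty) : sInf (A x) ∈ A x := h.csInf_mem (hAfin x)
  have hiff (x y) : y = sInf (A x) ↔
      (y ∈ A x ∧ ∀ z, z ∈ A x → y ≤ z) ∨ ((¬∃ z, z ∈ A x) ∧ y = 0) := by
    rcases (A x).eq_empty_or_nonempty with h | h
    · simp [h]
    · have hne : ∃ y', y' ∈ A x := h
      simp only [hne, not_true, false_and, or_false]
      exact ⟨fun hy => hy ▸ ⟨hmem x h, fun y' hy' => csInf_le (hAfin x).bddBelow hy'⟩,
        fun hy => (hy.2 _ (hmem x h)).antisymm (csInf_le (hAfin x).bddBelow hy.1)⟩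
  refine ⟨fun x => sInf (A x), ?_, fun x hx => ?_⟩
  · simp only [SemialgebraicMap, hiff]
    refine (hA.and (.all (.imp ?_ (.le (by fun_prop) .snd)))).or
      ((SemialgebraicPred.ex ?_).not.and (.eq .snd (.const 0)))
    all_goals exact hA.comp (φ := fun z : (E × ℝ) × ℝ => (z.1.1, z.2)) (by fun_prop)
  · obtain ⟨y, hy, hPy⟩ :=
      (exists_mem_testPoints_and_iff (hfin x) (hsep x).1 (hsep x).2).2 hx
    obtain ⟨_, -, heq, hPy'⟩ := hmem x ⟨y, y, hy, rfl, hPy⟩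
    exact (heq ▸ hPy' : P x (sInf (A x)))

theorem exists_map_pi {n : ℕ} {P : E → (Fin n → ℝ) → Prop}
    (hP : SemialgebraicPred fun z : E × (Fin n → ℝ) => P z.1 z.2) :
    ∃ f : E → Fin n → ℝ, SemialgebraicMap f ∧ ∀ x, (∃ y, P x y) → P x (f x) := by
  induction n with
  | zero => exact ⟨fun _ => finZeroElim, by fun_prop, fun x ⟨y, hy⟩ => by convert hy⟩
  | succ n ih =>
    have hcons : IsPolynomialMap fun z : ℝ × (Fin n → ℝ) =>
        (Fin.cons z.1 z.2 : Fin (n + 1) → ℝ) := by fun_prop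
    have hP' : SemialgebraicPred fun z : (E × ℝ) × (Fin n → ℝ) => P z.1.1 (Fin.cons z.1.2 z.2) :=
      hP.comp (φ := fun z : (E × ℝ) × (Fin n → ℝ) => (z.1.1, Fin.cons z.1.2 z.2))
        (by fun_prop)
    obtain ⟨f, hf, hPf⟩ := exists_map_real (P := fun x y => ∃ v, P x (Fin.cons y v)) (.ex hP')
    obtain ⟨g, hg, hPg⟩ := ih (P := fun x v => P x (Fin.cons (f x) v))
      (hP'.comp_map (f := fun z : E × (Fin n → ℝ) => ((z.1, f z.1), z.2)) (by fun_prop))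
    refine ⟨fun x => Fin.cons (f x) (g x), hcons.semialgebraicMap.comp (hf.prodMk hg),
      fun x hx => hPg x (hPf x (Fin.exists_fin_succ_pi.1 hx))⟩

theorem exists_map {P : E → F → Prop} (hP : SemialgebraicPred fun z : E × F => P z.1 z.2) :
    ∃ f : E → F, SemialgebraicMap f ∧ ∀ x, (∃ y, P x y) → P x (f x) := by
  let e := (Module.finBasis ℝ F).equivFun.symm
  have he : IsPolynomialMap fun v => e v := .linearMap_comp e.toLinearMap .id
  obtain ⟨f, hf, hPf⟩ := exists_map_pi (P := fun x v => P x (e v))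
    (hP.comp (φ := fun z : E × _ => (z.1, e z.2)) (by fun_prop))
  exact ⟨fun x => e (f x), he.semialgebraicMap.comp hf,
    fun x hx => hPf x (e.surjective.exists.1 hx)⟩

end SemialgebraicPred

end SemialgebraicMaps

open scoped Topology

section GermsAtEndpoint

universe u

namespace SemialgebraicPred

theorem eventually_of_frequently {P : ℝ → Prop} (hP : SemialgebraicPred P) {a : ℝ}
    (h : ∃ᶠ t in 𝓝[>] a, P t) : ∀ᶠ t in 𝓝[>] a, P t := by
  obtain ⟨R, hR, hsep⟩ := hP.exists_finite_separating
  have hRa : ∀ᶠ t in 𝓝[>] a, Disjoint R (Ioc a t) := by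
    obtain ⟨b, hab, hb⟩ := mem_nhdsGT_iff_exists_Ioo_subset.1
      (nhdsWithin_le_nhds ((hR.subset sdiff_subset).isClosed.isOpen_compl.mem_nhds
        (by simp : a ∈ (R \ {a})ᶜ)))
    filter_upwards [Ioo_mem_nhdsGT hab] with t ht
    refine disjoint_left.2 fun r hr hrt => hb ⟨hrt.1, hrt.2.trans_lt ht.2⟩ ⟨hr, hrt.1.ne'⟩
  obtain ⟨s, ⟨hPs, hs⟩, has⟩ := ((h.and_eventually hRa).and_eventually self_mem_nhdsWithin).exists
  filter_upwards [Ioc_mem_nhdsGT has] with t ht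
  exact hsep s t (hs.mono_right (ordConnected_Ioc.uIcc_subset ⟨has, le_rfl⟩ ht)) hPs

variable {E : Type*} [AddCommGroup E] [Module ℝ E] [FiniteDimensional ℝ E]

theorem mem_roots {q : E → Polynomial ℝ} (hq : IsPolynomialMap q) {f : E → ℝ}
    (hf : SemialgebraicMap f) : SemialgebraicPred fun x => f x ∈ (q x).roots := by
  obtain ⟨d, hd⟩ := hq.exists_natDegree_le
  simpa only [exists_eq_right] using rootElimination d E q (fun x y => y = f x) hq hd hf

end SemialgebraicPred

theorem IsPolynomialMap.contDiff {E : Type*} [NormedAddCommGroup E] [NormedSpace ℝ E]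
    [FiniteDimensional ℝ E] {a : E → ℝ} (ha : IsPolynomialMap a) (n : WithTop ℕ∞) :
    ContDiff ℝ n a := by
  rw [IsPolynomialMap.real_iff] at ha
  induction ha using Algebra.adjoin_induction with
  | mem a h =>
    obtain ⟨ℓ, rfl⟩ := h
    exact ℓ.toContinuousLinearMap.contDiff
  | algebraMap r => exact contDiff_const
  | add a b _ _ ha hb => exact ha.add hb
  | mul a b _ _ ha hb => exact ha.mul hb

theorem contDiffAt_of_eventually_simple_root {q : ℝ → Polynomial ℝ} (hq : IsPolynomialMap q)
    {f : ℝ → ℝ} {t : ℝ} (hcont : ContinuousAt f t) (hroot : ∀ᶠ s in 𝓝 t, (q s).eval (f s) = 0)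
    (hsimple : (q t).derivative.eval (f t) ≠ 0) {n : ℕ∞} : ContDiffAt ℝ n f t := by
  let Q (z : ℝ × ℝ) : ℝ := (q z.1).eval z.2
  have hpoly : IsPolynomialMap Q := by fun_prop
  have hQ : ContDiffAt ℝ (⊤ : ℕ∞) Q (t, f t) := (hpoly.contDiff _).contDiffAt
  have hderiv : fderiv ℝ Q (t, f t) (0, 1) = (q t).derivative.eval (f t) := by
    have hline : HasDerivAt (fun y : ℝ => (t, y)) ((0 : ℝ), (1 : ℝ)) (f t) :=
      (hasDerivAt_const _ _).prodMk (hasDerivAt_id _)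
    exact ((hQ.differentiableAt (by simp)).hasFDerivAt.comp_hasDerivAt (f t) hline).unique
      ((q t).hasDerivAt (f t))
  have hinv : (fderiv ℝ Q (t, f t) ∘L .inr ℝ ℝ ℝ).IsInvertible := by
    refine ⟨ContinuousLinearEquiv.unitsEquivAut ℝ (Units.mk0 _ hsimple), ?_⟩
    ext
    simp [hderiv]
  have hiff := (continuousAt_id.prodMk hcont).eventually
    (hQ.eventually_apply_eq_iff_implicitFunction (by simp) hinv)
  refine ((hQ.contDiffAt_implicitFunction (by simp) hinv).of_le
    (mod_cast le_top)).congr_of_eventuallyEq ?_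
  filter_upwards [hroot, hiff] with s hs hiff
  exact (hiff.1 (hs.trans hroot.self_of_nhds.symm)).symm

namespace SemialgebraicMap

theorem continuousAt {f : ℝ → ℝ} (hf : SemialgebraicMap f) :
    SemialgebraicPred fun t => ContinuousAt f t := by
  simp only [Metric.continuousAt_iff, Real.dist_eq]
  have habs : SemialgebraicPred fun z : (ℝ × ℝ) × ℝ => |z.1.1 - z.1.2| < z.2 := by
    simp only [abs_lt]
    exact (SemialgebraicPred.lt (by fun_prop) (by fun_prop)).and
      (SemialgebraicPred.lt (by fun_prop) (by fun_prop))
  have hpos : SemialgebraicPred fun z : ℝ => 0 < z := .lt (by fun_prop) (by fun_prop)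
  refine .all (.imp (hpos.comp .snd) (.ex (.and (hpos.comp .snd) (.all (.imp ?_ ?_)))))
  · exact habs.comp (φ := fun z : ((ℝ × ℝ) × ℝ) × ℝ => ((z.2, z.1.1.1), z.1.2)) (by fun_prop)
  · exact habs.comp_map (f := fun z : ((ℝ × ℝ) × ℝ) × ℝ => ((f z.2, f z.1.1.1), z.1.1.2))
      (by fun_prop)

theorem countable_not_continuousAt {f : ℝ → ℝ} (hf : SemialgebraicMap f) :
    {t | ¬ContinuousAt f t}.Countable := by
  have hlt (r : ℚ) : SemialgebraicPred fun t => f t < r :=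
    (SemialgebraicPred.lt .id (.const _)).comp_map hf
  have hgt (r : ℚ) : SemialgebraicPred fun t => r < f t :=
    (SemialgebraicPred.lt (.const _) .id).comp_map hf
  choose A hA hAsep using fun r => (hlt r).exists_finite_separating
  choose B hB hBsep using fun r => (hgt r).exists_finite_separating
  refine (countable_iUnion fun r => ((hA r).union (hB r)).countable).mono fun t ht => ?_
  by_contra hmem
  simp only [mem_iUnion, mem_union, not_exists, not_or] at hmem
  refine ht (tendsto_order.2 ⟨fun c hc => ?_, fun c hc => ?_⟩)
  · obtain ⟨r, hcr, hrf⟩ := exists_rat_btwn hc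
    filter_upwards [eventually_nhds_of_notMem (hB r) (hBsep r) (hmem r).2 hrf]
      with s hs using hcr.trans hs
  · obtain ⟨r, hfr, hrc⟩ := exists_rat_btwn hc
    filter_upwards [eventually_nhds_of_notMem (hA r) (hAsep r) (hmem r).1 hfr]
      with s hs using hs.trans hrc

theorem eventually_continuousAt {f : ℝ → ℝ} (hf : SemialgebraicMap f) (a : ℝ) :
    ∀ᶠ t in 𝓝[>] a, ContinuousAt f t := by
  refine hf.continuousAt.eventually_of_frequently fun h => ?_
  obtain ⟨b, hab, hb⟩ := mem_nhdsGT_iff_exists_Ioo_subset.1 h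
  exact Cardinal.Real.Ioo_countable_iff.not.2 (not_le.2 hab) (hf.countable_not_continuousAt.mono hb)

theorem exists_forall_exists_mem_roots {E : Type u} [AddCommGroup E] [Module ℝ E] {f : E → ℝ}
    (hf : SemialgebraicMap f) :
    ∃ (κ : Type u) (_ : Finite κ) (q : κ → E → Polynomial ℝ), (∀ k, IsPolynomialMap (q k)) ∧
      ∀ x, ∃ k, f x ∈ (q k x).roots := by
  obtain ⟨κ, hκ, q, hq, hsep⟩ :=
    SemialgebraicPred.exists_separating_family (P := fun x y => y = f x) hf
  refine ⟨κ, hκ, q, hq, fun x => ?_⟩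
  by_contra hx
  have hev := eventually_nhds_of_notMem (finite_familyRoots _) (hsep x).2 hx rfl
  obtain ⟨y, hy, hne⟩ := ((hev.filter_mono nhdsWithin_le_nhds).and
    (self_mem_nhdsWithin (s := {f x}ᶜ))).exists
  exact hne hy

theorem exists_eventually_mem_roots {f : ℝ → ℝ} (hf : SemialgebraicMap f) (a : ℝ) :
    ∃ q : ℝ → Polynomial ℝ, IsPolynomialMap q ∧ ∀ᶠ t in 𝓝[>] a, f t ∈ (q t).roots := by
  obtain ⟨κ, _, q, hq, hroot⟩ := hf.exists_forall_exists_mem_roots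
  by_contra h
  have hnot (k) : ∀ᶠ t in 𝓝[>] a, f t ∉ (q k t).roots := not_frequently.1 fun hk =>
    h ⟨q k, hq k, SemialgebraicPred.eventually_of_frequently (.mem_roots (hq k) hf) hk⟩
  obtain ⟨t, ht⟩ := (eventually_all.2 hnot).exists
  obtain ⟨k, hk⟩ := hroot t
  exact ht k hk

theorem exists_eventually_simple_root {f : ℝ → ℝ} (hf : SemialgebraicMap f) (a : ℝ) :
    ∃ q : ℝ → Polynomial ℝ, IsPolynomialMap q ∧
      ∀ᶠ t in 𝓝[>] a, (q t).eval (f t) = 0 ∧ (q t).derivative.eval (f t) ≠ 0 := by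
  have hex : ∃ d, ∃ q : ℝ → Polynomial ℝ, IsPolynomialMap q ∧ (∀ t, (q t).natDegree ≤ d) ∧
      ∀ᶠ t in 𝓝[>] a, f t ∈ (q t).roots := by
    obtain ⟨q, hq, hroot⟩ := hf.exists_eventually_mem_roots a
    obtain ⟨d, hd⟩ := hq.exists_natDegree_le
    exact ⟨d, q, hq, hd, hroot⟩
  obtain ⟨q, hq, hd, hroot⟩ := Nat.find_spec hex
  refine ⟨q, hq, ?_⟩
  have hderiv : ∀ᶠ t in 𝓝[>] a, f t ∉ (q t).derivative.roots := by
    by_contra h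
    have hroot' : ∀ᶠ t in 𝓝[>] a, f t ∈ (q t).derivative.roots :=
      SemialgebraicPred.eventually_of_frequently (.mem_roots hq.polynomial_derivative hf) h
    obtain ⟨t, ht⟩ := hroot'.exists
    have hpos : 0 < Nat.find hex := by
      refine (Nat.pos_of_ne_zero fun h0 => ?_).trans_le (hd t)
      simp [Polynomial.derivative_of_natDegree_zero h0] at ht
    exact Nat.find_min hex (Nat.sub_one_lt hpos.ne') ⟨_, hq.polynomial_derivative,
      fun t => (Polynomial.natDegree_derivative_le _).trans (Nat.sub_le_sub_right (hd t) 1), hroot'⟩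
  filter_upwards [hroot, hderiv] with t ht ht'
  obtain ⟨hq0, hft⟩ := Polynomial.mem_roots'.1 ht
  refine ⟨hft, fun h0 => ht' (Polynomial.mem_roots'.2 ⟨fun hzero => ?_, h0⟩)⟩
  rw [Polynomial.eq_C_of_derivative_eq_zero hzero, Polynomial.roots_C] at ht
  simp at ht

theorem eventually_contDiffAt_real {f : ℝ → ℝ} (hf : SemialgebraicMap f) (a : ℝ) (n : ℕ∞) :
    ∀ᶠ t in 𝓝[>] a, ContDiffAt ℝ n f t := by
  obtain ⟨q, hq, hroot⟩ := hf.exists_eventually_simple_root a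
  obtain ⟨b, hab, hb⟩ := mem_nhdsGT_iff_exists_Ioo_subset.1
    (hroot.and (hf.eventually_continuousAt a))
  filter_upwards [Ioo_mem_nhdsGT hab] with t ht
  obtain ⟨⟨_, hsimple⟩, hcont⟩ := hb ht
  refine contDiffAt_of_eventually_simple_root hq hcont ?_ hsimple
  filter_upwards [Ioo_mem_nhds ht.1 ht.2] with s hs using (hb hs).1.1

theorem eventually_contDiffAt {E : Type*} [NormedAddCommGroup E] [NormedSpace ℝ E]
    [FiniteDimensional ℝ E] {f : ℝ → E} (hf : SemialgebraicMap f) (a : ℝ) (n : ℕ∞) :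
    ∀ᶠ t in 𝓝[>] a, ContDiffAt ℝ n f t := by
  let e := (Module.finBasis ℝ E).equivFunL
  have hcoord (i) : SemialgebraicMap fun t => e (f t) i :=
    (IsPolynomialMap.dual ((Module.finBasis ℝ E).coord i)).semialgebraicMap.comp hf
  filter_upwards [eventually_all.2 fun i => (hcoord i).eventually_contDiffAt_real a n] with t ht
  exact e.comp_contDiffAt_iff.1 (contDiffAt_pi.2 ht)

end SemialgebraicMap

theorem SemialgebraicPred.exists_contDiffOn_section {E : Type*} [NormedAddCommGroup E]
    [NormedSpace ℝ E] [FiniteDimensional ℝ E] {P : ℝ → E → Prop}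
    (hP : SemialgebraicPred fun z : ℝ × E => P z.1 z.2) {a : ℝ}
    (h : ∃ᶠ t in 𝓝[>] a, ∃ v, P t v) (n : ℕ∞) :
    ∃ b > a, ∃ f : ℝ → E, SemialgebraicMap f ∧ ContDiffOn ℝ n f (Ioo a b) ∧
      ∀ t ∈ Ioo a b, P t (f t) := by
  obtain ⟨f, hf, hPf⟩ := hP.exists_map
  obtain ⟨b, hab, hb⟩ := mem_nhdsGT_iff_exists_Ioo_subset.1
    (((SemialgebraicPred.ex hP).eventually_of_frequently h).and (hf.eventually_contDiffAt a n))
  exact ⟨b, hab, f, hf, fun t ht => (hb ht).2.contDiffWithinAt, fun t ht => hPf t (hb ht).1⟩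

end GermsAtEndpoint

section FritzJohn

/-- Gordan's alternative. -/
theorem exists_nonneg_sum_smul_eq_zero {W ι : Type*} [AddCommGroup W] [Module ℝ W] [Fintype ι]
    (φ : ι → Module.Dual ℝ W) (h : ∀ d, ∃ i, 0 ≤ φ i d) :
    ∃ l : ι → ℝ, 0 ≤ l ∧ l ≠ 0 ∧ ∑ i, l i • φ i = 0 := by
  let neg : Set (ι → ℝ) := univ.pi fun _ => Iio 0
  let rng : Submodule ℝ (ι → ℝ) := LinearMap.range (LinearMap.pi φ)
  have hdisj : Disjoint neg (rng : Set (ι → ℝ)) := by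
    rw [Set.disjoint_right]
    rintro _ ⟨d, rfl⟩ hd
    obtain ⟨i, hi⟩ := h d
    exact (hd i (mem_univ i)).not_ge hi
  obtain ⟨g, u, hneg, hrng⟩ := geometric_hahn_banach_open (convex_pi fun _ _ => convex_Iio 0)
    (isOpen_set_pi finite_univ fun _ _ => isOpen_Iio) rng.convex hdisj
  have hu : u ≤ 0 := (hrng 0 rng.zero_mem).trans_eq (map_zero g)
  have hg (y : ι → ℝ) : g y = ∑ i, g (Pi.single i 1) * y i := by
    conv_lhs => rw [pi_eq_sum_univ' y, map_sum]
    simp [mul_comm]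
  have hclosure {y : ι → ℝ} (hy : y ≤ 0) : g y ≤ 0 := by
    refine le_trans (le_on_closure (fun z hz => (hneg z hz).le) g.continuous.continuousOn
      continuousOn_const ?_) hu
    simpa [neg, closure_pi_set, mem_univ_pi, Pi.le_def] using hy
  refine ⟨fun i => g (Pi.single i 1), fun i => ?_, fun h0 => ?_, ?_⟩
  · have := hclosure (y := -Pi.single i 1) (neg_nonpos.2 (Pi.single_nonneg.2 zero_le_one))
    rwa [map_neg, neg_nonpos] at this
  · have := hneg (fun _ => -1) fun _ _ => mem_Iio.2 neg_one_lt_zero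
    rw [hg, Finset.sum_eq_zero fun i _ => by rw [congrFun h0 i, Pi.zero_apply, zero_mul]] at this
    exact this.not_ge hu
  · ext d
    by_contra hd
    have := hrng (LinearMap.pi φ (((u - 1) / g (LinearMap.pi φ d)) • d)) ⟨_, rfl⟩
    have hd' : g (LinearMap.pi φ d) ≠ 0 := by rw [hg]; simpa using hd
    rw [map_smul, map_smul, smul_eq_mul, div_mul_cancel₀ _ hd'] at this
    linarith

variable {E F : Type*} [NormedAddCommGroup E] [NormedSpace ℝ E] [CompleteSpace E]
  [NormedAddCommGroup F] [NormedSpace ℝ F] [FiniteDimensional ℝ F]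

theorem exists_hasDerivAt_eventually_eq_of_mem_ker {G : E → F} {G' : E →L[ℝ] F} {x : E}
    (hG : HasStrictFDerivAt G G' x) (hG' : G'.range = ⊤) {d : E} (hd : d ∈ G'.ker) :
    ∃ γ : ℝ → E, γ 0 = x ∧ HasDerivAt γ d 0 ∧ ∀ᶠ t in 𝓝 0, G (γ t) = G x := by
  let ψ := hG.implicitFunction G G' hG' (G x)
  have hline : HasDerivAt (fun t : ℝ => t • (⟨d, hd⟩ : G'.ker)) ⟨d, hd⟩ 0 := by
    simpa using (hasDerivAt_id (0 : ℝ)).smul_const (⟨d, hd⟩ : G'.ker)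
  have hlim : Tendsto (fun t : ℝ => (G x, t • (⟨d, hd⟩ : G'.ker))) (𝓝 0) (𝓝 (G x, 0)) := by
    simpa using (tendsto_const_nhds (x := G x)).prodMk_nhds hline.continuousAt.tendsto
  refine ⟨fun t => ψ (t • ⟨d, hd⟩), ?_, ?_, hlim.eventually (hG.map_implicitFunction_eq hG')⟩
  · simp [ψ]
  · have hψ : HasFDerivAt ψ G'.ker.subtypeL ((0 : ℝ) • (⟨d, hd⟩ : G'.ker)) := by
      simpa using (hG.to_implicitFunction hG').hasFDerivAt
    exact hψ.comp_hasDerivAt 0 hline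

theorem eventually_lt_of_hasDerivAt_neg {f : ℝ → ℝ} {f' a : ℝ} (hf : HasDerivAt f f' a)
    (hf' : f' < 0) :
    ∀ᶠ t in 𝓝[>] a, f t < f a := by
  filter_upwards [(hasDerivWithinAt_iff_tendsto_slope' self_notMem_Ioi).1 hf.hasDerivWithinAt
    |>.eventually_lt_const hf', self_mem_nhdsWithin] with t hslope ht
  rw [slope_def_field, div_lt_iff₀ (sub_pos.2 ht), zero_mul] at hslope
  exact sub_neg.1 hslope

variable {ι : Type*} [Fintype ι] {f : ι → E → ℝ} {f' : ι → E →L[ℝ] ℝ} {G : E → F} {G' : E →L[ℝ] F}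
  {x : E}

theorem exists_multipliers_of_eventually_exists_le (hf : ∀ i, HasFDerivAt (f i) (f' i) x)
    (hG : HasStrictFDerivAt G G' x) (h : ∀ᶠ y in 𝓝 x, G y = G x → ∃ i, f i x ≤ f i y) :
    ∃ (l : ι → ℝ) (m : Module.Dual ℝ F), 0 ≤ l ∧ (l ≠ 0 ∨ m ≠ 0) ∧
      ∀ v, ∑ i, l i * f' i v + m (G' v) = 0 := by
  by_cases hG' : G'.range = ⊤
  · have hdescent (d : G'.ker) : ∃ i, 0 ≤ f' i d := by
      by_contra! hneg
      obtain ⟨γ, rfl, hγ, hGγ⟩ := exists_hasDerivAt_eventually_eq_of_mem_ker hG hG' d.2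
      have hlt : ∀ᶠ t in 𝓝[>] 0, ∀ i, f i (γ t) < f i (γ 0) := eventually_all.2 fun i =>
        eventually_lt_of_hasDerivAt_neg ((hf i).comp_hasDerivAt 0 hγ) (hneg i)
      have hnear := hγ.continuousAt.eventually h
      obtain ⟨t, hlt, hGt, hmem⟩ :=
        (hlt.and ((hGγ.and hnear).filter_mono nhdsWithin_le_nhds)).exists
      obtain ⟨i, hi⟩ := hmem hGt
      exact hi.not_gt (hlt i)
    obtain ⟨l, hl, hl0, hsum⟩ := exists_nonneg_sum_smul_eq_zero
      (fun i => (f' i : Module.Dual ℝ E) ∘ₗ G'.ker.subtype) hdescent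
    have hmem : -∑ i, l i • (f' i : Module.Dual ℝ E) ∈ G'.ker.dualAnnihilator := by
      rw [Submodule.mem_dualAnnihilator]
      intro d hd
      simpa using LinearMap.congr_fun hsum ⟨d, hd⟩
    rw [← LinearMap.range_dualMap_eq_dualAnnihilator_ker] at hmem
    obtain ⟨m, hm⟩ := hmem
    refine ⟨l, m, hl, .inl hl0, fun v => ?_⟩
    have := LinearMap.congr_fun hm v
    simp only [LinearMap.dualMap_apply, ContinuousLinearMap.coe_coe, LinearMap.neg_apply,
      LinearMap.coe_sum, LinearMap.coe_smul, Finset.sum_apply, Pi.smul_apply, smul_eq_mul] at this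
    linarith
  · obtain ⟨m, hm0, hm⟩ := Submodule.exists_le_ker_of_lt_top _ (lt_top_iff_ne_top.2 hG')
    exact ⟨0, m, le_rfl, .inr hm0, fun v => by simpa using hm (LinearMap.mem_range_self _ v)⟩

theorem exists_fritzJohn_multipliers {i₀ : ι} {s : Set ι} (hi₀ : i₀ ∉ s)
    (hf : ∀ i, HasFDerivAt (f i) (f' i) x) (hG : HasStrictFDerivAt G G' x)
    (hx : ∀ i ∈ s, f i x ≤ 0)
    (hmin : IsLocalMinOn (f i₀) {y | G y = G x ∧ ∀ i ∈ s, f i y ≤ 0} x) :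
    ∃ (l : ι → ℝ) (m : Module.Dual ℝ F), 0 ≤ l ∧ (l ≠ 0 ∨ m ≠ 0) ∧
      (∀ i ∈ s, l i * f i x = 0) ∧ (∀ i ∉ insert i₀ s, l i = 0) ∧
      ∀ v, ∑ i, l i * f' i v + m (G' v) = 0 := by
  let active : Set ι := insert i₀ {i ∈ s | f i x = 0}
  have hinactive : ∀ᶠ y in 𝓝 x, ∀ i ∈ s, i ∉ active → f i y < 0 := by
    refine eventually_all.2 fun i => eventually_imp_distrib_left.2 fun hi =>
      eventually_imp_distrib_left.2 fun hia => (hf i).continuousAt.eventually_lt_const ?_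
    exact (hx i hi).lt_of_ne fun h0 => hia (mem_insert_of_mem _ ⟨hi, h0⟩)
  have hnodescent : ∀ᶠ y in 𝓝 x, G y = G x → ∃ i : active, f i x ≤ f i y := by
    filter_upwards [hinactive, eventually_nhdsWithin_iff.1 hmin] with y hy hmin hGy
    by_contra! hlt
    refine (hmin ⟨hGy, fun i hi => ?_⟩).not_gt (hlt ⟨i₀, mem_insert _ _⟩)
    by_cases hia : i ∈ active
    · exact (hlt ⟨i, hia⟩).le.trans (hx i hi)
    · exact (hy i hi hia).le
  obtain ⟨l, m, hl, hlm, hsum⟩ :=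
    exists_multipliers_of_eventually_exists_le (fun i : active => hf i) hG hnodescent
  refine ⟨fun i => if h : i ∈ active then l ⟨i, h⟩ else 0, m, fun i => ?_, ?_, fun i hi => ?_,
    fun i hi => dif_neg fun h => hi (insert_subset_insert (sep_subset _ _) h), fun v => ?_⟩
  · dsimp only
    split_ifs with h
    exacts [hl ⟨i, h⟩, le_rfl]
  · refine hlm.imp_left fun hl0 h0 => hl0 (funext fun i => ?_)
    simpa using congrFun h0 i
  · dsimp only
    split_ifs with h
    · rw [(h.resolve_left fun h => hi₀ (h ▸ hi)).2, mul_zero]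
    · exact zero_mul _
  · refine (congrArg (· + m (G' v)) ?_).trans (hsum v)
    convert Finset.sum_congr_set active _ (fun i => l i * f' i v) (fun i h => ?_) fun i h => ?_
    · simp only [dif_pos h]
    · simp only [dif_neg h, zero_mul]

end FritzJohn

section FritzJohnPoints

theorem hasStrictFDerivAt_mvPolynomial_eval {σ : Type*} [Fintype σ] (f : MvPolynomial σ ℝ)
    (x : σ → ℝ) :
    HasStrictFDerivAt (fun y : σ → ℝ => eval y f)
      (∑ j, eval x (pderiv j f) • ContinuousLinearMap.proj (R := ℝ) (φ := fun _ => ℝ) j) x := by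
  induction f using MvPolynomial.induction_on with
  | C a => simpa using hasStrictFDerivAt_const (𝕜 := ℝ) a x
  | add f g hf hg =>
    simp only [map_add, add_smul, Finset.sum_add_distrib]
    exact hf.add hg
  | mul_X f i hf =>
    simp only [map_mul, eval_X]
    refine (hf.mul (hasStrictFDerivAt_apply (𝕜 := ℝ) i x)).congr_fderiv ?_
    ext v
    simp [pderiv_X, Pi.single_apply, apply_ite (eval x), add_mul, Finset.sum_add_distrib,
      Finset.mul_sum, mul_assoc]

variable {n p : ℕ} {f : Fin (p + 1) → MvPolynomial (Fin n) ℝ} {J : Set (Fin n)} {x : Fin n → ℝ}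
  {lam : Fin (p + 1) → ℝ} {nu : Fin n → ℝ} {mu : ℝ}

/-- The Fritz John conditions at `x` for minimising `f 0` subject to `f i ≤ 0`, `i ≠ 0`, on a
sphere of `ℝ^J` centred at the origin. Here `nu` and `mu` are the multipliers of the equations
`x k = 0`, `k ∉ J`, and of the sphere, all multipliers are extended by zero to the full index sets,
and they are not required to be nonzero. -/
structure IsFritzJohnPoint (f : Fin (p + 1) → MvPolynomial (Fin n) ℝ) (J : Set (Fin n))
    (x : Fin n → ℝ) (lam : Fin (p + 1) → ℝ) (nu : Fin n → ℝ) (mu : ℝ) : Prop where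
  feasible : ∀ i ≠ 0, eval x (f i) ≤ 0
  ne_zero_iff : ∀ j, x j ≠ 0 ↔ j ∈ J
  stationary : ∀ j, (∑ i, lam i * eval x (pderiv j (f i))) + nu j + mu * x j = 0
  complementary : ∀ i ≠ 0, lam i * eval x (f i) = 0
  lam_nonneg : ∀ i, 0 ≤ lam i
  lam_eq_zero : ∀ i ≠ 0, ¬ NotConstOn (f i) J → lam i = 0
  nu_eq_zero : ∀ k ∈ J, nu k = 0

theorem IsFritzJohnPoint.smul (h : IsFritzJohnPoint f J x lam nu mu) {c : ℝ} (hc : 0 ≤ c) :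
    IsFritzJohnPoint f J x (c • lam) (c • nu) (c * mu) where
  feasible := h.feasible
  ne_zero_iff := h.ne_zero_iff
  stationary j := by
    have := congrArg (c * ·) (h.stationary j)
    simpa [mul_add, Finset.mul_sum, mul_assoc] using this
  complementary i hi := by simp [mul_assoc, h.complementary i hi]
  lam_nonneg i := mul_nonneg hc (h.lam_nonneg i)
  lam_eq_zero i hi hf := by simp [h.lam_eq_zero i hi hf]
  nu_eq_zero k hk := by simp [h.nu_eq_zero k hk]

theorem IsFritzJohnPoint.exists_sum_sq_eq_one (h : IsFritzJohnPoint f J x lam nu mu)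
    (h0 : lam ≠ 0 ∨ nu ≠ 0 ∨ mu ≠ 0) :
    ∃ lam nu mu, IsFritzJohnPoint f J x lam nu mu ∧
      (∑ i, lam i ^ 2) + (∑ k, nu k ^ 2) + mu ^ 2 = 1 := by
  let N := (∑ i, lam i ^ 2) + (∑ k, nu k ^ 2) + mu ^ 2
  have hlam : 0 ≤ ∑ i, lam i ^ 2 := Finset.sum_nonneg fun i _ => sq_nonneg (lam i)
  have hnu : 0 ≤ ∑ k, nu k ^ 2 := Finset.sum_nonneg fun k _ => sq_nonneg (nu k)
  have hN : 0 < N := by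
    refine (by positivity : 0 ≤ N).lt_of_ne fun hN => ?_
    obtain ⟨hsum, hmu⟩ := (add_eq_zero_iff_of_nonneg (add_nonneg hlam hnu) (sq_nonneg mu)).1 hN.symm
    obtain ⟨hl, hn⟩ := (add_eq_zero_iff_of_nonneg hlam hnu).1 hsum
    simp only [Finset.sum_eq_zero_iff_of_nonneg, sq_nonneg, implies_true, Finset.mem_univ,
      pow_eq_zero_iff, ne_eq, OfNat.ofNat_ne_zero, not_false_eq_true, forall_const] at hl hn hmu
    exact h0.elim (· (funext hl)) (Or.elim · (· (funext hn)) (· hmu))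
  refine ⟨_, _, _, h.smul (inv_nonneg.2 N.sqrt_nonneg), ?_⟩
  simp only [Pi.smul_apply, smul_eq_mul, mul_pow, ← Finset.mul_sum, ← mul_add, inv_pow,
    Real.sq_sqrt hN.le]
  exact inv_mul_cancel₀ hN.ne'

theorem hasStrictFDerivAt_sum_sq (x : Fin n → ℝ) :
    HasStrictFDerivAt (fun y : Fin n → ℝ => ∑ j, y j ^ 2)
      (∑ j, (2 * x j) • ContinuousLinearMap.proj (R := ℝ) (φ := fun _ => ℝ) j) x :=
  .fun_sum fun j _ => by simpa using (hasStrictFDerivAt_apply (𝕜 := ℝ) j x).pow 2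

/-- The coordinate functions that vanish on `ℝ^J`, as one linear map. -/
def coordsOff (J : Set (Fin n)) : (Fin n → ℝ) →L[ℝ] ({k // k ∉ J} → ℝ) :=
  .pi fun k => .proj k.1

theorem exists_dual_prod_coordsOff_eq (m : Module.Dual ℝ (ℝ × ({k // k ∉ J} → ℝ))) :
    ∃ (nu : Fin n → ℝ) (mu : ℝ), (∀ k ∈ J, nu k = 0) ∧ (nu = 0 → mu = 0 → m = 0) ∧
      ∀ a j, m (a, coordsOff J (Pi.single j 1)) = nu j + mu * a := by
  refine ⟨fun k => m (0, coordsOff J (Pi.single k 1)), m (1, 0), fun k hk => ?_, fun hnu hmu => ?_,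
    fun a j => ?_⟩
  · have : coordsOff J (Pi.single k 1) = 0 :=
      funext fun i => Pi.single_eq_of_ne (fun h : i.1 = k => i.2 (h ▸ hk)) 1
    simp only [this, Prod.mk_zero_zero, map_zero]
  · refine LinearMap.prod_ext (LinearMap.ext_ring hmu)
      (LinearMap.pi_ext' fun k => LinearMap.ext_ring ?_)
    have : coordsOff J (Pi.single k.1 1) = Pi.single k 1 :=
      funext fun i => by simp [coordsOff, Pi.single_apply, Subtype.ext_iff]
    simpa [this] using congrFun hnu k
  · have : ((a, coordsOff J (Pi.single j 1)) : ℝ × ({k // k ∉ J} → ℝ)) =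
        (0, coordsOff J (Pi.single j 1)) + a • (1, 0) := by simp
    rw [this, map_add, map_smul, smul_eq_mul, mul_comm a]

theorem isLocalMinOn_of_isMinOn_sphere (hx : ∀ i ≠ 0, eval x (f i) ≤ 0) (hxJ : x ∈ RJ J)
    (hmin : IsMinOn (fun y => eval y (f 0))
      {y | (∀ i ≠ 0, eval y (f i) ≤ 0) ∧ euclNorm y = euclNorm x} x) :
    IsLocalMinOn (fun y => eval y (f 0)) {y | (∑ j, y j ^ 2, coordsOff J y) =
      (∑ j, x j ^ 2, coordsOff J x) ∧ ∀ i ∈ {i | i ≠ 0 ∧ NotConstOn (f i) J}, eval y (f i) ≤ 0}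
      x := by
  refine (hmin.on_subset ?_).localize
  rintro y ⟨hGy, hy⟩
  obtain ⟨hnorm, hoff⟩ := Prod.mk.inj hGy
  refine ⟨fun i hi => ?_, congrArg Real.sqrt hnorm⟩
  by_cases hfi : NotConstOn (f i) J
  · exact hy i ⟨hi, hfi⟩
  · have hyJ : y ∈ RJ J := fun j hj => (congrFun hoff ⟨j, hj⟩).trans (hxJ j hj)
    exact (not_not.1 fun hne => hfi ⟨y, hyJ, x, hxJ, hne⟩).trans_le (hx i hi)

theorem exists_isFritzJohnPoint_of_isMinOn_sphere (hx : ∀ i ≠ 0, eval x (f i) ≤ 0)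
    (hxJ : ∀ j, x j ≠ 0 ↔ j ∈ J) (hmin : IsMinOn (fun y => eval y (f 0))
      {y | (∀ i ≠ 0, eval y (f i) ≤ 0) ∧ euclNorm y = euclNorm x} x) :
    ∃ lam nu mu, IsFritzJohnPoint f J x lam nu mu ∧
      (∑ i, lam i ^ 2) + (∑ k, nu k ^ 2) + mu ^ 2 = 1 := by
  obtain ⟨lam, m, hlam, hne, hcomp, hzero, hsum⟩ := exists_fritzJohn_multipliers
    (f := fun i y => eval y (f i)) (fun h => h.1 rfl)
    (fun i => (hasStrictFDerivAt_mvPolynomial_eval (f i) x).hasFDerivAt)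
    ((hasStrictFDerivAt_sum_sq x).prodMk (coordsOff J).hasStrictFDerivAt)
    (fun i hi => hx i hi.1)
    (isLocalMinOn_of_isMinOn_sphere hx (fun j hj => of_not_not fun h => hj ((hxJ j).1 h)) hmin)
  obtain ⟨nu, mu, hnu, hm0, hm⟩ := exists_dual_prod_coordsOff_eq m
  have hlam_zero (i) (hi : i ≠ 0) (hfi : ¬ NotConstOn (f i) J) : lam i = 0 :=
    hzero i fun h => h.elim hi fun h => hfi h.2
  refine IsFritzJohnPoint.exists_sum_sq_eq_one (lam := lam) (nu := nu) (mu := mu * 2)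
    ⟨hx, hxJ, fun j => ?_, fun i hi => ?_, hlam, hlam_zero, hnu⟩ ?_
  · have hsum_j : (∑ i, lam i * eval x (pderiv j (f i))) +
        m (2 * x j, coordsOff J (Pi.single j 1)) = 0 := by
      simpa [Pi.single_apply] using hsum (Pi.single j 1)
    rw [← hsum_j, hm]
    ring
  · by_cases hfi : NotConstOn (f i) J
    · exact hcomp i ⟨hi, hfi⟩
    · rw [hlam_zero i hi hfi, zero_mul]
  · by_contra! h0
    exact hne.elim (· h0.1) (· (hm0 h0.2.1 (by simpa using h0.2.2)))

end FritzJohnPoints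

section MinimizationAtInfinity

theorem frequently_exists_isMinOn_fiber {E : Type*} [TopologicalSpace E] {S : Set E}
    (hS : IsClosed S) {f g : E → ℝ} (hf : Continuous f) (hg : Continuous g)
    (hg_lim : Tendsto g (cocompact E) atTop) {c : ℝ} (hc : IsGLB (f '' S) c) (hcS : c ∉ f '' S) :
    ∃ᶠ t in 𝓝[>] 0, ∃ x ∈ S, f x = c + t ∧ IsMinOn f {y ∈ S | g y = g x} x := by
  rw [frequently_iff]
  intro U hU
  obtain ⟨δ, hδ, hU⟩ := mem_nhdsGT_iff_exists_Ioo_subset.1 hU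
  obtain ⟨_, ⟨x₀, hx₀, rfl⟩, -, hx₀δ⟩ := hc.exists_between' hcS (lt_add_of_pos_right c hδ)
  have hfar : ∀ᶠ y in cocompact E ⊓ 𝓟 {y ∈ S | g y = g x₀}, f x₀ ≤ f y := by
    rw [eventually_inf_principal]
    filter_upwards [hg_lim.eventually_gt_atTop (g x₀)] with y hy hy'
    exact absurd hy'.2 hy.ne'
  obtain ⟨x, ⟨hxS, hgx⟩, hmin⟩ := hf.continuousOn.exists_isMinOn'
    (hS.inter (isClosed_eq hg continuous_const)) (show x₀ ∈ _ from ⟨hx₀, rfl⟩) hfar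
  have hcx : c < f x := (hc.1 (mem_image_of_mem f hxS)).lt_of_ne fun h => hcS ⟨x, hxS, h.symm⟩
  have hxδ : f x < c + δ := (hmin (show x₀ ∈ _ from ⟨hx₀, rfl⟩)).trans_lt hx₀δ
  refine ⟨f x - c, hU ⟨sub_pos.2 hcx, sub_lt_iff_lt_add'.2 hxδ⟩, x, hxS, by ring, ?_⟩
  rwa [hgx]

theorem tendsto_cocompact_of_tendsto_notMem_image {α E : Type*} [TopologicalSpace E] {S : Set E}
    (hS : IsClosed S) {f : E → ℝ} (hf : Continuous f) {c : ℝ} (hcS : c ∉ f '' S) {l : Filter α}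
    {φ : α → E} (hφS : ∀ᶠ t in l, φ t ∈ S) (hφ : Tendsto (fun t => f (φ t)) l (𝓝 c)) :
    Tendsto φ l (cocompact E) := by
  refine (hasBasis_cocompact.tendsto_right_iff).2 fun K hK => ?_
  have hclosed : IsClosed (f '' (K ∩ S)) := ((hK.inter_right hS).image hf).isClosed
  have hc : c ∉ f '' (K ∩ S) := fun h => hcS (image_mono inter_subset_right h)
  filter_upwards [hφS, hφ.eventually (hclosed.isOpen_compl.mem_nhds hc)] with t htS ht htK
  exact ht ⟨φ t, ⟨htK, htS⟩, rfl⟩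

theorem euclNorm_eq_norm_toLp {n : ℕ} (x : Fin n → ℝ) : euclNorm x = ‖WithLp.toLp 2 x‖ := by
  simp [euclNorm, EuclideanSpace.norm_eq]

theorem continuous_euclNorm {n : ℕ} : Continuous (euclNorm (k := n)) := by
  unfold euclNorm
  fun_prop

theorem tendsto_euclNorm_cocompact_atTop (n : ℕ) :
    Tendsto (euclNorm (k := n)) (cocompact _) atTop := by
  simp only [funext euclNorm_eq_norm_toLp]
  exact (tendsto_norm_cocompact_atTop (E := EuclideanSpace ℝ (Fin n))).comp
    (PiLp.homeomorph 2 _).symm.isClosedEmbedding.tendsto_cocompact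

variable {n p : ℕ} {f : Fin (p + 1) → MvPolynomial (Fin n) ℝ}

theorem isClosed_setOf_eval_nonpos (f : Fin (p + 1) → MvPolynomial (Fin n) ℝ) :
    IsClosed {x | ∀ i ≠ 0, eval x (f i) ≤ 0} := by
  simp only [ofPred_forall]
  exact isClosed_iInter fun i => isClosed_iInter fun _ =>
    isClosed_le (continuous_eval (f i)) continuous_const

theorem exists_frequently_isFritzJohnPoint {c : ℝ}
    (hc : IsGLB ((fun x => eval x (f 0)) '' {x | ∀ i ≠ 0, eval x (f i) ≤ 0}) c)
    (hc_notMem : c ∉ (fun x => eval x (f 0)) '' {x | ∀ i ≠ 0, eval x (f i) ≤ 0}) :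
    ∃ J, ∃ᶠ t in 𝓝[>] 0, ∃ x lam nu mu, eval x (f 0) = c + t ∧
      IsFritzJohnPoint f J x lam nu mu ∧
      (∑ i, lam i ^ 2) + (∑ k, nu k ^ 2) + mu ^ 2 = 1 := by
  rw [← frequently_exists]
  refine (frequently_exists_isMinOn_fiber (isClosed_setOf_eval_nonpos f) (continuous_eval (f 0))
    continuous_euclNorm (tendsto_euclNorm_cocompact_atTop n) hc hc_notMem).mono ?_
  rintro t ⟨x, hx, hxt, hmin⟩
  obtain ⟨lam, nu, mu, hcrit⟩ :=
    exists_isFritzJohnPoint_of_isMinOn_sphere (J := {j | x j ≠ 0}) hx (fun _ => Iff.rfl) hmin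
  exact ⟨_, x, lam, nu, mu, hxt, hcrit⟩

end MinimizationAtInfinity

section SemialgebraicSets

variable {m : ℕ}

theorem sign_eq_iff_and (r : ℝ) (s : SignType) :
    SignType.sign r = s ↔
      (if s = 0 then r else 0) = 0 ∧ 0 < if s = 0 then 1 else (s : ℝ) * r := by
  cases s <;> simp [sign_eq_zero_iff, sign_eq_one_iff, sign_eq_neg_one_iff]

theorem basicSA_setOf_forall_sign_eq {ι : Type*} [Finite ι] (a : ι → MvPolynomial (Fin m) ℝ)
    (s : ι → SignType) : BasicSA {x | ∀ i, SignType.sign (eval x (a i)) = s i} := by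
  obtain ⟨k, ⟨e⟩⟩ := Finite.exists_equiv_fin ι
  refine ⟨k, k, fun i => if s (e.symm i) = 0 then a (e.symm i) else 0,
    fun i => if s (e.symm i) = 0 then 1 else C (s (e.symm i) : ℝ) * a (e.symm i), ?_⟩
  ext x
  simp only [mem_ofPred_eq, sign_eq_iff_and, forall_and, ← e.symm.forall_congr_right]
  simp only [apply_ite (eval x), map_zero, map_one, map_mul, eval_C]

theorem SemialgebraicPred.isSA {P : (Fin m → ℝ) → Prop} (hP : SemialgebraicPred P) :
    IsSA {x | P x} := by
  obtain ⟨M, hM, T, hT⟩ := hP.exists_sign_normal_form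
  choose F hF using fun a : M => (hM a.1 a.2).exists_eq_mvPolynomial_eval
  obtain ⟨N, ⟨e⟩⟩ := Finite.exists_equiv_fin T
  refine ⟨N, fun i => {x | ∀ a, SignType.sign (eval x (F a)) = (e.symm i).1 a},
    fun i => basicSA_setOf_forall_sign_eq F _, ?_⟩
  ext x
  simp only [mem_ofPred_eq, mem_iUnion, hT, hF]
  exact ⟨fun h => ⟨e ⟨_, h⟩, fun a => by rw [e.symm_apply_apply]⟩,
    fun ⟨i, hi⟩ => funext hi ▸ (e.symm i).2⟩

theorem SemialgebraicPred.mem_Ioo {E : Type*} [AddCommGroup E] [Module ℝ E] {g : E → ℝ}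
    (hg : IsPolynomialMap g) (a b : ℝ) : SemialgebraicPred fun x => g x ∈ Ioo a b :=
  (lt (.const a) hg).and (lt hg (.const b))

theorem SemialgebraicMap.apply {E ι : Type*} [AddCommGroup E] [Module ℝ E]
    [FiniteDimensional ℝ E] [Finite ι] {φ : E → ι → ℝ} (hφ : SemialgebraicMap φ) (i : ι) :
    SemialgebraicMap fun x => φ x i :=
  (IsPolynomialMap.apply i).semialgebraicMap.comp hφ

theorem SemialgebraicMap.isSACurve {n : ℕ} {φ : ℝ → Fin n → ℝ} (hφ : SemialgebraicMap φ)
    (a b : ℝ) : IsSACurve (Ioo a b) φ := by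
  have hgraph : SemialgebraicPred fun z : Fin (n + 1) → ℝ => (fun j => z j.succ) = φ (z 0) :=
    SemialgebraicPred.comp hφ (φ := fun z : Fin (n + 1) → ℝ => (z 0, fun j : Fin n => z j.succ))
      (by fun_prop)
  simp only [funext_iff] at hgraph
  exact ((SemialgebraicPred.mem_Ioo (.apply 0) a b).and hgraph).isSA

theorem SemialgebraicMap.isSAFunOn {f : ℝ → ℝ} (hf : SemialgebraicMap f) (a b : ℝ) :
    IsSAFunOn (Ioo a b) f :=
  ((SemialgebraicPred.mem_Ioo (.apply 0) a b).and
    (SemialgebraicPred.comp hf (φ := fun z : Fin 2 → ℝ => (z 0, z 1)) (by fun_prop))).isSA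

end SemialgebraicSets

section FritzJohnCurves

variable {n p : ℕ} {f : Fin (p + 1) → MvPolynomial (Fin n) ℝ} {J : Set (Fin n)} {c : ℝ}

theorem semialgebraicPred_isFritzJohnPoint (f : Fin (p + 1) → MvPolynomial (Fin n) ℝ)
    (J : Set (Fin n)) :
    SemialgebraicPred fun z : (Fin n → ℝ) × (Fin (p + 1) → ℝ) × (Fin n → ℝ) × ℝ =>
      IsFritzJohnPoint f J z.1 z.2.1 z.2.2.1 z.2.2.2 := by
  have hiff (x lam nu mu) : IsFritzJohnPoint f J x lam nu mu ↔
      (∀ i, i ≠ 0 → eval x (f i) ≤ 0) ∧ (∀ j, (x j ≠ 0 → j ∈ J) ∧ (j ∈ J → x j ≠ 0)) ∧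
      (∀ j, (∑ i, lam i * eval x (pderiv j (f i))) + nu j + mu * x j = 0) ∧
      (∀ i, i ≠ 0 → lam i * eval x (f i) = 0) ∧ (∀ i, 0 ≤ lam i) ∧
      (∀ i, (i ≠ 0 ∧ ¬NotConstOn (f i) J) → lam i = 0) ∧ ∀ k, k ∈ J → nu k = 0 :=
    ⟨fun ⟨h₁, h₂, h₃, h₄, h₅, h₆, h₇⟩ =>
      ⟨h₁, fun j => iff_def.1 (h₂ j), h₃, h₄, h₅, fun i hi => h₆ i hi.1 hi.2, h₇⟩,
    fun ⟨h₁, h₂, h₃, h₄, h₅, h₆, h₇⟩ =>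
      ⟨h₁, fun j => iff_def.2 (h₂ j), h₃, h₄, h₅, fun i h h' => h₆ i ⟨h, h'⟩, h₇⟩⟩
  simp only [hiff]
  refine .and (.forall_finite fun i => (SemialgebraicPred.const _).imp (.le ?_ ?_)) <|
    .and (.forall_finite fun j => ((SemialgebraicPred.eq ?_ ?_).not.imp (.const _)).and
      ((SemialgebraicPred.const _).imp (SemialgebraicPred.eq ?_ ?_).not)) <|
    .and (.forall_finite fun j => .eq ?_ ?_) <|
    .and (.forall_finite fun i => (SemialgebraicPred.const _).imp (.eq ?_ ?_)) <|
    .and (.forall_finite fun i => .le ?_ ?_) <|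
    .and (.forall_finite fun i => (SemialgebraicPred.const _).imp (.eq ?_ ?_)) <|
    .forall_finite fun k => (SemialgebraicPred.const _).imp (.eq ?_ ?_)
  all_goals fun_prop

/-- A curve of Fritz John points with support `J`, parametrised on `(0, ε)` by the excess of the
objective `f 0` over `c`, together with unit multiplier vectors. -/
structure IsFritzJohnCurve (f : Fin (p + 1) → MvPolynomial (Fin n) ℝ) (c : ℝ) (J : Set (Fin n))
    (ε : ℝ) (φ : ℝ → Fin n → ℝ) (lam : ℝ → Fin (p + 1) → ℝ) (nu : ℝ → Fin n → ℝ)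
    (mu : ℝ → ℝ) : Prop where
  pos : 0 < ε
  eval_eq : ∀ t ∈ Ioo 0 ε, eval (φ t) (f 0) = c + t
  isFritzJohnPoint : ∀ t ∈ Ioo 0 ε, IsFritzJohnPoint f J (φ t) (lam t) (nu t) (mu t)
  sum_sq_eq_one : ∀ t ∈ Ioo 0 ε, (∑ i, lam t i ^ 2) + (∑ k, nu t k ^ 2) + mu t ^ 2 = 1

namespace IsFritzJohnCurve

variable {ε : ℝ} {φ : ℝ → Fin n → ℝ} {lam : ℝ → Fin (p + 1) → ℝ} {nu : ℝ → Fin n → ℝ}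
  {mu : ℝ → ℝ} {t : ℝ}

theorem support_eq (h : IsFritzJohnCurve f c J ε φ lam nu mu) :
    J = {j | ∃ t ∈ Ioo 0 ε, φ t j ≠ 0} := by
  have hmid : ε / 2 ∈ Ioo 0 ε := ⟨half_pos h.pos, half_lt_self h.pos⟩
  ext j
  exact ⟨fun hj => ⟨ε / 2, hmid, ((h.isFritzJohnPoint _ hmid).ne_zero_iff j).2 hj⟩,
    fun ⟨t, ht, hj⟩ => ((h.isFritzJohnPoint t ht).ne_zero_iff j).1 hj⟩

theorem apply_eq_zero (h : IsFritzJohnCurve f c J ε φ lam nu mu) (ht : t ∈ Ioo 0 ε) {k : Fin n}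
    (hk : k ∉ J) : φ t k = 0 :=
  not_not.1 (mt ((h.isFritzJohnPoint _ ht).ne_zero_iff k).1 hk)

theorem support_nonempty (h : IsFritzJohnCurve f c J ε φ lam nu mu) : J.Nonempty := by
  by_contra! hJ
  have hφ {t} (ht : t ∈ Ioo 0 ε) : φ t = 0 :=
    funext fun j => h.apply_eq_zero ht (hJ ▸ notMem_empty j)
  have h₂ : ε / 2 ∈ Ioo 0 ε := ⟨half_pos h.pos, half_lt_self h.pos⟩
  have h₃ : ε / 3 ∈ Ioo 0 ε := ⟨div_pos h.pos three_pos, div_lt_self h.pos (by norm_num)⟩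
  have heq : c + ε / 2 = c + ε / 3 := by rw [← h.eval_eq _ h₂, ← h.eval_eq _ h₃, hφ h₂, hφ h₃]
  linarith [h.pos]

theorem tendsto_eval (h : IsFritzJohnCurve f c J ε φ lam nu mu) :
    Tendsto (fun t => eval (φ t) (f 0)) (𝓝[Ioo 0 ε] 0) (𝓝 c) := by
  have hlim : Tendsto (fun t => c + t) (𝓝[Ioo 0 ε] 0) (𝓝 c) :=
    tendsto_nhdsWithin_of_tendsto_nhds (by simpa using (continuous_const_add c).tendsto 0)
  exact hlim.congr' (eventually_mem_nhdsWithin.mono fun t ht => (h.eval_eq t ht).symm)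

theorem tendsto_euclNorm (h : IsFritzJohnCurve f c J ε φ lam nu mu)
    (hc : c ∉ (fun x => eval x (f 0)) '' {x | ∀ i ≠ 0, eval x (f i) ≤ 0}) :
    Tendsto (fun t => euclNorm (φ t)) (𝓝[Ioo 0 ε] 0) atTop :=
  (tendsto_euclNorm_cocompact_atTop n).comp <|
    tendsto_cocompact_of_tendsto_notMem_image (isClosed_setOf_eval_nonpos f)
      (continuous_eval (f 0)) hc
      (eventually_mem_nhdsWithin.mono fun _ ht => (h.isFritzJohnPoint _ ht).feasible) h.tendsto_eval

end IsFritzJohnCurve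

theorem exists_isFritzJohnCurve
    (hc : IsGLB ((fun x => eval x (f 0)) '' {x | ∀ i ≠ 0, eval x (f i) ≤ 0}) c)
    (hc_notMem : c ∉ (fun x => eval x (f 0)) '' {x | ∀ i ≠ 0, eval x (f i) ≤ 0}) (r : ℕ∞) :
    ∃ J ε φ lam nu mu,
      (SemialgebraicMap φ ∧ ContDiffOn ℝ r φ (Ioo 0 ε)) ∧
      (SemialgebraicMap lam ∧ ContDiffOn ℝ r lam (Ioo 0 ε)) ∧
      (SemialgebraicMap nu ∧ ContDiffOn ℝ r nu (Ioo 0 ε)) ∧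
      (SemialgebraicMap mu ∧ ContDiffOn ℝ r mu (Ioo 0 ε)) ∧
      IsFritzJohnCurve f c J ε φ lam nu mu := by
  obtain ⟨J, hJ⟩ := exists_frequently_isFritzJohnPoint hc hc_notMem
  let P (t : ℝ) (v : (Fin n → ℝ) × (Fin (p + 1) → ℝ) × (Fin n → ℝ) × ℝ) : Prop :=
    eval v.1 (f 0) = c + t ∧ IsFritzJohnPoint f J v.1 v.2.1 v.2.2.1 v.2.2.2 ∧
      (∑ i, v.2.1 i ^ 2) + (∑ k, v.2.2.1 k ^ 2) + v.2.2.2 ^ 2 = 1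
  have hP : SemialgebraicPred fun z : ℝ × _ => P z.1 z.2 :=
    (SemialgebraicPred.eq (by fun_prop) (by fun_prop)).and
      (((semialgebraicPred_isFritzJohnPoint f J).comp .snd).and
        (.eq (by fun_prop) (by fun_prop)))
  obtain ⟨ε, hε, g, hg, hgr, hgP⟩ := hP.exists_contDiffOn_section
    (hJ.mono fun t ⟨x, lam, nu, mu, h⟩ => ⟨(x, lam, nu, mu), h⟩) r
  exact ⟨J, ε, fun t => (g t).1, fun t => (g t).2.1, fun t => (g t).2.2.1,
    fun t => (g t).2.2.2, ⟨by fun_prop, hgr.fst⟩, ⟨by fun_prop, hgr.snd.fst⟩,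
    ⟨by fun_prop, hgr.snd.snd.fst⟩, ⟨by fun_prop, hgr.snd.snd.snd⟩,
    ⟨hε, fun t ht => (hgP t ht).1, fun t ht => (hgP t ht).2.1, fun t ht => (hgP t ht).2.2⟩⟩

end FritzJohnCurves

/-- The curve at infinity constructed in the proof of Theorem 3.1, satisfying
conditions (c1)–(c9). Here the multiplier curves `λ_i` (for `i ∈ I₁ ∪ {0}`) and `ν_k`
(for `k ∉ J`) are extended by zero to all indices. -/
theorem curve_at_infinity {n p : ℕ} (f : Fin (p + 1) → MvPolynomial (Fin n) ℝ)
    (hnc : ∀ i, ∃ x y : Fin n → ℝ, eval x (f i) ≠ eval y (f i))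
    (S : Set (Fin n → ℝ))
    (hS : S = {x | ∀ i, i ≠ 0 → eval x (f i) ≤ 0})
    (hSne : S.Nonempty)
    (hbdd : BddBelow ((fun x => eval x (f 0)) '' S))
    (fstar : ℝ) (hfstar : fstar = sInf ((fun x => eval x (f 0)) '' S))
    (hnotatt : ∀ x ∈ S, eval x (f 0) ≠ fstar) :
    ∃ (J : Set (Fin n)) (ε : ℝ) (φ : ℝ → Fin n → ℝ)
      (lam : ℝ → Fin (p + 1) → ℝ) (nu : ℝ → Fin n → ℝ) (mu : ℝ → ℝ),
      J.Nonempty ∧ 0 < ε ∧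
      -- the curves are smooth and semialgebraic on `(0, ε)`
      ContDiffOn ℝ (⊤ : ℕ∞) φ (Ioo 0 ε) ∧ IsSACurve (Ioo 0 ε) φ ∧
      (∀ i : Fin (p + 1), ContDiffOn ℝ (⊤ : ℕ∞) (fun t => lam t i) (Ioo 0 ε) ∧
        IsSAFunOn (Ioo 0 ε) (fun t => lam t i)) ∧
      (∀ k : Fin n, ContDiffOn ℝ (⊤ : ℕ∞) (fun t => nu t k) (Ioo 0 ε) ∧
        IsSAFunOn (Ioo 0 ε) (fun t => nu t k)) ∧
      (ContDiffOn ℝ (⊤ : ℕ∞) mu (Ioo 0 ε) ∧ IsSAFunOn (Ioo 0 ε) mu) ∧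
      -- `λ_i` is carried by `I₁ ∪ {0}` and `ν_k` by the complement of `J`
      (∀ i : Fin (p + 1), i ≠ 0 → ¬ NotConstOn (f i) J →
        ∀ t ∈ Ioo (0 : ℝ) ε, lam t i = 0) ∧
      (∀ k ∈ J, ∀ t ∈ Ioo (0 : ℝ) ε, nu t k = 0) ∧
      -- (c1)
      Tendsto (fun t => euclNorm (φ t)) (nhdsWithin 0 (Ioo 0 ε)) atTop ∧
      -- (c2)
      Tendsto (fun t => eval (φ t) (f 0)) (nhdsWithin 0 (Ioo 0 ε)) (nhds fstar) ∧
      -- (c3)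
      (∀ t ∈ Ioo (0 : ℝ) ε, ∀ i, i ≠ 0 → NotConstOn (f i) J → eval (φ t) (f i) ≤ 0) ∧
      -- (c4)
      J = {j : Fin n | ∃ t ∈ Ioo (0 : ℝ) ε, φ t j ≠ 0} ∧
      -- (c5)
      (∀ t ∈ Ioo (0 : ℝ) ε, ∀ k ∉ J, φ t k = 0) ∧
      -- (c6)
      (∀ t ∈ Ioo (0 : ℝ) ε, ∀ j : Fin n,
        (∑ i, lam t i * eval (φ t) (pderiv j (f i))) + nu t j + mu t * φ t j = 0) ∧
      -- (c7)
      (∀ t ∈ Ioo (0 : ℝ) ε, ∀ i, i ≠ 0 → NotConstOn (f i) J →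
        lam t i * eval (φ t) (f i) = 0) ∧
      -- (c8)
      (∀ t ∈ Ioo (0 : ℝ) ε, ∀ i, 0 ≤ lam t i) ∧
      -- (c9)
      (∀ t ∈ Ioo (0 : ℝ) ε,
        Real.sqrt ((∑ i, lam t i ^ 2) + (∑ k, nu t k ^ 2) + mu t ^ 2) = 1) := by
  subst hS
  have hglb : IsGLB _ fstar := hfstar ▸ isGLB_csInf (hSne.image _) hbdd
  have hnotMem : fstar ∉ (fun x => eval x (f 0)) '' {x | ∀ i ≠ 0, eval x (f i) ≤ 0} :=
    fun ⟨x, hx, hxf⟩ => hnotatt x hx hxf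
  obtain ⟨J, ε, φ, lam, nu, mu, ⟨hφ, hφ'⟩, ⟨hlam, hlam'⟩, ⟨hnu, hnu'⟩, ⟨hmu, hmu'⟩, h⟩ :=
    exists_isFritzJohnCurve hglb hnotMem ⊤
  have hFJ := h.isFritzJohnPoint
  exact ⟨J, ε, φ, lam, nu, mu, h.support_nonempty, h.pos, hφ', hφ.isSACurve 0 ε,
    fun i => ⟨contDiffOn_pi.1 hlam' i, (hlam.apply i).isSAFunOn 0 ε⟩,
    fun k => ⟨contDiffOn_pi.1 hnu' k, (hnu.apply k).isSAFunOn 0 ε⟩,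
    ⟨hmu', hmu.isSAFunOn 0 ε⟩,
    fun i hi hf t ht => (hFJ t ht).lam_eq_zero i hi hf,
    fun k hk t ht => (hFJ t ht).nu_eq_zero k hk,
    h.tendsto_euclNorm hnotMem, h.tendsto_eval,
    fun t ht i hi _ => (hFJ t ht).feasible i hi,
    h.support_eq, fun t ht k hk => h.apply_eq_zero ht hk,
    fun t ht => (hFJ t ht).stationary,
    fun t ht i hi _ => (hFJ t ht).complementary i hi,
    fun t ht => (hFJ t ht).lam_nonneg,
    fun t ht => by rw [h.sum_sq_eq_one t ht, Real.sqrt_one]⟩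
end
end

section
/- (Curve Selection Lemma at infinity) Let A ⊆ ℝⁿ be a semialgebraic set and let f := (f₁, …, f_p) : ℝⁿ → ℝ^p be a semialgebraic map. Assume there exists a sequence {x^ℓ} with x^ℓ ∈ A, ‖x^ℓ‖ → ∞ as ℓ → ∞, and f(x^ℓ) → y ∈ (ℝ ∪ {±∞})^p as ℓ → ∞. Then there exists a smooth semialgebraic curve φ : (0, ε) → ℝⁿ such that φ(t) ∈ A for all t ∈ (0, ε), ‖φ(t)‖ → ∞ as t → 0⁺, and f(φ(t)) → y as t → 0⁺. -/
open MvPolynomial Set Filter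
open scoped Classical

noncomputable section

/-!
Adjoin to `x` the values `w = F x` and a parameter `t` measuring how close `‖x‖` is to `∞` and `w`
to `y`. The triples `(t, x, w)` form a semialgebraic set whose fibres over small `t > 0` are
nonempty, and the task is to choose a point of the fibre as a smooth semialgebraic function of `t`.

After adding a variable for each strict inequality, a basic semialgebraic set is the projection of
the zero set of a single polynomial `P ≥ 0`. For `s → ∞` the minimizers of `s P + ∑ v_i ^ m` with
`m` even and larger than `deg P` accumulate at a zero of `P`. Their critical point equations have
leading part `v_i ^ (m - 1)`, so elimination is finite and, in the limit, every coordinate of that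
zero is a root of a nonzero polynomial over `ℝ[t]` which does not depend on the fibre. By Thom's
lemma the real roots of such a polynomial are, for `t` near `0`, finitely many Nash functions,
separated by the signs of the derivatives. Some choice of one branch for each coordinate hence
satisfies `P = 0` for arbitrarily small `t`, and then, by algebraicity, for all small `t`.
-/

open scoped Topology Polynomial ContDiff

section Semialgebraic

variable {m : ℕ}

theorem basicSA_setOf {ι κ : Type*} [Finite ι] [Finite κ] (g : ι → MvPolynomial (Fin m) ℝ)
    (h : κ → MvPolynomial (Fin m) ℝ) :
    BasicSA {x | (∀ i, eval x (g i) = 0) ∧ ∀ i, 0 < eval x (h i)} := by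
  refine ⟨Nat.card ι, Nat.card κ, g ∘ (Finite.equivFin ι).symm, h ∘ (Finite.equivFin κ).symm, ?_⟩
  ext x
  exact and_congr ((Finite.equivFin ι).symm.forall_congr_right (q := fun i ↦ eval x (g i) = 0)).symm
    ((Finite.equivFin κ).symm.forall_congr_right (q := fun i ↦ 0 < eval x (h i))).symm

theorem basicSA_setOf_pos {κ : Type*} [Finite κ] (h : κ → MvPolynomial (Fin m) ℝ) :
    BasicSA {x | ∀ i, 0 < eval x (h i)} := by
  simpa using basicSA_setOf (Empty.elim : Empty → _) h

theorem BasicSA.iInter {ι : Type*} [Finite ι] {A : ι → Set (Fin m → ℝ)}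
    (hA : ∀ i, BasicSA (A i)) : BasicSA (⋂ i, A i) := by
  choose k l g h hA using hA
  convert basicSA_setOf (fun i : Σ i, Fin (k i) ↦ g i.1 i.2) (fun i : Σ i, Fin (l i) ↦ h i.1 i.2)
  ext x
  simp [hA, forall_and, Sigma.forall]

theorem BasicSA.preimage {k : ℕ} {A : Set (Fin m → ℝ)} (hA : BasicSA A)
    (φ : Fin m → MvPolynomial (Fin k) ℝ) : BasicSA ((fun x j ↦ eval x (φ j)) ⁻¹' A) := by
  obtain ⟨_, _, g, h, rfl⟩ := hA
  have heval (x : Fin k → ℝ) (p : MvPolynomial (Fin m) ℝ) :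
      eval (fun j ↦ eval x (φ j)) p = eval x (bind₁ φ p) :=
    (eval₂Hom_bind₁ _ x φ p).symm
  convert basicSA_setOf (fun i ↦ bind₁ φ (g i)) (fun i ↦ bind₁ φ (h i))
  simp [heval]

theorem isSA_iUnion {ι : Type*} [Finite ι] {A : ι → Set (Fin m → ℝ)} (hA : ∀ i, BasicSA (A i)) :
    IsSA (⋃ i, A i) :=
  ⟨Nat.card ι, A ∘ (Finite.equivFin ι).symm, fun _ ↦ hA _,
    ((Finite.equivFin ι).symm.surjective.iUnion_comp A).symm⟩

theorem BasicSA.isSA {A : Set (Fin m → ℝ)} (hA : BasicSA A) : IsSA A := by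
  simpa only [iUnion_const] using isSA_iUnion fun _ : Unit ↦ hA

theorem IsSA.iInter {ι : Type*} [Finite ι] {A : ι → Set (Fin m → ℝ)} (hA : ∀ i, IsSA (A i)) :
    IsSA (⋂ i, A i) := by
  choose N B hB hAB using hA
  have hdistrib : ⋂ i, A i = ⋃ c : ∀ i, Fin (N i), ⋂ i, B i (c i) := by
    simp only [hAB]
    exact iInf_iSup_eq
  exact hdistrib ▸ isSA_iUnion fun c ↦ BasicSA.iInter fun i ↦ hB i (c i)

theorem IsSA.inter {A B : Set (Fin m → ℝ)} (hA : IsSA A) (hB : IsSA B) : IsSA (A ∩ B) := by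
  rw [inter_eq_iInter]
  exact IsSA.iInter (Bool.rec hB hA)

theorem IsSA.preimage {k : ℕ} {A : Set (Fin m → ℝ)} (hA : IsSA A)
    (φ : Fin m → MvPolynomial (Fin k) ℝ) : IsSA ((fun x j ↦ eval x (φ j)) ⁻¹' A) := by
  obtain ⟨_, B, hB, rfl⟩ := hA
  rw [preimage_iUnion]
  exact isSA_iUnion fun i ↦ (hB i).preimage φ

theorem isSA_setOf_mem_Ioo (i : Fin m) (a b : ℝ) : IsSA {x : Fin m → ℝ | x i ∈ Ioo a b} := by
  convert (basicSA_setOf_pos ![X i - C a, C b - X i]).isSA using 2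
  simp [Fin.forall_fin_two]

theorem IsSAFunOn.mono_Ioo {D : Set ℝ} {ξ : ℝ → ℝ} (hξ : IsSAFunOn D ξ) {a b : ℝ}
    (hab : Ioo a b ⊆ D) : IsSAFunOn (Ioo a b) ξ := by
  rw [IsSAFunOn]
  convert (isSA_setOf_mem_Ioo 0 a b).inter hξ using 1
  ext z
  exact ⟨fun hz ↦ ⟨hz.1, hab hz.1, hz.2⟩, fun hz ↦ ⟨hz.1, hz.2.2⟩⟩

theorem isSACurve_Ioo_of_forall {n : ℕ} {a b : ℝ} {φ : ℝ → Fin n → ℝ}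
    (hφ : ∀ j, IsSAFunOn (Ioo a b) (φ · j)) : IsSACurve (Ioo a b) φ := by
  rw [IsSACurve]
  convert (isSA_setOf_mem_Ioo 0 a b).inter
    (IsSA.iInter fun j : Fin n ↦ (hφ j).preimage ![X 0, X j.succ]) using 1
  ext z
  simp +contextual [and_congr_right_iff]

/-- Nash functions of one variable: smooth semialgebraic functions on `D`. -/
def IsNashOn (D : Set ℝ) (ξ : ℝ → ℝ) : Prop :=
  ContDiffOn ℝ ∞ ξ D ∧ IsSAFunOn D ξ

theorem IsNashOn.mono_Ioo {D : Set ℝ} {ξ : ℝ → ℝ} (hξ : IsNashOn D ξ) {a b : ℝ}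
    (hab : Ioo a b ⊆ D) : IsNashOn (Ioo a b) ξ :=
  ⟨hξ.1.mono hab, hξ.2.mono_Ioo hab⟩

end Semialgebraic

section Elimination

variable {R S τ : Type*} [CommRing R] [CommRing S]

theorem totalDegree_pderiv_le {R : Type*} [CommSemiring R] (j : τ) (p : MvPolynomial τ R) :
    (pderiv j p).totalDegree ≤ p.totalDegree := by
  conv_lhs => rw [p.as_sum, map_sum]
  refine (totalDegree_finsetSum _ _).trans (Finset.sup_le fun α hα ↦ ?_)
  rw [pderiv_monomial]
  exact (totalDegree_monomial_le _ _).trans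
    ((Finsupp.degree_mono tsub_le_self).trans (le_totalDegree hα))

theorem exists_aeval_eq_totalDegree_lt [Algebra R S] {v : τ → S} {D : ℕ} {i : τ}
    {g : MvPolynomial τ R} (hg : g.totalDegree < D) (h : v i ^ D = aeval v g)
    {α : τ →₀ ℕ} (hα : D ≤ α i) :
    ∃ q : MvPolynomial τ R,
      q.totalDegree < α.degree ∧ aeval v (monomial α (1 : R)) = aeval v q := by
  obtain ⟨β, rfl⟩ : ∃ β, α = β + Finsupp.single i D :=
    ⟨_, (tsub_add_cancel_of_le (Finsupp.single_le_iff.mpr hα)).symm⟩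
  refine ⟨monomial β 1 * g, ?_, ?_⟩
  · have hβ : (monomial β (1 : R)).totalDegree ≤ β.degree := totalDegree_monomial_le β 1
    rw [map_add, Finsupp.degree_single]
    exact (totalDegree_mul _ _).trans_lt (add_lt_add_of_le_of_lt hβ hg)
  · rw [map_mul, ← h, ← aeval_X (R := R) v i, ← map_pow, ← map_mul, X_pow_eq_monomial,
      monomial_mul, one_mul]

theorem aeval_mem_span_of_pow_eq [Algebra R S] {v : τ → S} {D : ℕ} {g : τ → MvPolynomial τ R}
    (hg : ∀ i, (g i).totalDegree < D) (h : ∀ i, v i ^ D = aeval v (g i)) (p : MvPolynomial τ R) :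
    aeval v p ∈ Submodule.span R
      ((fun α ↦ aeval v (monomial α (1 : R))) '' {α : τ →₀ ℕ | ∀ i, α i < D}) := by
  induction hd : p.totalDegree using Nat.strong_induction_on generalizing p with
  | _ d ih =>
    rw [p.as_sum, map_sum]
    refine Submodule.sum_mem _ fun α hα ↦ ?_
    rw [← mul_one (coeff α p), ← smul_eq_mul, ← smul_monomial, map_smul]
    refine Submodule.smul_mem _ _ ?_
    by_cases hαD : ∀ i, α i < D
    · exact Submodule.subset_span ⟨α, hαD, rfl⟩
    · push Not at hαD
      obtain ⟨i, hi⟩ := hαD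
      obtain ⟨q, hq, hαq⟩ := exists_aeval_eq_totalDegree_lt (hg i) (h i) hi
      exact hαq ▸ ih _ (hq.trans_le ((le_totalDegree hα).trans_eq hd)) q rfl

theorem isIntegral_of_pow_eq_aeval [Finite τ] [Algebra R S] {v : τ → S} {D : ℕ}
    {g : τ → MvPolynomial τ R} (hg : ∀ i, (g i).totalDegree < D)
    (h : ∀ i, v i ^ D = aeval v (g i)) (j : τ) : IsIntegral R (v j) := by
  have hfin : {α : τ →₀ ℕ | ∀ i, α i < D}.Finite :=
    (Set.finite_Iic (Finsupp.equivFunOnFinite.symm fun _ ↦ D)).subset fun α hα i ↦ (hα i).le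
  have hrange : Subalgebra.toSubmodule (aeval (R := R) v).range = Submodule.span R
      ((fun α ↦ aeval v (monomial α (1 : R))) '' {α : τ →₀ ℕ | ∀ i, α i < D}) := by
    apply le_antisymm
    · rintro _ ⟨p, rfl⟩
      exact aeval_mem_span_of_pow_eq hg h p
    · rw [Submodule.span_le]
      rintro _ ⟨α, -, rfl⟩
      exact ⟨_, rfl⟩
  refine IsIntegral.of_mem_of_fg (aeval (R := R) v).range ?_ _ ⟨X j, by simp⟩
  rw [hrange]
  exact Submodule.fg_span (hfin.image _)

theorem eval₂_eval₂_eq_zero_of_aeval_mem {I : Ideal (MvPolynomial τ R)} {f : Polynomial R}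
    {p : MvPolynomial τ R} (hf : Polynomial.aeval (Ideal.Quotient.mk I p) f = 0) {ρ : R →+* S}
    {v : τ → S} (hv : I ≤ RingHom.ker (eval₂Hom ρ v)) : f.eval₂ ρ (eval₂ ρ v p) = 0 := by
  have hmem : Polynomial.aeval p f ∈ I := by
    rwa [← Ideal.Quotient.eq_zero_iff_mem, ← Ideal.Quotient.mkₐ_eq_mk R,
      ← Polynomial.aeval_algHom_apply]
  have := hv hmem
  rw [RingHom.mem_ker, Polynomial.aeval_def, Polynomial.hom_eval₂] at this
  rwa [show (eval₂Hom ρ v).comp (algebraMap R _) = ρ by ext; simp] at this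

theorem exists_monic_forall_eval₂_eq_zero [Finite τ] {D : ℕ} {g : τ → MvPolynomial τ R}
    (hg : ∀ i, (g i).totalDegree < D) (j : τ) :
    ∃ f : Polynomial R, f.Monic ∧ ∀ (ρ : R →+* S) (v : τ → S),
      (∀ i, v i ^ D = eval₂ ρ v (g i)) → f.eval₂ ρ (v j) = 0 := by
  set I : Ideal (MvPolynomial τ R) := Ideal.span (Set.range fun i ↦ X i ^ D - g i)
  have hrel (i : τ) : Ideal.Quotient.mk I (X i) ^ D =
      aeval (fun i ↦ Ideal.Quotient.mk I (X i)) (g i) := by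
    have hmem : X i ^ D - g i ∈ I := Ideal.subset_span ⟨i, rfl⟩
    rw [← map_pow, (Ideal.Quotient.mk_eq_mk_iff_sub_mem _ _).mpr hmem]
    exact DFunLike.congr_fun (aeval_unique (Ideal.Quotient.mkₐ R I)) (g i)
  obtain ⟨f, hf, hf0⟩ := isIntegral_of_pow_eq_aeval hg hrel j
  refine ⟨f, hf, fun ρ v hv ↦ ?_⟩
  rw [← eval₂_X ρ v j]
  refine eval₂_eval₂_eq_zero_of_aeval_mem hf0 (Ideal.span_le.mpr ?_)
  rintro _ ⟨i, rfl⟩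
  simp [RingHom.mem_ker, hv i]

theorem exists_ne_zero_forall_eval₂_eq_zero [IsDomain R] {Q : τ → Polynomial R}
    (hQ : ∀ j, Q j ≠ 0) (p : MvPolynomial τ R) :
    ∃ W : Polynomial R, W ≠ 0 ∧ ∀ (ρ : R →+* S) (v : τ → S),
      (∀ j, (Q j).eval₂ ρ (v j) = 0) → W.eval₂ ρ (eval₂ ρ v p) = 0 := by
  set I : Ideal (MvPolynomial τ R) := Ideal.span (Set.range fun j ↦ Polynomial.aeval (X j) (Q j))
  have halg : IsAlgebraic R (Ideal.Quotient.mk I p) := by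
    have hX (j : τ) : Ideal.Quotient.mk I (X j) ∈ Subalgebra.algebraicClosure R _ := by
      refine ⟨Q j, hQ j, ?_⟩
      have := Polynomial.aeval_algHom_apply (Ideal.Quotient.mkₐ R I) (X j) (Q j)
      rw [Ideal.Quotient.mkₐ_eq_mk] at this
      rw [this, Ideal.Quotient.eq_zero_iff_mem]
      exact Ideal.subset_span ⟨j, rfl⟩
    induction p using MvPolynomial.induction_on with
    | C a => exact isAlgebraic_algebraMap a
    | add p q hp hq => exact hp.add hq
    | mul_X p j hp => exact hp.mul (hX j)
  obtain ⟨W, hW, hW0⟩ := halg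
  refine ⟨W, hW, fun ρ v hv ↦ eval₂_eval₂_eq_zero_of_aeval_mem hW0 (Ideal.span_le.mpr ?_)⟩
  rintro _ ⟨j, rfl⟩
  have := Polynomial.hom_eval₂ (Q j) C (eval₂Hom ρ v) (X j)
  simp_all [RingHom.mem_ker, Polynomial.aeval_def]

end Elimination

section PenalizedMinimization

variable {τ : Type*}

theorem eventually_eval₂_ne_zero {ι R 𝕜 : Type*} [Semiring R] [NormedField 𝕜] {l : Filter ι}
    {ρ : ι → R →+* 𝕜} {ρ₀ : R →+* 𝕜} (hρ : ∀ r, Tendsto (ρ · r) l (𝓝 (ρ₀ r))) {s : ι → 𝕜}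
    (hs : Tendsto s l (Bornology.cobounded 𝕜)) {q : Polynomial R} (hq : ρ₀ q.leadingCoeff ≠ 0) :
    ∀ᶠ k in l, q.eval₂ (ρ k) (s k) ≠ 0 := by
  have hlim : Tendsto (fun k ↦ ∑ i ∈ Finset.range (q.natDegree + 1),
      ρ k (q.coeff i) * (s k)⁻¹ ^ (q.natDegree - i)) l (𝓝 (ρ₀ q.leadingCoeff)) := by
    have hsum : ∑ i ∈ Finset.range (q.natDegree + 1), ρ₀ (q.coeff i) * 0 ^ (q.natDegree - i) =
        ρ₀ q.leadingCoeff := by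
      rw [Finset.sum_range_succ, Finset.sum_eq_zero fun i hi ↦ ?_]
      · simp
      · rw [zero_pow (Nat.sub_ne_zero_of_lt (Finset.mem_range.mp hi)), mul_zero]
    exact hsum ▸ tendsto_finsetSum _ fun i _ ↦
      (hρ _).mul ((tendsto_inv₀_cobounded.comp hs).pow _)
  filter_upwards [hlim.eventually_ne hq, hs.eventually_ne_cobounded 0] with k hk hsk hzero
  refine hk ((mul_eq_zero.mp ?_).resolve_left (pow_ne_zero q.natDegree hsk))
  rw [← hzero, Polynomial.eval₂_eq_sum_range, Finset.mul_sum]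
  refine Finset.sum_congr rfl fun i hi ↦ ?_
  rw [inv_pow_sub₀ hsk (Finset.mem_range_succ_iff.mp hi)]
  field_simp

theorem hasDerivAt_eval_update (p : MvPolynomial τ ℝ) (v : τ → ℝ) (j : τ) :
    HasDerivAt (fun u ↦ eval (Function.update v j u) p) (eval v (pderiv j p)) (v j) := by
  induction p using MvPolynomial.induction_on with
  | C a => simpa using hasDerivAt_const (v j) a
  | add p q hp hq => simpa using! hp.add hq
  | mul_X p i hp =>
    have hX : HasDerivAt (fun u ↦ Function.update v j u i) (eval v (pderiv j (X i))) (v j) := by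
      obtain rfl | hij := eq_or_ne i j
      · simpa using! hasDerivAt_id (v i)
      · simpa [hij, pderiv_X_of_ne hij] using hasDerivAt_const (v j) (v i)
    simpa [mul_comm (X i : MvPolynomial τ ℝ), add_comm] using! hp.mul hX

theorem eval_pderiv_eq_zero_of_isLocalMin {p : MvPolynomial τ ℝ} {v : τ → ℝ}
    (hv : IsLocalMin (fun w ↦ eval w p) v) (j : τ) : eval v (pderiv j p) = 0 := by
  have hcont : Tendsto (Function.update v j) (𝓝 (v j)) (𝓝 v) := by
    simpa using
      (continuous_const.update j continuous_id : Continuous (Function.update v j)).tendsto (v j)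
  refine IsLocalMin.hasDerivAt_eq_zero ?_ (hasDerivAt_eval_update p v j)
  simpa [IsLocalMin, IsMinFilter] using hcont.eventually hv

theorem isCompact_setOf_sum_pow_le [Fintype τ] {m : ℕ} (hm : Even m) (hm0 : m ≠ 0) (c : ℝ) :
    IsCompact {v : τ → ℝ | ∑ i, v i ^ m ≤ c} := by
  refine Metric.isCompact_of_isClosed_isBounded (isClosed_le (by fun_prop) continuous_const)
    (isBounded_iff_forall_norm_le.mpr ⟨1 + |c|, fun v hv ↦ ?_⟩)
  refine (pi_norm_le_iff_of_nonneg (by positivity)).mpr fun j ↦ ?_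
  by_contra! hlt
  have hle : |v j| ^ m ≤ c := by
    rw [hm.pow_abs]
    exact (Finset.single_le_sum (f := fun i ↦ v i ^ m) (fun i _ ↦ hm.pow_nonneg _)
      (Finset.mem_univ j)).trans hv
  have hself : |v j| ≤ |v j| ^ m :=
    le_self_pow₀ (by rw [Real.norm_eq_abs] at hlt; linarith [abs_nonneg c]) hm0
  rw [Real.norm_eq_abs] at hlt
  linarith [le_abs_self c]

theorem exists_forall_add_sum_pow_le [Fintype τ] {f : (τ → ℝ) → ℝ} (hf : Continuous f)
    (hf0 : ∀ v, 0 ≤ f v) {m : ℕ} (hm : Even m) (hm0 : m ≠ 0) :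
    ∃ v, ∀ w, f v + ∑ i, v i ^ m ≤ f w + ∑ i, w i ^ m := by
  have hcont : Continuous fun v : τ → ℝ ↦ f v + ∑ i, v i ^ m := by fun_prop
  refine hcont.exists_forall_le' 0 ?_
  filter_upwards [(isCompact_setOf_sum_pow_le hm hm0 _).compl_mem_cocompact] with w hw
  have hlt : f 0 + ∑ i, (0 : τ → ℝ) i ^ m < ∑ i, w i ^ m := not_le.mp hw
  exact hlt.le.trans (le_add_of_nonneg_left (hf0 w))

theorem exists_pow_add_mul_pderiv_eq_zero [Fintype τ] {P : MvPolynomial τ ℝ}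
    (hP : ∀ v, 0 ≤ eval v P) {v₀ : τ → ℝ} (hv₀ : eval v₀ P = 0) {m : ℕ} (hm : Even m)
    (hm0 : m ≠ 0) {s : ℝ} (hs : 0 ≤ s) :
    ∃ v : τ → ℝ, (∀ j, v j ^ (m - 1) + s * eval v (pderiv j P) = 0) ∧
      m * s * eval v P + ∑ i, v i ^ m ≤ ∑ i, v₀ i ^ m := by
  set Φ : MvPolynomial τ ℝ := C (m * s) * P + ∑ i, X i ^ m with hΦ
  obtain ⟨v, hv⟩ := exists_forall_add_sum_pow_le (f := fun v ↦ m * s * eval v P)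
    (by have := P.continuous_eval; fun_prop) (fun v ↦ mul_nonneg (by positivity) (hP v)) hm hm0
  refine ⟨v, fun j ↦ ?_, by simpa [hv₀] using hv v₀⟩
  have hcrit : eval v (pderiv j Φ) = 0 :=
    eval_pderiv_eq_zero_of_isLocalMin (Eventually.of_forall fun w ↦ by simpa [Φ] using hv w) j
  have hpow : pderiv j (∑ i, X i ^ m : MvPolynomial τ ℝ) = C (m : ℝ) * X j ^ (m - 1) := by
    simp [pderiv_X, Pi.single_apply]
  rw [hΦ, map_add, pderiv_C_mul, hpow] at hcrit
  simp only [map_add, map_mul, map_pow, eval_C, eval_X] at hcrit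
  have hm' : (m : ℝ) ≠ 0 := Nat.cast_ne_zero.mpr hm0
  apply mul_left_cancel₀ hm'
  linear_combination hcrit

/-- As the weight `s` grows, penalized minimizers accumulate at a zero. -/
theorem exists_tendsto_critical_points [Finite τ] {P : MvPolynomial τ ℝ}
    (hP : ∀ v, 0 ≤ eval v P) (hzero : ∃ v, eval v P = 0) {m : ℕ} (hm : Even m) (hm0 : m ≠ 0) :
    ∃ (s : ℕ → ℝ) (v : ℕ → τ → ℝ) (w : τ → ℝ), Tendsto s atTop atTop ∧ Tendsto v atTop (𝓝 w) ∧
      (∀ k j, v k j ^ (m - 1) + s k * eval (v k) (pderiv j P) = 0) ∧ eval w P = 0 := by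
  have := Fintype.ofFinite τ
  obtain ⟨v₀, hv₀⟩ := hzero
  choose v hcrit hle using fun k : ℕ ↦
    exists_pow_add_mul_pderiv_eq_zero hP hv₀ hm hm0 (Nat.cast_nonneg' (α := ℝ) k)
  have hmem (k : ℕ) : v k ∈ {v : τ → ℝ | ∑ i, v i ^ m ≤ ∑ i, v₀ i ^ m} :=
    le_of_add_le_of_nonneg_right (hle k) (mul_nonneg (by positivity) (hP _))
  obtain ⟨w, -, ψ, hψ, hlim⟩ := (isCompact_setOf_sum_pow_le hm hm0 _).tendsto_subseq hmem
  have hs : Tendsto (fun k ↦ (ψ k : ℝ)) atTop atTop :=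
    tendsto_natCast_atTop_atTop.comp hψ.tendsto_atTop
  refine ⟨fun k ↦ ψ k, v ∘ ψ, w, hs, hlim, fun k ↦ hcrit (ψ k), ?_⟩
  refine tendsto_nhds_unique ((P.continuous_eval.tendsto w).comp hlim) ?_
  refine squeeze_zero' (Eventually.of_forall fun k ↦ hP _) ?_
    ((hs.inv_tendsto_atTop).const_mul (∑ i, v₀ i ^ m) |>.trans (by simp))
  filter_upwards [hs.eventually_gt_atTop 0] with k hk
  have hsum : 0 ≤ ∑ i, v (ψ k) i ^ m := Finset.sum_nonneg fun i _ ↦ hm.pow_nonneg _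
  have hm1 : (1 : ℝ) ≤ m := by exact_mod_cast Nat.one_le_iff_ne_zero.mpr hm0
  rw [Function.comp_apply, Function.comp_apply, Pi.inv_apply, ← div_eq_mul_inv, le_div_iff₀ hk]
  nlinarith [mul_nonneg hk.le (hP (v (ψ k))), hle (ψ k)]

/-- The elimination is done for the unknowns `v`, over the ring `R[s]`; the result is then read as a
polynomial in `s` over `R[v j]`. -/
theorem exists_ne_zero_forall_eval₂_eval₂RingHom_eq_zero [Finite τ] {R S : Type*} [CommRing R]
    [Nontrivial R] [CommRing S] {P : MvPolynomial τ R} {D : ℕ} (hD : P.totalDegree < D) (j : τ) :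
    ∃ g : R[X][X], g ≠ 0 ∧ ∀ (ρ : R →+* S) (s : S) (v : τ → S),
      (∀ i, v i ^ D + s * eval₂ ρ v (pderiv i P) = 0) →
        g.eval₂ (Polynomial.eval₂RingHom ρ (v j)) s = 0 := by
  have hdeg (i : τ) :
      (C (-Polynomial.X) * map Polynomial.C (pderiv i P)).totalDegree < D := by
    refine ((totalDegree_mul _ _).trans ?_).trans_lt hD
    rw [totalDegree_C, zero_add]
    exact (Finset.sup_mono (support_map_subset _ _)).trans (totalDegree_pderiv_le i P)
  obtain ⟨f, hf, hf0⟩ := exists_monic_forall_eval₂_eq_zero (S := S) hdeg j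
  refine ⟨Polynomial.Bivariate.swap f, by simpa using hf.ne_zero, fun ρ s v hv ↦ ?_⟩
  have hswap : (Polynomial.eval₂RingHom (Polynomial.eval₂RingHom ρ (v j)) s).comp
      (Polynomial.Bivariate.swap (R := R) : R[X][X] →+* R[X][X]) =
        Polynomial.eval₂RingHom (Polynomial.eval₂RingHom ρ s) (v j) := by
    ext <;> simp [Polynomial.Bivariate.swap_apply]
  refine (DFunLike.congr_fun hswap f).trans (hf0 (Polynomial.eval₂RingHom ρ s) v fun i ↦ ?_)
  have hcomp : (Polynomial.eval₂RingHom ρ s).comp Polynomial.C = ρ := by ext; simp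
  rw [eval₂_mul, eval₂_C, eval₂_map, hcomp]
  simp [eq_neg_of_add_eq_zero_left (hv i)]

theorem exists_ne_zero_forall_exists_zero [Finite τ] {R : Type*} [CommRing R] [Nontrivial R]
    (P : MvPolynomial τ R) :
    ∃ Q : τ → R[X], (∀ j, Q j ≠ 0) ∧ ∀ ρ : R →+* ℝ, (∀ v, 0 ≤ eval₂ ρ v P) →
      (∃ v, eval₂ ρ v P = 0) → ∃ v, eval₂ ρ v P = 0 ∧ ∀ j, (Q j).eval₂ ρ (v j) = 0 := by
  obtain ⟨m, hm, hm0, hD⟩ : ∃ m, Even m ∧ m ≠ 0 ∧ P.totalDegree < m - 1 :=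
    ⟨2 * (P.totalDegree + 1), even_two_mul _, by omega, by omega⟩
  choose g hg hg0 using exists_ne_zero_forall_eval₂_eval₂RingHom_eq_zero (S := ℝ) hD
  refine ⟨fun j ↦ (g j).leadingCoeff, fun j ↦ Polynomial.leadingCoeff_ne_zero.mpr (hg j), ?_⟩
  intro ρ hP hzero
  simp only [← eval_map] at hP hzero ⊢
  obtain ⟨s, v, w, hs, hlim, hcrit, hw⟩ := exists_tendsto_critical_points hP hzero hm hm0
  refine ⟨w, hw, fun j ↦ by_contra fun hne ↦ ?_⟩
  have hcoeff (r : R[X]) :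
      Tendsto (fun k ↦ Polynomial.eval₂RingHom ρ (v k j) r) atTop
        (𝓝 (Polynomial.eval₂RingHom ρ (w j) r)) := by
    simp only [Polynomial.coe_eval₂RingHom, ← Polynomial.eval_map]
    exact (Polynomial.continuous _).tendsto _ |>.comp (tendsto_pi_nhds.mp hlim j)
  obtain ⟨k, hk⟩ := (eventually_eval₂_ne_zero hcoeff
    (hs.mono_right IsOrderBornology.atTop_le_cobounded) hne).exists
  exact hk (hg0 j ρ (s k) (v k) fun i ↦ by rw [← eval_map, ← pderiv_map]; exact hcrit k i)

end PenalizedMinimization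

section ThomLemma

theorem eval_ne_zero_of_forall_iterate_derivative_mul_pos {f : ℝ[X]} {x y : ℝ}
    (h : ∀ k ≤ f.natDegree,
      0 < (Polynomial.derivative^[k] f).eval x * (Polynomial.derivative^[k] f).eval y)
    {w : ℝ} (hw : w ∈ Icc x y) : f.eval w ≠ 0 := by
  induction hn : f.natDegree generalizing f w with
  | zero =>
    obtain ⟨c, rfl⟩ := Polynomial.natDegree_eq_zero.mp hn
    simpa using left_ne_zero_of_mul (h 0 (Nat.zero_le _)).ne'
  | succ n ih =>
    have hderiv (u : ℝ) (hu : u ∈ Icc x y) : deriv (fun v ↦ f.eval v) u ≠ 0 := by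
      rw [Polynomial.deriv]
      refine ih (fun k hk ↦ h (k + 1) ?_) hu ?_ <;> grind [Polynomial.natDegree_derivative]
    have hinj : InjOn (fun u ↦ f.eval u) (Icc x y) := by
      intro u hu v hv huv
      by_contra hne
      wlog huv' : u < v generalizing u v
      · exact this hv hu huv.symm (Ne.symm hne) ((lt_or_gt_of_ne hne).resolve_left huv')
      obtain ⟨c, hc, hc0⟩ := exists_deriv_eq_zero huv' f.continuousOn huv
      exact hderiv c (Icc_subset_Icc hu.1 hv.2 (Ioo_subset_Icc_self hc)) hc0
    have hxy : x ≤ y := hw.1.trans hw.2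
    have hx : x ∈ Icc x y := left_mem_Icc.mpr hxy
    have hy : y ∈ Icc x y := right_mem_Icc.mpr hxy
    have hsign : 0 < f.eval x * f.eval y := h 0 (Nat.zero_le _)
    intro hw0
    rcases f.continuousOn.strictMonoOn_of_injOn_Icc' hxy hinj with hmono | hanti
    · have hxw := hmono.monotoneOn hx hw hw.1
      have hwy := hmono.monotoneOn hw hy hw.2
      simp only [hw0] at hxw hwy
      exact hsign.not_ge (mul_nonpos_of_nonpos_of_nonneg hxw hwy)
    · have hxw := hanti.antitoneOn hx hw hw.1
      have hwy := hanti.antitoneOn hw hy hw.2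
      simp only [hw0] at hxw hwy
      exact hsign.not_ge (mul_nonpos_of_nonneg_of_nonpos hxw hwy)

/-- **Thom's lemma** -/
theorem eq_of_forall_iterate_derivative_mul_pos {f : ℝ[X]} (hf : 0 < f.natDegree) {x y : ℝ}
    (hx : f.eval x = 0) (hy : f.eval y = 0)
    (h : ∀ k < f.natDegree,
      0 < (Polynomial.derivative^[k + 1] f).eval x * (Polynomial.derivative^[k + 1] f).eval y) :
    x = y := by
  by_contra hne
  wlog hxy : x < y generalizing x y
  · exact this hy hx (fun k hk ↦ by rw [mul_comm]; exact h k hk) (Ne.symm hne)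
      ((lt_or_gt_of_ne hne).resolve_left hxy)
  obtain ⟨c, hc, hc0⟩ := exists_deriv_eq_zero hxy f.continuousOn (hx.trans hy.symm)
  rw [Polynomial.deriv] at hc0
  refine eval_ne_zero_of_forall_iterate_derivative_mul_pos (f := Polynomial.derivative f)
    (fun k hk ↦ h k ?_) (Ioo_subset_Icc_self hc) hc0
  rw [Polynomial.natDegree_derivative] at hk
  omega

end ThomLemma

section ThomCells

theorem exists_ne_zero_add_mul_eq_C {R : Type*} [CommRing R] [IsDomain R] [IsGCDMonoid R]
    {q r : R[X]} (hq : Irreducible q) (hr : r ≠ 0) (hd : r.natDegree < q.natDegree) :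
    ∃ a b : R[X], ∃ c : R, c ≠ 0 ∧ a * q + b * r = Polynomial.C c := by
  set K := FractionRing R
  have hinj : Function.Injective (algebraMap R K) := IsFractionRing.injective R K
  have hqK : Irreducible (q.map (algebraMap R K)) :=
    (hq.isPrimitive (by omega)).irreducible_iff_irreducible_map_fraction_map.mp hq
  obtain ⟨a, b, hab⟩ : IsCoprime (q.map (algebraMap R K)) (r.map (algebraMap R K)) := by
    refine hqK.coprime_iff_not_dvd.mpr fun hdvd ↦ hd.not_ge ?_
    simpa only [Polynomial.natDegree_map_eq_of_injective hinj] using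
      Polynomial.natDegree_le_of_dvd hdvd ((Polynomial.map_ne_zero_iff hinj).mpr hr)
  obtain ⟨ca, hca, ha⟩ := IsLocalization.integerNormalization_spec (nonZeroDivisors R) a
  obtain ⟨cb, hcb, hb⟩ := IsLocalization.integerNormalization_spec (nonZeroDivisors R) b
  set a' := IsLocalization.integerNormalization (nonZeroDivisors R) a
  set b' := IsLocalization.integerNormalization (nonZeroDivisors R) b
  refine ⟨Polynomial.C cb * a', Polynomial.C ca * b', ca * cb,
    mul_ne_zero (nonZeroDivisors.ne_zero hca) (nonZeroDivisors.ne_zero hcb),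
    Polynomial.map_injective _ hinj ?_⟩
  rw [Algebra.smul_def, IsScalarTower.algebraMap_apply R K K[X], Polynomial.algebraMap_eq] at ha hb
  simp only [Polynomial.map_add, Polynomial.map_mul, Polynomial.map_C, ha, hb, map_mul]
  linear_combination (Polynomial.C (algebraMap R K ca) * Polynomial.C (algebraMap R K cb)) * hab

theorem eventually_nhdsNE_eval_ne_zero {𝕜 : Type*} [Field 𝕜] [TopologicalSpace 𝕜] [T1Space 𝕜]
    {c : 𝕜[X]} (hc : c ≠ 0) (a : 𝕜) : ∀ᶠ t in 𝓝[≠] a, c.eval t ≠ 0 := by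
  have hfin : ({t | c.IsRoot t} \ {a}).Finite := (Polynomial.finite_setOfPred_isRoot hc).sdiff
  filter_upwards [nhdsWithin_le_nhds (hfin.isClosed.isOpen_compl.mem_nhds (x := a) (by simp)),
    self_mem_nhdsWithin] with t ht hta hroot
  exact ht ⟨hroot, hta⟩

theorem contDiff_evalEval (q : ℝ[X][X]) :
    ContDiff ℝ ∞ fun u : ℝ × ℝ ↦ q.evalEval u.1 u.2 := by
  have hsum (u : ℝ × ℝ) :
      q.evalEval u.1 u.2 =
        ∑ i ∈ Finset.range (q.natDegree + 1), (q.coeff i).eval u.1 * u.2 ^ i := by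
    rw [← Polynomial.eval₂_evalRingHom, Polynomial.eval₂_eq_sum_range]
    simp
  simp only [hsum]
  refine ContDiff.sum fun i _ ↦ ?_
  have h : ContDiff ℝ ∞ fun t : ℝ ↦ (q.coeff i).eval t := by
    simpa using Polynomial.contDiff_aeval (𝕜 := ℝ) (q.coeff i) ∞
  exact (h.comp contDiff_fst).mul (contDiff_snd.pow i)

theorem exists_contDiffAt_implicit {𝕜 : Type*} [RCLike 𝕜] {f : 𝕜 × 𝕜 → 𝕜} {a b f' : 𝕜}
    {n : WithTop ℕ∞} (hf : ContDiffAt 𝕜 n f (a, b)) (hn : n ≠ 0)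
    (hf' : HasDerivAt (fun z ↦ f (a, z)) f' b) (hne : f' ≠ 0) :
    ∃ η : 𝕜 → 𝕜, ContDiffAt 𝕜 n η a ∧ η a = b ∧ ∀ᶠ t in 𝓝 a, f (t, η t) = f (a, b) := by
  have hpartial : fderiv 𝕜 f (a, b) (0, 1) = f' := by
    have hcurve : HasDerivAt (fun z : 𝕜 ↦ (a, z)) ((0 : 𝕜), (1 : 𝕜)) b :=
      (hasDerivAt_const b a).prodMk (hasDerivAt_id b)
    exact (HasFDerivAt.comp_hasDerivAt (f := fun z ↦ (a, z)) b
      (hf.differentiableAt hn).hasFDerivAt hcurve).unique hf'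
  have hinv : (fderiv 𝕜 f (a, b) ∘L ContinuousLinearMap.inr 𝕜 𝕜 𝕜).IsInvertible := by
    refine ⟨ContinuousLinearEquiv.unitsEquivAut 𝕜 (Units.mk0 f' hne), ?_⟩
    ext
    simp [hpartial]
  exact ⟨hf.implicitFunction hn hinv, hf.contDiffAt_implicitFunction hn hinv,
    hf.implicitFunction_apply_self hn hinv, hf.eventually_apply_implicitFunction hn hinv⟩

/-- The parameter `t` is Thom regular for `q ∈ ℝ[t][z]` if specialising at `t` preserves the degree
and no root of `q(t, ·)` is a root of one of its derivatives. -/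
def ThomRegularAt (q : ℝ[X][X]) (t : ℝ) : Prop :=
  q.leadingCoeff.eval t ≠ 0 ∧
    ∀ z, q.evalEval t z = 0 → ∀ k : Fin q.natDegree,
      (Polynomial.derivative^[k + 1] q).evalEval t z ≠ 0

/-- The part of the curve `q(t, z) = 0` on which the derivatives of `q` with respect to `z` have the
prescribed signs `σ`. -/
def thomCell (q : ℝ[X][X]) (σ : Fin q.natDegree → ℤˣ) : Set (ℝ × ℝ) :=
  {u | q.evalEval u.1 u.2 = 0 ∧
    ∀ k, 0 < ((σ k : ℤ) : ℝ) * (Polynomial.derivative^[k + 1] q).evalEval u.1 u.2}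

variable {q : ℝ[X][X]} {t z : ℝ} {σ : Fin q.natDegree → ℤˣ}

theorem iterate_derivative_ne_zero {R : Type*} [Semiring R] [NoZeroDivisors R] [CharZero R]
    {f : R[X]} (hf : f ≠ 0) {k : ℕ} (hk : k ≤ f.natDegree) : Polynomial.derivative^[k] f ≠ 0 := by
  intro h
  have hcoeff := Polynomial.coeff_iterate_derivative (p := f) (k := k) (f.natDegree - k)
  rw [h, Polynomial.coeff_zero, Nat.sub_add_cancel hk, eq_comm, nsmul_eq_mul, mul_eq_zero,
    Nat.cast_eq_zero, Nat.descFactorial_eq_zero_iff_lt] at hcoeff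
  exact hcoeff.elim hk.not_gt (Polynomial.leadingCoeff_ne_zero.mpr hf)

theorem eventually_thomRegularAt (hq : Irreducible q) (a : ℝ) :
    ∀ᶠ t in 𝓝[≠] a, ThomRegularAt q t := by
  refine (eventually_nhdsNE_eval_ne_zero (Polynomial.leadingCoeff_ne_zero.mpr hq.ne_zero) a).and ?_
  have hderiv (k : Fin q.natDegree) : ∀ᶠ t in 𝓝[≠] a, ∀ z, q.evalEval t z = 0 →
      (Polynomial.derivative^[k + 1] q).evalEval t z ≠ 0 := by
    have hdeg := q.natDegree_iterate_derivative (k + 1)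
    obtain ⟨f, g, c, hc, hfg⟩ := exists_ne_zero_add_mul_eq_C hq
      (iterate_derivative_ne_zero hq.ne_zero k.isLt) (by rw [Nat.succ_eq_add_one]; omega)
    filter_upwards [eventually_nhdsNE_eval_ne_zero hc a] with t ht z hz hz'
    have hfg_eval := congrArg (Polynomial.evalEval t z) hfg
    rw [Polynomial.evalEval_add, Polynomial.evalEval_mul, Polynomial.evalEval_mul, hz, hz',
      Polynomial.evalEval_C, mul_zero, mul_zero, add_zero] at hfg_eval
    exact ht hfg_eval.symm
  filter_upwards [eventually_all.mpr hderiv] with t ht z hz k using ht k z hz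

theorem ThomRegularAt.natDegree_pos (ht : ThomRegularAt q t) (hz : q.evalEval t z = 0) :
    0 < q.natDegree := by
  by_contra hdeg
  obtain ⟨c, rfl⟩ := Polynomial.natDegree_eq_zero.mp (Nat.eq_zero_of_not_pos hdeg)
  exact ht.1 (by simpa [Polynomial.evalEval_C] using hz)

theorem ThomRegularAt.exists_mem_thomCell (ht : ThomRegularAt q t) (hz : q.evalEval t z = 0) :
    ∃ σ, (t, z) ∈ thomCell q σ := by
  refine ⟨fun k ↦ if 0 < (Polynomial.derivative^[k + 1] q).evalEval t z then 1 else -1, hz,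
    fun k ↦ ?_⟩
  have hne := ht.2 z hz k
  beta_reduce
  split_ifs with hpos
  · simpa using hpos
  · simpa using lt_of_le_of_ne (not_lt.mp hpos) hne

theorem ThomRegularAt.eq_of_mem_thomCell (ht : ThomRegularAt q t) {w : ℝ}
    (hz : (t, z) ∈ thomCell q σ) (hw : (t, w) ∈ thomCell q σ) : z = w := by
  have hdeg : (q.map (Polynomial.evalRingHom t)).natDegree = q.natDegree :=
    Polynomial.natDegree_map_of_leadingCoeff_ne_zero _ ht.1
  refine eq_of_forall_iterate_derivative_mul_pos (hdeg ▸ ht.natDegree_pos hz.1)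
    (by simpa [Polynomial.map_evalRingHom_eval] using hz.1)
    (by simpa [Polynomial.map_evalRingHom_eval] using hw.1) fun k hk ↦ ?_
  rw [hdeg] at hk
  have hpos := mul_pos (hz.2 ⟨k, hk⟩) (hw.2 ⟨k, hk⟩)
  rw [Polynomial.iterate_derivative_map, Polynomial.map_evalRingHom_eval,
    Polynomial.map_evalRingHom_eval]
  rcases Int.units_eq_one_or (σ ⟨k, hk⟩) with hσ | hσ <;> simpa [hσ] using hpos

theorem ThomRegularAt.exists_contDiffAt_section (ht : ThomRegularAt q t)
    (hz : (t, z) ∈ thomCell q σ) :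
    ∃ η : ℝ → ℝ, ContDiffAt ℝ ∞ η t ∧ ∀ᶠ u in 𝓝 t, (u, η u) ∈ thomCell q σ := by
  have hderiv : HasDerivAt (fun w ↦ q.evalEval t w) (q.derivative.evalEval t z) z := by
    simpa [Polynomial.map_evalRingHom_eval, Polynomial.derivative_map] using
      (q.map (Polynomial.evalRingHom t)).hasDerivAt z
  obtain ⟨η, hη, hηt, hη0⟩ := exists_contDiffAt_implicit (contDiff_evalEval q).contDiffAt (by simp)
    hderiv (ht.2 z hz.1 ⟨0, ht.natDegree_pos hz.1⟩)
  have hsign (k : Fin q.natDegree) : ∀ᶠ u in 𝓝 t,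
      0 < ((σ k : ℤ) : ℝ) * (Polynomial.derivative^[k + 1] q).evalEval u (η u) := by
    have hcont : ContinuousAt
        (fun u ↦ ((σ k : ℤ) : ℝ) * (Polynomial.derivative^[k + 1] q).evalEval u (η u)) t :=
      continuousAt_const.mul <| ContinuousAt.comp (f := fun u ↦ (u, η u))
        (contDiff_evalEval (Polynomial.derivative^[k + 1] q)).continuous.continuousAt
        (continuousAt_id.prodMk hη.continuousAt)
    exact hcont.eventually_const_lt (by simpa only [hηt] using hz.2 k)
  refine ⟨η, hη, ?_⟩
  filter_upwards [hη0, eventually_all.mpr hsign] with u hu hu'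
  exact ⟨hu.trans hz.1, hu'⟩

theorem exists_isCompact_eventually_forall_evalEval_eq_zero (h : q.leadingCoeff.eval t ≠ 0) :
    ∃ K : Set ℝ, IsCompact K ∧ ∀ᶠ u in 𝓝 t, ∀ z, q.evalEval u z = 0 → z ∈ K := by
  have hne : ∀ᶠ p in 𝓝 t ×ˢ Bornology.cobounded ℝ, q.evalEval p.1 p.2 ≠ 0 := by
    have := eventually_eval₂_ne_zero (l := 𝓝 t ×ˢ Bornology.cobounded ℝ)
      (ρ := fun p ↦ Polynomial.evalRingHom p.1) (ρ₀ := Polynomial.evalRingHom t)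
      (fun r ↦ (r.continuous.tendsto t).comp tendsto_fst) tendsto_snd h
    simpa only [Polynomial.eval₂_evalRingHom] using this
  obtain ⟨U, hU, V, hV, hUV⟩ := eventually_prod_iff.mp hne
  refine ⟨closure {z | ¬ V z}, (Bornology.isBounded_compl_iff.mpr hV).isCompact_closure, ?_⟩
  filter_upwards [hU] with u hu z hz
  exact subset_closure fun hVz ↦ hUV hu hVz hz

theorem ThomRegularAt.mem_image_fst_thomCell (ht : ThomRegularAt q t)
    (hcl : t ∈ closure (Prod.fst '' thomCell q σ)) : t ∈ Prod.fst '' thomCell q σ := by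
  obtain ⟨K, hK, hroots⟩ := exists_isCompact_eventually_forall_evalEval_eq_zero ht.1
  have := mem_closure_iff_nhdsWithin_neBot.mp hcl
  set 𝓤 := Ultrafilter.of (𝓝[Prod.fst '' thomCell q σ] t)
  have h𝓤 : ∀ᶠ u in (𝓤 : Filter ℝ), ∃ z, (u, z) ∈ thomCell q σ :=
    Ultrafilter.of_le _ <| eventually_nhdsWithin_of_forall fun u ⟨p, hp, hpu⟩ ↦ ⟨p.2, hpu ▸ hp⟩
  have h𝓤t : (𝓤 : Filter ℝ) ≤ 𝓝 t := (Ultrafilter.of_le _).trans nhdsWithin_le_nhds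
  obtain ⟨ζ, hζ⟩ := h𝓤.choice
  obtain ⟨w, -, hw⟩ := hK.ultrafilter_le_nhds (𝓤.map ζ) <| le_principal_iff.mpr <| by
    exact (hζ.and (hroots.filter_mono h𝓤t)).mono fun u hu ↦ hu.2 _ hu.1.1
  have hlim (p : ℝ[X][X]) : Tendsto (fun u ↦ p.evalEval u (ζ u)) 𝓤 (𝓝 (p.evalEval t w)) :=
    ((contDiff_evalEval p).continuous.tendsto (t, w)).comp (Tendsto.prodMk_nhds h𝓤t hw)
  have hroot : q.evalEval t w = 0 :=
    tendsto_nhds_unique_of_eventuallyEq (hlim q) tendsto_const_nhds (hζ.mono fun _ hu ↦ hu.1)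
  refine ⟨(t, w), ⟨hroot, fun k ↦ lt_of_le_of_ne ?_ ?_⟩, rfl⟩
  · exact ge_of_tendsto ((hlim _).const_mul _) (hζ.mono fun _ hu ↦ (hu.2 k).le)
  · exact (mul_ne_zero (by exact_mod_cast (σ k).ne_zero) (ht.2 w hroot k)).symm

theorem eval_equivMvPolynomial (p : ℝ[X][X]) (x : Fin 2 → ℝ) :
    eval x (Polynomial.Bivariate.equivMvPolynomial ℝ p) = p.evalEval (x 0) (x 1) := by
  have hhom : (eval x).comp (Polynomial.Bivariate.equivMvPolynomial ℝ : ℝ[X][X] →+* _) =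
      Polynomial.evalEvalRingHom (x 0) (x 1) := by
    ext <;> simp
  exact congrArg (fun φ : ℝ[X][X] →+* ℝ ↦ φ p) hhom

theorem isSA_setOf_mem_thomCell (q : ℝ[X][X]) (σ : Fin q.natDegree → ℤˣ) :
    IsSA {x : Fin 2 → ℝ | (x 0, x 1) ∈ thomCell q σ} := by
  convert (basicSA_setOf (fun _ : Unit ↦ Polynomial.Bivariate.equivMvPolynomial ℝ q)
    fun k ↦ C ((σ k : ℤ) : ℝ) *
      Polynomial.Bivariate.equivMvPolynomial ℝ (Polynomial.derivative^[k + 1] q)).isSA using 2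
  simp [thomCell, eval_equivMvPolynomial]

theorem subset_image_fst_thomCell {U : Set ℝ} (hU : IsOpen U) (hUc : IsPreconnected U)
    (hreg : ∀ t ∈ U, ThomRegularAt q t) (hne : (U ∩ Prod.fst '' thomCell q σ).Nonempty) :
    U ⊆ Prod.fst '' thomCell q σ := by
  have hopen : IsOpen (U ∩ Prod.fst '' thomCell q σ) := by
    refine isOpen_iff_mem_nhds.mpr ?_
    rintro _ ⟨ht, ⟨t, z⟩, hz, rfl⟩
    obtain ⟨η, -, hη⟩ := (hreg t ht).exists_contDiffAt_section hz
    filter_upwards [hU.mem_nhds ht, hη] with u hu hηu using ⟨hu, _, hηu, rfl⟩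
  refine (hUc.subset_of_closure_inter_subset hopen ?_ ?_).trans inter_subset_right
  · exact hne.mono fun t ht ↦ ⟨ht.1, ht⟩
  · rintro t ⟨htcl, ht⟩
    exact ⟨ht, (hreg t ht).mem_image_fst_thomCell (closure_mono inter_subset_right htcl)⟩

theorem exists_isNashOn_mem_thomCell {a b : ℝ} (hreg : ∀ t ∈ Ioo a b, ThomRegularAt q t)
    (hne : (Ioo a b ∩ Prod.fst '' thomCell q σ).Nonempty) :
    ∃ ξ, IsNashOn (Ioo a b) ξ ∧ ∀ t ∈ Ioo a b, (t, ξ t) ∈ thomCell q σ := by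
  have hfull := subset_image_fst_thomCell isOpen_Ioo isPreconnected_Ioo hreg hne
  have hexists (t : ℝ) (ht : t ∈ Ioo a b) : ∃ z, (t, z) ∈ thomCell q σ := by
    obtain ⟨p, hp, rfl⟩ := hfull ht
    exact ⟨p.2, hp⟩
  choose! ξ hξ using hexists
  refine ⟨ξ, ⟨fun t ht ↦ ?_, ?_⟩, hξ⟩
  · obtain ⟨η, hη, hcell⟩ := (hreg t ht).exists_contDiffAt_section (hξ t ht)
    refine (hη.congr_of_eventuallyEq ?_).contDiffWithinAt
    filter_upwards [hcell, isOpen_Ioo.mem_nhds ht] with u hu hu'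
    exact (hreg u hu').eq_of_mem_thomCell (hξ u hu') hu
  · rw [IsSAFunOn]
    convert (isSA_setOf_mem_Ioo 0 a b).inter (isSA_setOf_mem_thomCell q σ) using 1
    ext z
    refine and_congr_right fun hz ↦ ⟨fun h ↦ ?_, fun h ↦
      (hreg _ hz).eq_of_mem_thomCell h (hξ _ hz)⟩
    rw [mem_ofPred_eq, h]
    exact hξ _ hz

end ThomCells

section NashBranches

/-- Over `(a, b)`, the real zero set of `Q(t, z)` is the union of the graphs of the finitely many
Nash functions in `Ξ`. -/
structure IsNashBranches (Q : ℝ[X][X]) (a b : ℝ) (Ξ : Set (ℝ → ℝ)) : Prop where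
  finite : Ξ.Finite
  isNashOn : ∀ ξ ∈ Ξ, IsNashOn (Ioo a b) ξ
  setOf_evalEval_eq_zero : ∀ t ∈ Ioo a b, {z | Q.evalEval t z = 0} = (fun ξ ↦ ξ t) '' Ξ

theorem IsNashBranches.mul {P Q : ℝ[X][X]} {a b : ℝ} {Ξ Ξ' : Set (ℝ → ℝ)}
    (hP : IsNashBranches P a b Ξ) (hQ : IsNashBranches Q a b Ξ') :
    IsNashBranches (P * Q) a b (Ξ ∪ Ξ') where
  finite := hP.finite.union hQ.finite
  isNashOn ξ hξ := hξ.elim (hP.isNashOn ξ) (hQ.isNashOn ξ)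
  setOf_evalEval_eq_zero t ht := by
    rw [image_union, ← hP.setOf_evalEval_eq_zero t ht, ← hQ.setOf_evalEval_eq_zero t ht]
    ext z
    simp [Polynomial.evalEval_mul]

theorem isNashBranches_empty_of_isUnit {u : ℝ[X][X]} (hu : IsUnit u) (a b : ℝ) :
    IsNashBranches u a b ∅ where
  finite := finite_empty
  isNashOn := by simp
  setOf_evalEval_eq_zero t _ := by
    simpa [eq_empty_iff_forall_notMem] using
      fun z ↦ (hu.map (Polynomial.evalEvalRingHom t z)).ne_zero

theorem exists_isNashBranches_of_thomRegularAt {q : ℝ[X][X]} {a b : ℝ}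
    (hreg : ∀ t ∈ Ioo a b, ThomRegularAt q t) : ∃ Ξ, IsNashBranches q a b Ξ := by
  choose! ξ hξ hcell using fun σ : Fin q.natDegree → ℤˣ ↦
    exists_isNashOn_mem_thomCell (σ := σ) hreg
  refine ⟨ξ '' {σ | (Ioo a b ∩ Prod.fst '' thomCell q σ).Nonempty}, (toFinite _).image _,
    forall_mem_image.mpr hξ, fun t ht ↦ ?_⟩
  ext z
  rw [image_image, mem_image, mem_ofPred_eq]
  constructor
  · intro hz
    obtain ⟨σ, hσ⟩ := (hreg t ht).exists_mem_thomCell hz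
    have hne : (Ioo a b ∩ Prod.fst '' thomCell q σ).Nonempty := ⟨t, ht, _, hσ, rfl⟩
    exact ⟨σ, hne, (hreg t ht).eq_of_mem_thomCell (hcell σ hne t ht) hσ⟩
  · rintro ⟨σ, hσ, rfl⟩
    exact (hcell σ hσ t ht).1

theorem eventually_nhdsGT_forall_mem_Ioo {α : Type*} [LinearOrder α] [TopologicalSpace α]
    [OrderTopology α] [NoMaxOrder α] {a : α} {p : α → Prop} (h : ∀ᶠ t in 𝓝[>] a, p t) :
    ∀ᶠ b in 𝓝[>] a, ∀ t ∈ Ioo a b, p t := by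
  obtain ⟨b, hb, hsub⟩ := mem_nhdsGT_iff_exists_Ioo_subset.mp h
  filter_upwards [Ioo_mem_nhdsGT hb] with c hc t ht using hsub (Ioo_subset_Ioo_right hc.2.le ht)

theorem eventually_exists_isNashBranches {Q : ℝ[X][X]} (hQ : Q ≠ 0) (a : ℝ) :
    ∀ᶠ b in 𝓝[>] a, ∃ Ξ, IsNashBranches Q a b Ξ := by
  induction Q using WfDvdMonoid.induction_on_irreducible with
  | zero => exact absurd rfl hQ
  | unit u hu => exact Eventually.of_forall fun b ↦ ⟨∅, isNashBranches_empty_of_isUnit hu a b⟩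
  | mul P q hP hq ih =>
    have hreg : ∀ᶠ t in 𝓝[>] a, ThomRegularAt q t :=
      (eventually_thomRegularAt hq a).filter_mono (nhdsWithin_mono a fun _ ↦ ne_of_gt)
    filter_upwards [eventually_nhdsGT_forall_mem_Ioo hreg, ih hP] with b hb ⟨Ξ, hΞ⟩
    obtain ⟨Ξ', hΞ'⟩ := exists_isNashBranches_of_thomRegularAt hb
    exact ⟨Ξ' ∪ Ξ, hΞ'.mul hΞ⟩

end NashBranches

section Selection

theorem eqOn_zero_of_pow_mul_evalEval_eq_zero {U : Set ℝ} (hU : IsPreconnected U) {f : ℝ → ℝ}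
    (hf : ContinuousOn f U) {p : ℝ[X][X]} (hp : ∀ t ∈ U, p.evalEval t 0 ≠ 0) {k : ℕ}
    (h : ∀ t ∈ U, f t ^ k * p.evalEval t (f t) = 0) (hzero : ∃ t ∈ U, f t = 0) :
    ∀ t ∈ U, f t = 0 := by
  have := isPreconnected_iff_preconnectedSpace.mp hU
  have hfU : Continuous (U.domRestrict f) := hf.domRestrict
  have hcompl : {t : U | f t = 0} = {t : U | p.evalEval (t : ℝ) (f t) ≠ 0} := by
    ext t
    refine ⟨fun (ht : f t = 0) ↦ ?_, fun ht ↦ ?_⟩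
    · simpa only [mem_ofPred_eq, ht] using hp t t.2
    · exact eq_zero_of_pow_eq_zero ((mul_eq_zero.mp (h t t.2)).resolve_right ht)
  have hclopen : IsClopen {t : U | f t = 0} := by
    refine ⟨isClosed_eq hfU continuous_const, hcompl ▸ isOpen_ne_fun ?_ continuous_const⟩
    exact (contDiff_evalEval p).continuous.comp (continuous_subtype_val.prodMk hfU)
  obtain ⟨t, ht, hft⟩ := hzero
  have huniv := hclopen.eq_univ ⟨⟨t, ht⟩, hft⟩
  exact fun u hu ↦ huniv.ge (mem_univ ⟨u, hu⟩)

theorem eventually_eq_zero_of_frequently_eq_zero {W : ℝ[X][X]} (hW : W ≠ 0) {a b : ℝ} (hab : a < b)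
    {f : ℝ → ℝ} (hf : ContinuousOn f (Ioo a b)) (hWf : ∀ t ∈ Ioo a b, W.evalEval t (f t) = 0)
    (hfreq : ∃ᶠ t in 𝓝[>] a, f t = 0) : ∀ᶠ t in 𝓝[>] a, f t = 0 := by
  obtain ⟨p, hp, hndvd⟩ := W.exists_eq_pow_rootMultiplicity_mul_and_not_dvd hW 0
  rw [map_zero, sub_zero] at hp hndvd
  have hp0 : p.coeff 0 ≠ 0 := fun h ↦ hndvd (Polynomial.X_dvd_iff.mpr h)
  have hcoeff : ∀ᶠ t in 𝓝[>] a, (p.coeff 0).eval t ≠ 0 :=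
    (eventually_nhdsNE_eval_ne_zero hp0 a).filter_mono (nhdsWithin_mono a fun _ ↦ ne_of_gt)
  obtain ⟨c, hpc, hc⟩ := ((eventually_nhdsGT_forall_mem_Ioo hcoeff).and (Ioo_mem_nhdsGT hab)).exists
  have hsub : Ioo a c ⊆ Ioo a b := Ioo_subset_Ioo_right hc.2.le
  filter_upwards [Ioo_mem_nhdsGT hc.1]
  refine eqOn_zero_of_pow_mul_evalEval_eq_zero (p := p) (k := W.rootMultiplicity 0)
    isPreconnected_Ioo (hf.mono hsub) (fun t ht ↦ ?_) (fun t ht ↦ ?_) ?_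
  · simpa [Polynomial.evalEval, ← Polynomial.coeff_zero_eq_eval_zero] using hpc t ht
  · have := hWf t (hsub ht)
    rwa [hp, Polynomial.evalEval_mul, Polynomial.evalEval_pow, Polynomial.evalEval_X] at this
  · exact ((hfreq.and_eventually (Ioo_mem_nhdsGT hc.1)).exists).imp fun t ht ↦ ⟨ht.2, ht.1⟩

variable {τ : Type*} [Finite τ]

theorem eventually_eval₂_eq_zero_of_frequently {Q : τ → ℝ[X][X]} (hQ : ∀ j, Q j ≠ 0) {a b : ℝ}
    (hab : a < b) {c : τ → ℝ → ℝ} (hc : ∀ j, ContinuousOn (c j) (Ioo a b))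
    (hQc : ∀ j, ∀ t ∈ Ioo a b, (Q j).evalEval t (c j t) = 0) {P : MvPolynomial τ ℝ[X]}
    (hfreq : ∃ᶠ t in 𝓝[>] a, eval₂ (Polynomial.evalRingHom t) (c · t) P = 0) :
    ∀ᶠ t in 𝓝[>] a, eval₂ (Polynomial.evalRingHom t) (c · t) P = 0 := by
  have := Fintype.ofFinite τ
  obtain ⟨W, hW, hWP⟩ := exists_ne_zero_forall_eval₂_eq_zero (S := ℝ) hQ P
  refine eventually_eq_zero_of_frequently_eq_zero hW hab ?_ (fun t ht ↦ ?_) hfreq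
  · simp only [eval₂_eq, Polynomial.coe_evalRingHom]
    fun_prop
  · rw [← Polynomial.eval₂_evalRingHom]
    exact hWP _ _ fun j ↦ by rw [Polynomial.eval₂_evalRingHom, hQc j t ht]

theorem exists_isNashOn_eval₂_eq_zero {P : MvPolynomial τ ℝ[X]}
    (hP : ∀ t v, 0 ≤ eval₂ (Polynomial.evalRingHom t) v P) {a : ℝ}
    (hfreq : ∃ᶠ t in 𝓝[>] a, ∃ v, eval₂ (Polynomial.evalRingHom t) v P = 0) :
    ∃ b > a, ∃ c : τ → ℝ → ℝ, (∀ j, IsNashOn (Ioo a b) (c j)) ∧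
      ∀ t ∈ Ioo a b, eval₂ (Polynomial.evalRingHom t) (c · t) P = 0 := by
  obtain ⟨Q, hQ, hzero⟩ := exists_ne_zero_forall_exists_zero P
  obtain ⟨b, hΞ, hab⟩ := ((eventually_all.mpr fun j ↦
    eventually_exists_isNashBranches (hQ j) a).and self_mem_nhdsWithin).exists
  choose Ξ hΞ using hΞ
  have hmem (c : τ → ℝ → ℝ) (hc : c ∈ univ.pi Ξ) (j : τ) (t : ℝ) (ht : t ∈ Ioo a b) :
      (Q j).evalEval t (c j t) = 0 :=
    ((hΞ j).setOf_evalEval_eq_zero t ht).ge ⟨c j, hc j (mem_univ j), rfl⟩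
  have hbranch : ∃ᶠ t in 𝓝[>] a, ∃ c ∈ univ.pi Ξ,
      eval₂ (Polynomial.evalRingHom t) (c · t) P = 0 := by
    refine (hfreq.and_eventually (Ioo_mem_nhdsGT hab)).mono fun t ⟨hv, ht⟩ ↦ ?_
    obtain ⟨v, hv, hvQ⟩ := hzero (Polynomial.evalRingHom t) (hP t) hv
    choose c hc hcv using fun j ↦ ((hΞ j).setOf_evalEval_eq_zero t ht).le <|
      Polynomial.eval₂_evalRingHom t ▸ hvQ j
    exact ⟨c, fun j _ ↦ hc j, (funext hcv : (c · t) = v) ▸ hv⟩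
  obtain ⟨c, hc, hcfreq⟩ :=
    (frequently_exists_finite (Finite.pi fun j ↦ (hΞ j).finite)).mp hbranch
  have hNash (j : τ) : IsNashOn (Ioo a b) (c j) := (hΞ j).isNashOn _ (hc j (mem_univ j))
  have hev := eventually_eval₂_eq_zero_of_frequently hQ hab
    (fun j ↦ (hNash j).1.continuousOn) (hmem c hc) hcfreq
  obtain ⟨b', hb', hab'⟩ :=
    ((eventually_nhdsGT_forall_mem_Ioo hev).and (Ioo_mem_nhdsGT hab)).exists
  exact ⟨b', hab'.1, c, fun j ↦ (hNash j).mono_Ioo (Ioo_subset_Ioo_right hab'.2.le), hb'⟩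

theorem BasicSA.exists_nonneg_projection {m : ℕ} {A : Set (Fin m → ℝ)} (hA : BasicSA A) :
    ∃ (l : ℕ) (P : MvPolynomial (Fin m ⊕ Fin l) ℝ), (∀ v, 0 ≤ eval v P) ∧
      A = {x | ∃ y, eval (Sum.elim x y) P = 0} := by
  obtain ⟨k, l, g, h, rfl⟩ := hA
  let P : MvPolynomial (Fin m ⊕ Fin l) ℝ := ∑ i, rename Sum.inl (g i) ^ 2 +
    ∑ i, (rename Sum.inl (h i) * X (Sum.inr i) ^ 2 - 1) ^ 2
  have hP (v : Fin m ⊕ Fin l → ℝ) : eval v P = ∑ i, eval (v ∘ Sum.inl) (g i) ^ 2 +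
      ∑ i, (eval (v ∘ Sum.inl) (h i) * v (Sum.inr i) ^ 2 - 1) ^ 2 := by
    simp [P, eval_rename]
  refine ⟨l, P, fun v ↦ hP v ▸ by positivity, ?_⟩
  ext x
  have hsum (y : Fin l → ℝ) : eval (Sum.elim x y) P = 0 ↔
      (∀ i, eval x (g i) = 0) ∧ ∀ i, eval x (h i) * y i ^ 2 = 1 := by
    rw [hP, add_eq_zero_iff_of_nonneg (by positivity) (by positivity),
      Finset.sum_eq_zero_iff_of_nonneg fun _ _ ↦ sq_nonneg _,
      Finset.sum_eq_zero_iff_of_nonneg fun _ _ ↦ sq_nonneg _]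
    simp [sub_eq_zero]
  simp only [mem_ofPred_eq, hsum, exists_and_left, ← Classical.skolem (p := fun i (s : ℝ) ↦
    eval x (h i) * s ^ 2 = 1)]
  refine and_congr_right' (forall_congr' fun i ↦ ⟨fun hi ↦ ⟨(√(eval x (h i)))⁻¹, ?_⟩, ?_⟩)
  · rw [inv_pow, Real.sq_sqrt hi.le, mul_inv_cancel₀ hi.ne']
  · rintro ⟨s, hs⟩
    exact pos_of_mul_pos_left (hs ▸ one_pos) (sq_nonneg s)

theorem exists_forall_eval₂_evalRingHom_eq {m : ℕ} {κ : Type*}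
    (P : MvPolynomial (Fin (m + 1) ⊕ κ) ℝ) :
    ∃ P' : MvPolynomial (Fin m ⊕ κ) ℝ[X], ∀ t v, eval₂ (Polynomial.evalRingHom t) v P' =
      eval (Sum.elim (Fin.cons t (v ∘ Sum.inl) : Fin (m + 1) → ℝ) (v ∘ Sum.inr)) P := by
  let φ : Fin (m + 1) ⊕ κ → MvPolynomial (Fin m ⊕ κ) ℝ[X] :=
    Sum.elim (Fin.cons (C Polynomial.X) (X ∘ Sum.inl)) (X ∘ Sum.inr)
  refine ⟨aeval φ P, fun t v ↦ ?_⟩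
  have hhom : (eval₂Hom (Polynomial.evalRingHom t) v).comp (aeval φ).toRingHom =
      eval (Sum.elim (Fin.cons t (v ∘ Sum.inl) : Fin (m + 1) → ℝ) (v ∘ Sum.inr)) := by
    ext i
    · simp
    · rcases i with i | i
      · cases i using Fin.cases <;> simp [φ]
      · simp [φ]
  exact congrArg (fun ψ : MvPolynomial (Fin (m + 1) ⊕ κ) ℝ →+* ℝ ↦ ψ P) hhom

theorem BasicSA.exists_isNashOn_cons_mem {m : ℕ} {S : Set (Fin (m + 1) → ℝ)} (hS : BasicSA S)
    {a : ℝ} (hfreq : ∃ᶠ t in 𝓝[>] a, ∃ v : Fin m → ℝ, Fin.cons t v ∈ S) :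
    ∃ b > a, ∃ c : Fin m → ℝ → ℝ, (∀ j, IsNashOn (Ioo a b) (c j)) ∧
      ∀ t ∈ Ioo a b, Fin.cons t (c · t) ∈ S := by
  obtain ⟨l, P, hP, rfl⟩ := hS.exists_nonneg_projection
  obtain ⟨P', hP'⟩ := exists_forall_eval₂_evalRingHom_eq P
  obtain ⟨b, hb, c, hc, hzero⟩ := exists_isNashOn_eval₂_eq_zero (P := P')
    (fun t v ↦ hP' t v ▸ hP _) (hfreq.mono fun t ⟨v, y, hy⟩ ↦ ⟨Sum.elim v y, by simpa [hP']⟩)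
  exact ⟨b, hb, fun j ↦ c (Sum.inl j), fun j ↦ hc _, fun t ht ↦ ⟨_, hP' t _ ▸ hzero t ht⟩⟩

theorem IsSA.exists_isNashOn_cons_mem {m : ℕ} {S : Set (Fin (m + 1) → ℝ)} (hS : IsSA S)
    {a : ℝ} (hfreq : ∃ᶠ t in 𝓝[>] a, ∃ v : Fin m → ℝ, Fin.cons t v ∈ S) :
    ∃ b > a, ∃ c : Fin m → ℝ → ℝ, (∀ j, IsNashOn (Ioo a b) (c j)) ∧
      ∀ t ∈ Ioo a b, Fin.cons t (c · t) ∈ S := by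
  obtain ⟨N, B, hB, rfl⟩ := hS
  simp only [mem_iUnion] at hfreq ⊢
  obtain ⟨i, hi⟩ := frequently_exists.mp (hfreq.mono fun t ↦ exists_comm.mp)
  obtain ⟨b, hb, c, hc, hmem⟩ := (hB i).exists_isNashOn_cons_mem hi
  exact ⟨b, hb, c, hc, fun t ht ↦ ⟨i, hmem t ht⟩⟩

end Selection

section Approach

/-- The scale-`z 0` neighbourhood condition `z 1 ∈ U_{z 0}(y)` at a point `y` of the extended line:
`|z 1 - r| < z 0` at a real number `r`, and `z 0 * z 1 > 1` or `z 0 * z 1 < -1` at `⊤` or `⊥`.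
For `z 0 > 0` it is a polynomial form of a basis of neighbourhoods of `y`. -/
def nearSet : EReal → Set (Fin 2 → ℝ)
  | ⊤ => {z | 1 < z 0 * z 1}
  | ⊥ => {z | z 0 * z 1 < -1}
  | (r : ℝ) => {z | |z 1 - r| < z 0}

theorem isSA_nearSet (y : EReal) : IsSA (nearSet y) := by
  induction y with
  | top =>
    change IsSA {z | 1 < z 0 * z 1}
    convert (basicSA_setOf_pos (m := 2) fun _ : Unit ↦ X 0 * X 1 - C 1).isSA using 2
    simp
  | bot =>
    change IsSA {z | z 0 * z 1 < -1}
    convert (basicSA_setOf_pos (m := 2) fun _ : Unit ↦ -(X 0 * X 1) - C 1).isSA using 2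
    simp [lt_neg]
  | coe r =>
    change IsSA {z | |z 1 - r| < z 0}
    convert (basicSA_setOf_pos (m := 2) ![X 0 + (X 1 - C r), X 0 - (X 1 - C r)]).isSA using 2
    simp [abs_lt, Fin.forall_fin_two, neg_lt_iff_pos_add']

theorem eventually_mem_nearSet {α : Type*} {l : Filter α} {u : α → ℝ} {y : EReal}
    (hu : Tendsto (fun a ↦ (u a : EReal)) l (𝓝 y)) {t : ℝ} (ht : 0 < t) :
    ∀ᶠ a in l, ![t, u a] ∈ nearSet y := by
  induction y with
  | top =>
    filter_upwards [EReal.tendsto_nhds_top_iff_real.mp hu t⁻¹] with a ha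
    exact (inv_lt_iff_one_lt_mul₀' ht).mp (EReal.coe_lt_coe_iff.mp ha)
  | bot =>
    filter_upwards [EReal.tendsto_nhds_bot_iff_real.mp hu (-1 / t)] with a ha
    exact (lt_div_iff₀' ht).mp (EReal.coe_lt_coe_iff.mp ha)
  | coe r => exact Metric.tendsto_nhds.mp (EReal.tendsto_coe.mp hu) t ht

theorem tendsto_of_forall_mem_nearSet {f : ℝ → ℝ} {y : EReal} {ε : ℝ}
    (hf : ∀ t ∈ Ioo 0 ε, ![t, f t] ∈ nearSet y) :
    Tendsto (fun t ↦ (f t : EReal)) (𝓝[Ioo 0 ε] 0) (𝓝 y) := by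
  have hinv : Tendsto (fun t : ℝ ↦ t⁻¹) (𝓝[Ioo 0 ε] 0) atTop :=
    tendsto_inv_nhdsGT_zero.mono_left (nhdsWithin_mono _ Ioo_subset_Ioi_self)
  induction y with
  | top =>
    refine EReal.tendsto_coe_nhds_top_iff.mpr (tendsto_atTop_mono' _ ?_ hinv)
    filter_upwards [self_mem_nhdsWithin] with t ht
    exact ((inv_lt_iff_one_lt_mul₀' ht.1).mpr (hf t ht)).le
  | bot =>
    refine EReal.tendsto_coe_nhds_bot_iff.mpr
      (tendsto_atBot_mono' _ ?_ (tendsto_neg_atTop_atBot.comp hinv))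
    filter_upwards [self_mem_nhdsWithin] with t ht
    have hlt : f t < -1 / t := (lt_div_iff₀' ht.1).mpr (hf t ht)
    simpa [neg_div] using hlt.le
  | coe r =>
    refine EReal.tendsto_coe.mpr (tendsto_iff_dist_tendsto_zero.mpr (squeeze_zero' ?_ ?_
      (tendsto_nhdsWithin_of_tendsto_nhds tendsto_id)))
    · exact Eventually.of_forall fun _ ↦ dist_nonneg
    · filter_upwards [self_mem_nhdsWithin] with t ht using (hf t ht).le

theorem tendsto_sum_sq_nhds_top_iff {α : Type*} {l : Filter α} {n : ℕ} {x : α → Fin n → ℝ} :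
    Tendsto (fun a ↦ ((∑ j, x a j ^ 2 : ℝ) : EReal)) l (𝓝 ⊤) ↔
      Tendsto (fun a ↦ euclNorm (x a)) l atTop := by
  rw [EReal.tendsto_coe_nhds_top_iff]
  refine ⟨Real.tendsto_sqrt_atTop.comp, fun h ↦ ?_⟩
  have hsq (a : α) : euclNorm (x a) ^ 2 = ∑ j, x a j ^ 2 := Real.sq_sqrt (by positivity)
  simpa only [Function.comp_def, hsq] using (tendsto_pow_atTop two_ne_zero).comp h

variable {n p : ℕ}

/-- The set of `(t, x, w)` such that `x ∈ A`, `w = F x`, and `‖x‖ ^ 2` and the coordinates of `w`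
are close at scale `t` to `⊤` and to those of `y`. A curve `t ↦ (t, x t, w t)` in this set gives the
curve `x` of curve selection at infinity. -/
def approachSet (A : Set (Fin n → ℝ)) (F : (Fin n → ℝ) → Fin p → ℝ) (y : Fin p → EReal) :
    Set (Fin (n + p + 1) → ℝ) :=
  {z | (fun j ↦ z (Fin.castAdd p j).succ) ∈ A ∧
    (fun i ↦ z (Fin.natAdd n i).succ) = F (fun j ↦ z (Fin.castAdd p j).succ) ∧
    ![z 0, ∑ j, z (Fin.castAdd p j).succ ^ 2] ∈ nearSet ⊤ ∧
    ∀ i, ![z 0, z (Fin.natAdd n i).succ] ∈ nearSet (y i)}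

theorem isSA_approachSet {A : Set (Fin n → ℝ)} (hA : IsSA A) {F : (Fin n → ℝ) → Fin p → ℝ}
    (hF : IsSAMap F) (y : Fin p → EReal) : IsSA (approachSet A F y) := by
  convert (hA.preimage fun j ↦ X (Fin.castAdd p j).succ).inter <|
    (hF.preimage fun k ↦ X k.succ).inter <|
    ((isSA_nearSet ⊤).preimage ![X 0, ∑ j, X (Fin.castAdd p j).succ ^ 2]).inter <|
    IsSA.iInter fun i ↦ (isSA_nearSet (y i)).preimage ![X 0, X (Fin.natAdd n i).succ] using 1
  have hpair {k : ℕ} (z : Fin k → ℝ) (P Q : MvPolynomial (Fin k) ℝ) :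
      (fun j ↦ eval z (![P, Q] j)) = ![eval z P, eval z Q] := by
    ext j
    fin_cases j <;> rfl
  ext z
  simp [approachSet, hpair]

theorem exists_cons_mem_approachSet {A : Set (Fin n → ℝ)} {F : (Fin n → ℝ) → Fin p → ℝ}
    {y : Fin p → EReal} {α : Type*} {l : Filter α} [l.NeBot] {x : α → Fin n → ℝ}
    (hxA : ∀ a, x a ∈ A) (hxnorm : Tendsto (fun a ↦ euclNorm (x a)) l atTop)
    (hy : ∀ i, Tendsto (fun a ↦ (F (x a) i : EReal)) l (𝓝 (y i))) {t : ℝ} (ht : 0 < t) :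
    ∃ v : Fin (n + p) → ℝ, Fin.cons t v ∈ approachSet A F y := by
  obtain ⟨a, hnorm, hF⟩ := ((eventually_mem_nearSet (tendsto_sum_sq_nhds_top_iff.mpr hxnorm) ht).and
    (eventually_all.mpr fun i ↦ eventually_mem_nearSet (hy i) ht)).exists
  exact ⟨Fin.append (x a) (F (x a)), by simpa [approachSet] using ⟨hxA a, hnorm, hF⟩⟩

end Approach

/-- **Lemma 2.2 (Curve Selection Lemma at infinity).** -/
theorem curve_selection_at_infinity {n p : ℕ} (A : Set (Fin n → ℝ)) (hA : IsSA A)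
    (F : (Fin n → ℝ) → (Fin p → ℝ)) (hF : IsSAMap F)
    (x : ℕ → Fin n → ℝ) (hxA : ∀ ℓ, x ℓ ∈ A)
    (hxnorm : Tendsto (fun ℓ => euclNorm (x ℓ)) atTop atTop)
    (y : Fin p → EReal)
    (hy : ∀ i, Tendsto (fun ℓ => ((F (x ℓ) i : ℝ) : EReal)) atTop (nhds (y i))) :
    ∃ ε : ℝ, 0 < ε ∧ ∃ φ : ℝ → Fin n → ℝ,
      ContDiffOn ℝ (⊤ : ℕ∞) φ (Ioo 0 ε) ∧ IsSACurve (Ioo 0 ε) φ ∧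
      (∀ t ∈ Ioo (0 : ℝ) ε, φ t ∈ A) ∧
      Tendsto (fun t => euclNorm (φ t)) (nhdsWithin 0 (Ioo 0 ε)) atTop ∧
      ∀ i, Tendsto (fun t => ((F (φ t) i : ℝ) : EReal))
        (nhdsWithin 0 (Ioo 0 ε)) (nhds (y i)) := by
  have hfibre : ∀ᶠ t in 𝓝[>] (0 : ℝ), ∃ v : Fin (n + p) → ℝ, Fin.cons t v ∈ approachSet A F y :=
    eventually_nhdsWithin_of_forall fun _ ↦ exists_cons_mem_approachSet hxA hxnorm hy
  obtain ⟨ε, hε, c, hc, hmem⟩ :=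
    (isSA_approachSet hA hF y).exists_isNashOn_cons_mem hfibre.frequently
  simp only [approachSet, mem_ofPred_eq, Fin.cons_zero, Fin.cons_succ] at hmem
  refine ⟨ε, hε, fun t j ↦ c (Fin.castAdd p j) t, contDiffOn_pi.mpr fun j ↦ (hc _).1,
    isSACurve_Ioo_of_forall fun j ↦ (hc _).2, fun t ht ↦ (hmem t ht).1,
    tendsto_sum_sq_nhds_top_iff.mp
      (tendsto_of_forall_mem_nearSet fun t ht ↦ (hmem t ht).2.2.1),
    fun i ↦ tendsto_of_forall_mem_nearSet fun t ht ↦ ?_⟩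
  obtain ⟨-, hFt, -, hnear⟩ := hmem t ht
  exact congrFun hFt i ▸ hnear i
end
end
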